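/- arXiv:math/0508153 — 3 statements merged into one kernel-verified Lean document; each statement's English description precedes it below -/
import Mathlib

section
/- For every integer n ≥ 2, the expected number of 01 moves in a uniformly random reduced decomposition of the longest element w_0^B ∈ B_n equals 2/(n² − 2); equivalently, (n² − 2) · Σ_{ω ∈ R(w_0^B)} m(ω) = 2 · |R(w_0^B)|, where m(ω) denotes the number of 01 moves in ω. -/
/-- The generator `sᵢ` of the hyperoctahedral group `Bₙ`, realized as a permutation of `ℤ`:
`s₀` swaps `1` and `-1`; for `i ≥ 1`, `sᵢ` swaps `i` with `i+1` and `-i` with `-(i+1)`,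
fixing all other integers. -/
def sB (i : ℕ) : Equiv.Perm ℤ :=
  if i = 0 then Equiv.swap 1 (-1)
  else Equiv.swap (i : ℤ) ((i : ℤ) + 1) * Equiv.swap (-(i : ℤ)) (-((i : ℤ) + 1))

/-- The product `s_{i₁} ⋯ s_{i_ℓ}` corresponding to the word `i₁ ⋯ i_ℓ`. -/
def wordProd (l : List ℕ) : Equiv.Perm ℤ := (l.map sB).prod

/-- The underlying function of the longest element `w₀ᴮ ∈ Bₙ`: `i ↦ -i` on `{-n, …, n}`,
fixing all other integers. -/
def w0BFun (n : ℕ) : ℤ → ℤ := fun i => if -(n : ℤ) ≤ i ∧ i ≤ (n : ℤ) then -i else i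

lemma w0BFun_involutive (n : ℕ) : Function.Involutive (w0BFun n) := by
  intro i
  unfold w0BFun
  split_ifs <;> omega

/-- The longest element `w₀ᴮ ∈ Bₙ`, as a permutation of `ℤ`. -/
def w0B (n : ℕ) : Equiv.Perm ℤ := (w0BFun_involutive n).toPerm

/-- `l` is a reduced decomposition of `w` in `Bₙ`: a word over the alphabet `{0, …, n-1}`
whose product of generators is `w`, of minimal length among all such words. -/
def IsReducedWord (n : ℕ) (w : Equiv.Perm ℤ) (l : List ℕ) : Prop :=
  (∀ i ∈ l, i < n) ∧ wordProd l = w ∧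
    ∀ l' : List ℕ, (∀ i ∈ l', i < n) → wordProd l' = w → l.length ≤ l'.length

/-- `R(w)`, the set of reduced decompositions of `w` in `Bₙ`. -/
def RSet (n : ℕ) (w : Equiv.Perm ℤ) : Set (List ℕ) := {l | IsReducedWord n w l}

/-- The length `ℓ(w)` of `w ∈ Bₙ`: the minimal length of a word over `{0, …, n-1}`
whose product of generators is `w`. -/
noncomputable def lenB (n : ℕ) (w : Equiv.Perm ℤ) : ℕ :=
  sInf {m : ℕ | ∃ l : List ℕ, (∀ i ∈ l, i < n) ∧ wordProd l = w ∧ l.length = m}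

/-- Whether a word begins with `k (k+1) k` or `(k+1) k (k+1)` for some `k ≥ 1`. -/
def isYB : List ℕ → Bool
  | a :: b :: c :: _ => (a != 0 && b == a + 1 && c == a) || (b != 0 && a == b + 1 && c == b + 1)
  | _ => false

/-- The number of Yang–Baxter moves in a word. -/
def ybCount (l : List ℕ) : ℕ :=
  ((Finset.range l.length).filter fun j => isYB (l.drop j) = true).card

/-- Whether a word begins with `0101` or `1010`. -/
def is01 : List ℕ → Bool
  | a :: b :: c :: d :: _ =>
      (a == 0 && b == 1 && c == 0 && d == 1) || (a == 1 && b == 0 && c == 1 && d == 0)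
  | _ => false

/-- The number of 01 moves in a word. -/
def m01Count (l : List ℕ) : ℕ :=
  ((Finset.range l.length).filter fun j => is01 (l.drop j) = true).card

/-- The underlying function of `w_k ∈ Bₙ`: `k ↦ -(k+2)`, `k+2 ↦ -k`, and `i ↦ -i` for all
other `i ∈ {1, …, n}`, extended by `w(-i) = -w(i)` and fixing all integers outside
`{-n, …, -1, 1, …, n}`. -/
def wkFun (n k : ℕ) : ℤ → ℤ := fun i =>
  if -(n : ℤ) ≤ i ∧ i ≤ (n : ℤ) then
    if i = (k : ℤ) then -((k : ℤ) + 2)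
    else if i = (k : ℤ) + 2 then -(k : ℤ)
    else if i = -(k : ℤ) then (k : ℤ) + 2
    else if i = -((k : ℤ) + 2) then (k : ℤ)
    else -i
  else i

/-- The underlying function of `w' ∈ Bₙ`: `1 ↦ 1`, `2 ↦ 2`, and `i ↦ -i` for `3 ≤ i ≤ n`,
extended by `w(-i) = -w(i)` and fixing all integers outside `{-n, …, -1, 1, …, n}`. -/
def wpFun (n : ℕ) : ℤ → ℤ := fun i =>
  if (-(n : ℤ) ≤ i ∧ i ≤ (n : ℤ)) ∧ (i < -2 ∨ 2 < i) then -i else i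

/-- `w`, viewed as a signed permutation of `{1, …, n}` via the values `w(1), …, w(n)`,
contains the signed pattern `p` (given by its list of values `p(1), …, p(m)`). -/
def ContainsPattern (n : ℕ) (w : ℤ → ℤ) (p : List ℤ) : Prop :=
  ∃ j : Fin p.length → ℤ, StrictMono j ∧ (∀ r, 1 ≤ j r ∧ j r ≤ (n : ℤ)) ∧
    (∀ r s, w (j r) < w (j s) ↔ p.get r < p.get s) ∧
    (∀ r, w (j r) < 0 ↔ p.get r < 0)

/-!
Write `w₀(m)` for the longest element of `B_m`. As `w₀(n)` is central, rotating a reduced word of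
`w₀(n)` gives another one, so each of the `n² - 3` possible positions carries equally many `01`
moves. A `01` move at the front is `0101` or `1010`, followed by a reduced word of `w₀(n) w₀(2)`;
hence it remains to compare the numbers of reduced words of `w₀(n) w₀(k)` for `k = 0` and `k = 2`.

The transition equation compares the reduced words of the permutations which cover a given one in
the Bruhat order. When there are just two of these, it says that they have equally many reduced
words, and a sequence of such steps leads from `w₀(n) w₀(k)` to a Grassmannian permutation whose
shifted shape has the rows `2n - 1, 2n - 3, …, 2k + 1`. Removing boxes from the shape turns reduced
words into shifted standard tableaux, which are counted by Schur's product formula.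
-/

namespace Hyperoctahedral

open Equiv

/-- The smaller of the two adjacent letters of `…, -2, -1, 1, 2, …` exchanged by `sB i`; the
other pair of letters exchanged by `sB i` is the negative of this one. -/
def lower (i : ℕ) : ℤ := if i = 0 then -1 else i

/-- The larger of the two adjacent letters of `…, -2, -1, 1, 2, …` exchanged by `sB i`. -/
def upper (i : ℕ) : ℤ := i + 1

/-- The reflection of the hyperoctahedral group exchanging `a` with `b` and `-a` with `-b`,
meaningful for nonzero `a` and `b`. -/
def signedSwap (a b : ℤ) : Perm ℤ :=
  if a = -b then swap a b else swap a b * swap (-a) (-b)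

lemma lower_ne_zero (i : ℕ) : lower i ≠ 0 := by unfold lower; split_ifs <;> omega

lemma upper_ne_zero (i : ℕ) : upper i ≠ 0 := by unfold upper; omega

lemma lower_lt_upper (i : ℕ) : lower i < upper i := by unfold lower upper; split_ifs <;> omega

section signedSwap

variable {a b : ℤ}

lemma signedSwap_apply (ha : a ≠ 0) (hb : b ≠ 0) (x : ℤ) :
    signedSwap a b x = if x = a then b else if x = b then a
      else if x = -a then -b else if x = -b then -a else x := by
  unfold signedSwap
  split_ifs <;> simp only [Perm.mul_apply, swap_apply_def] <;> split_ifs <;> omega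

lemma signedSwap_comm (a b : ℤ) : signedSwap a b = signedSwap b a := by
  unfold signedSwap
  simp only [swap_comm b a, swap_comm (-b) (-a), eq_neg_iff_add_eq_zero, add_comm]

lemma signedSwap_self (a : ℤ) : signedSwap a a = 1 := by
  unfold signedSwap
  split_ifs <;> simp only [swap_self] <;> rfl

lemma signedSwap_neg (ha : a ≠ 0) (hb : b ≠ 0) : signedSwap (-a) (-b) = signedSwap a b := by
  ext x
  rw [signedSwap_apply ha hb, signedSwap_apply (neg_ne_zero.2 ha) (neg_ne_zero.2 hb)]
  split_ifs <;> omega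

lemma signedSwap_apply_left (ha : a ≠ 0) (hb : b ≠ 0) : signedSwap a b a = b := by
  rw [signedSwap_apply ha hb, if_pos rfl]

lemma signedSwap_apply_right (ha : a ≠ 0) (hb : b ≠ 0) : signedSwap a b b = a := by
  rw [signedSwap_comm, signedSwap_apply_left hb ha]

lemma signedSwap_mul_self (ha : a ≠ 0) (hb : b ≠ 0) : signedSwap a b * signedSwap a b = 1 := by
  ext x
  simp only [Perm.mul_apply, signedSwap_apply ha hb, Perm.one_apply]
  split_ifs <;> omega

lemma mul_signedSwap_cancel (ha : a ≠ 0) (hb : b ≠ 0) (w : Perm ℤ) :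
    w * signedSwap a b * signedSwap a b = w := by
  rw [mul_assoc, signedSwap_mul_self ha hb, mul_one]

lemma odd_signedSwap (ha : a ≠ 0) (hb : b ≠ 0) : Function.Odd (signedSwap a b) := fun x ↦ by
  simp only [signedSwap_apply ha hb]
  split_ifs <;> omega

lemma mul_signedSwap_eq {w : Perm ℤ} (hw : Function.Odd w) (a b : ℤ) :
    w * signedSwap a b = signedSwap (w a) (w b) * w := by
  have hab : w a = -w b ↔ a = -b := by rw [← hw]; exact w.injective.eq_iff
  unfold signedSwap
  simp only [hab]
  split_ifs
  · rw [mul_swap_eq_swap_mul]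
  · rw [← mul_assoc, mul_swap_eq_swap_mul w a b, mul_assoc, mul_swap_eq_swap_mul w (-a) (-b), hw,
      hw, mul_assoc]

end signedSwap

section sB

variable (i : ℕ)

lemma sB_eq_signedSwap : sB i = signedSwap (lower i) (upper i) := by
  unfold sB signedSwap lower upper
  rcases Nat.eq_zero_or_pos i with rfl | hi
  · simp [swap_comm]
  · rw [if_neg hi.ne', if_neg hi.ne', if_neg (by omega)]

lemma sB_apply (x : ℤ) :
    sB i x = if x = lower i then upper i else if x = upper i then lower i
      else if x = -lower i then -upper i else if x = -upper i then -lower i else x := by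
  rw [sB_eq_signedSwap, signedSwap_apply (lower_ne_zero i) (upper_ne_zero i)]

lemma odd_sB : Function.Odd (sB i) := by
  rw [sB_eq_signedSwap]
  exact odd_signedSwap (lower_ne_zero i) (upper_ne_zero i)

lemma sB_mul_self : sB i * sB i = 1 := by
  rw [sB_eq_signedSwap, signedSwap_mul_self (lower_ne_zero i) (upper_ne_zero i)]

lemma inv_sB : (sB i)⁻¹ = sB i := inv_eq_of_mul_eq_one_left (sB_mul_self i)

lemma sB_mul_cancel (w : Perm ℤ) : sB i * (sB i * w) = w := by
  rw [← mul_assoc, sB_mul_self, one_mul]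

variable {i}

lemma sB_eq_signedSwap_apply {x : ℤ} (h : sB i x ≠ x) : sB i = signedSwap x (sB i x) := by
  have hl := lower_ne_zero i
  have hu := upper_ne_zero i
  rw [sB_apply] at *
  rw [sB_eq_signedSwap]
  split_ifs at h ⊢ with h₁ h₂ h₃ h₄
  · rw [h₁]
  · rw [h₂, signedSwap_comm]
  · rw [h₃, signedSwap_neg hl hu]
  · rw [h₄, signedSwap_neg hu hl, signedSwap_comm]
  · exact absurd rfl h

lemma sB_lt_sB_iff {x y : ℤ} (hx : x ≠ 0) (hy : y ≠ 0) (h : sB i ≠ signedSwap x y) :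
    sB i x < sB i y ↔ x < y := by
  rcases eq_or_ne x y with rfl | hne
  · simp only [lt_irrefl]
  have hxy : sB i x ≠ y := by
    rintro rfl
    exact h (sB_eq_signedSwap_apply hne.symm)
  rw [sB_apply] at hxy
  rw [sB_apply, sB_apply]
  unfold lower upper at *
  split_ifs at hxy ⊢ <;> omega

end sB

/-- `w` lies in the hyperoctahedral group `B_N`, whose elements are extended to `ℤ` by the identity.
Together with oddness, fixing the integers greater than `N` also fixes those less than `-N`. -/
structure IsSignedPerm (N : ℕ) (w : Perm ℤ) : Prop where
  odd : Function.Odd w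
  apply_of_lt : ∀ ⦃x : ℤ⦄, (N : ℤ) < x → w x = x

lemma odd_inv {w : Perm ℤ} (hw : Function.Odd w) : Function.Odd ⇑w⁻¹ := fun x ↦ by
  rw [Perm.inv_eq_iff_eq, hw, Perm.coe_inv, apply_symm_apply]

lemma odd_mul {v w : Perm ℤ} (hv : Function.Odd v) (hw : Function.Odd w) :
    Function.Odd ⇑(v * w) := fun x ↦ by
  simp only [Perm.mul_apply, hw x, hv (w x)]

lemma apply_ne_zero {w : Perm ℤ} (hw : Function.Odd w) {x : ℤ} (hx : x ≠ 0) : w x ≠ 0 := fun h ↦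
  hx (w.injective (h.trans hw.map_zero.symm))

namespace IsSignedPerm

variable {M N : ℕ} {v w : Perm ℤ}

lemma apply_of_natAbs (h : IsSignedPerm N w) {x : ℤ} (hx : N < x.natAbs) : w x = x := by
  rcases lt_or_ge 0 x with hpos | hneg
  · exact h.apply_of_lt (by omega)
  · rw [← neg_neg x, h.odd, h.apply_of_lt (by omega)]

lemma natAbs_apply_le (h : IsSignedPerm N w) {x : ℤ} (hx : x.natAbs ≤ N) : (w x).natAbs ≤ N := by
  by_contra! hlt
  rw [w.injective (h.apply_of_natAbs hlt)] at hlt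
  omega

lemma eq_of_forall_pos (hv : IsSignedPerm N v)
    (hw : IsSignedPerm N w) (h : ∀ x : ℤ, 0 < x → x ≤ N → v x = w x) : v = w := by
  have hpos : ∀ x : ℤ, 0 < x → v x = w x := fun x hx ↦ by
    rcases le_or_gt x N with hxN | hxN
    · exact h x hx hxN
    · rw [hv.apply_of_lt hxN, hw.apply_of_lt hxN]
  ext x
  rcases lt_trichotomy x 0 with hx | rfl | hx
  · rw [← neg_neg x, hv.odd, hw.odd, hpos _ (neg_pos.2 hx)]
  · rw [hv.odd.map_zero, hw.odd.map_zero]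
  · exact hpos x hx

protected lemma one : IsSignedPerm N 1 := ⟨fun _ ↦ rfl, fun _ _ ↦ rfl⟩

protected lemma mul (hv : IsSignedPerm N v) (hw : IsSignedPerm N w) : IsSignedPerm N (v * w) :=
  ⟨odd_mul hv.odd hw.odd, fun x hx ↦ by simp [hw.apply_of_lt hx, hv.apply_of_lt hx]⟩

protected lemma inv (hw : IsSignedPerm N w) : IsSignedPerm N w⁻¹ :=
  ⟨odd_inv hw.odd, fun x hx ↦ by rw [Perm.inv_eq_iff_eq, hw.apply_of_lt hx]⟩

lemma mono (hw : IsSignedPerm N w) (hNM : N ≤ M) : IsSignedPerm M w :=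
  ⟨hw.odd, fun _ hx ↦ hw.apply_of_lt (by omega)⟩

end IsSignedPerm

lemma isSignedPerm_signedSwap {N : ℕ} {a b : ℤ} (ha : a ≠ 0) (hb : b ≠ 0) (haN : a.natAbs ≤ N)
    (hbN : b.natAbs ≤ N) : IsSignedPerm N (signedSwap a b) where
  odd := odd_signedSwap ha hb
  apply_of_lt x hx := by
    rw [signedSwap_apply ha hb]
    split_ifs <;> omega

lemma isSignedPerm_sB {N i : ℕ} (hi : i < N) : IsSignedPerm N (sB i) := by
  rw [sB_eq_signedSwap]
  refine isSignedPerm_signedSwap (lower_ne_zero i) (upper_ne_zero i) ?_ ?_ <;>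
    simp only [lower, upper] <;> grind

/-- The letters `±1, …, ±N` on which `B_N` acts. -/
noncomputable def signedRange (N : ℕ) : Finset ℤ := (Finset.Icc (-N : ℤ) N).erase 0

lemma mem_signedRange {N : ℕ} {x : ℤ} : x ∈ signedRange N ↔ x ≠ 0 ∧ x.natAbs ≤ N := by
  rw [signedRange, Finset.mem_erase, Finset.mem_Icc]
  omega

section wordProd

lemma wordProd_nil : wordProd [] = 1 := rfl

lemma wordProd_cons (i : ℕ) (l : List ℕ) : wordProd (i :: l) = sB i * wordProd l := rfl

lemma wordProd_append (l l' : List ℕ) : wordProd (l ++ l') = wordProd l * wordProd l' := by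
  simp [wordProd]

lemma wordProd_reverse (l : List ℕ) : wordProd l.reverse = (wordProd l)⁻¹ := by
  induction l with
  | nil => simp [wordProd_nil]
  | cons i l ih => simp [wordProd_append, wordProd_cons, wordProd_nil, ih, inv_sB]

lemma odd_wordProd (l : List ℕ) : Function.Odd (wordProd l) := by
  induction l with
  | nil => exact fun _ ↦ rfl
  | cons i l ih => exact odd_mul (odd_sB i) ih

lemma isSignedPerm_wordProd {N : ℕ} {l : List ℕ} (hl : ∀ i ∈ l, i < N) :
    IsSignedPerm N (wordProd l) := by
  induction l with
  | nil => exact .one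
  | cons i l ih =>
    rw [List.forall_mem_cons] at hl
    exact (isSignedPerm_sB hl.1).mul (ih hl.2)

lemma exists_wordProd_apply_one {y : ℤ} (hy : y ≠ 0) :
    ∃ l, IsSignedPerm y.natAbs (wordProd l) ∧ wordProd l 1 = y := by
  have hpos : ∀ m : ℕ, 1 ≤ m → ∃ l, IsSignedPerm m (wordProd l) ∧ wordProd l 1 = m := by
    refine Nat.le_induction ⟨[], .one, rfl⟩ fun m hm ⟨l, hl, hlm⟩ ↦
      ⟨m :: l, (isSignedPerm_sB m.lt_succ_self).mul (hl.mono m.le_succ), ?_⟩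
    rw [wordProd_cons, Perm.mul_apply, hlm, sB_apply, if_pos (by grind [lower])]
    simp [upper]
  obtain ⟨l, hl, hly⟩ := hpos y.natAbs (by omega)
  rcases lt_or_ge 0 y with h | h
  · exact ⟨l, hl, by omega⟩
  · have hl0 : wordProd (l ++ [0]) = wordProd l * sB 0 := wordProd_append l [0]
    refine ⟨l ++ [0], hl0 ▸ hl.mul (isSignedPerm_sB (by omega)), ?_⟩
    have hneg : sB 0 1 = -1 := by simp [sB]
    rw [hl0, Perm.mul_apply, hneg, odd_wordProd]
    omega

theorem IsSignedPerm.exists_word {N : ℕ} {w : Perm ℤ} (hw : IsSignedPerm N w) :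
    ∃ l, wordProd l = w := by
  induction N generalizing w with
  | zero =>
    refine ⟨[], Equiv.ext fun x ↦ ?_⟩
    rcases eq_or_ne x 0 with rfl | hx
    · exact hw.odd.map_zero.symm
    · exact (hw.apply_of_natAbs (Int.natAbs_pos.2 hx)).symm
  | succ N ih =>
    have hy : w (N + 1) ≠ 0 := apply_ne_zero hw.odd (by omega)
    have hyN : (w (N + 1)).natAbs ≤ N + 1 := hw.natAbs_apply_le (by omega)
    obtain ⟨c, hc, hc1⟩ := exists_wordProd_apply_one hy
    obtain ⟨d, hd, hd1⟩ := exists_wordProd_apply_one (y := N + 1) (by omega)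
    -- `wordProd d * (wordProd c)⁻¹` moves the value `w (N + 1)` back to `N + 1`.
    have hv : IsSignedPerm (N + 1) (wordProd d * (wordProd c)⁻¹ * w) :=
      ((hd.mono (by omega)).mul (hc.mono hyN).inv).mul hw
    obtain ⟨l, hl⟩ := ih (w := wordProd d * (wordProd c)⁻¹ * w) ⟨hv.odd, fun x hx ↦ by
      rcases eq_or_ne x (N + 1) with rfl | hne
      · simp only [Perm.mul_apply, Perm.inv_eq_iff_eq.2 hc1.symm, hd1]
      · exact hv.apply_of_lt (by push_cast; omega)⟩
    refine ⟨c ++ (d.reverse ++ l), ?_⟩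
    rw [wordProd_append, wordProd_append, wordProd_reverse, hl]
    group

/-- The strong exchange property. -/
lemma exists_wordProd_eq_mul_signedSwap {p q : ℤ} (hp : p ≠ 0) (hq : q ≠ 0) (hpq : p < q)
    {l : List ℕ} (hl : wordProd l q < wordProd l p) :
    ∃ l', l'.length + 1 = l.length ∧ wordProd l' = wordProd l * signedSwap p q := by
  induction l with
  | nil => exact absurd hl hpq.asymm
  | cons i l ih =>
    by_cases hinv : wordProd l q < wordProd l p
    · obtain ⟨l', hlen, hprod⟩ := ih hinv
      exact ⟨i :: l', by simp [← hlen], by rw [wordProd_cons, hprod, wordProd_cons, mul_assoc]⟩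
    · have hodd := odd_wordProd l
      have hswap : sB i = signedSwap (wordProd l p) (wordProd l q) := by
        by_contra h
        have hne : wordProd l p ≠ wordProd l q := (wordProd l).injective.ne hpq.ne
        rw [signedSwap_comm] at h
        exact hinv ((sB_lt_sB_iff (apply_ne_zero hodd hq) (apply_ne_zero hodd hp) h).1 hl)
      refine ⟨l, rfl, ?_⟩
      rw [wordProd_cons, mul_assoc, mul_signedSwap_eq hodd, ← hswap, sB_mul_cancel]

end wordProd

/-- The Coxeter length: the least length of a word with product `w`. It is `0` by convention when
`w` is not a product of generators. The alphabet is all of `ℕ`, so that the length does not refer to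
the rank of the group in which `w` is considered. -/
noncomputable def wordLength (w : Perm ℤ) : ℕ := sInf (List.length '' {l | wordProd l = w})

section wordLength

variable {N : ℕ} {w : Perm ℤ}

lemma wordLength_wordProd_le (l : List ℕ) : wordLength (wordProd l) ≤ l.length :=
  Nat.sInf_le ⟨l, rfl, rfl⟩

lemma wordLength_one : wordLength 1 = 0 := Nat.le_zero.1 (wordLength_wordProd_le [])

lemma IsSignedPerm.exists_length_eq_wordLength (hw : IsSignedPerm N w) :
    ∃ l, wordProd l = w ∧ l.length = wordLength w := by
  obtain ⟨l, hl⟩ := hw.exists_word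
  exact Nat.sInf_mem (s := List.length '' {l | wordProd l = w}) ⟨_, l, hl, rfl⟩

lemma wordLength_mul_signedSwap_lt (hw : IsSignedPerm N w) {p q : ℤ} (hp : p ≠ 0) (hq : q ≠ 0)
    (hpq : p < q) (hinv : w q < w p) : wordLength (w * signedSwap p q) < wordLength w := by
  obtain ⟨l, rfl, hl⟩ := hw.exists_length_eq_wordLength
  obtain ⟨l', hlen, hprod⟩ := exists_wordProd_eq_mul_signedSwap hp hq hpq hinv
  have := wordLength_wordProd_le l'
  rw [hprod] at this
  omega

lemma lt_wordLength_mul_signedSwap (hw : IsSignedPerm N w) {p q : ℤ} (hp : p ≠ 0) (hq : q ≠ 0)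
    (hpq : p < q) (hasc : w p < w q) : wordLength w < wordLength (w * signedSwap p q) := by
  have hswap : IsSignedPerm (max N (max p.natAbs q.natAbs)) (w * signedSwap p q) :=
    (hw.mono (le_max_left _ _)).mul (isSignedPerm_signedSwap hp hq (by omega) (by omega))
  have := wordLength_mul_signedSwap_lt hswap hp hq hpq (by
    rwa [Perm.mul_apply, Perm.mul_apply, signedSwap_apply_left hp hq, signedSwap_apply_right hp hq])
  rwa [mul_signedSwap_cancel hp hq] at this

lemma wordLength_mul_signedSwap_ne (hw : IsSignedPerm N w) {p q : ℤ} (hp : p ≠ 0) (hq : q ≠ 0)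
    (hpq : p ≠ q) : wordLength (w * signedSwap p q) ≠ wordLength w := by
  wlog h : p < q generalizing p q
  · rw [signedSwap_comm]
    exact this hq hp hpq.symm (by omega)
  rcases lt_or_gt_of_ne (w.injective.ne hpq) with hlt | hgt
  · exact (lt_wordLength_mul_signedSwap hw hp hq h hlt).ne'
  · exact (wordLength_mul_signedSwap_lt hw hp hq h hgt).ne

lemma wordLength_lt_mul_signedSwap_iff (hw : IsSignedPerm N w) {p q : ℤ} (hp : p ≠ 0) (hq : q ≠ 0)
    (hpq : p ≠ q) : wordLength w < wordLength (w * signedSwap p q) ↔ (p < q ↔ w p < w q) := by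
  wlog h : p < q generalizing p q
  · rw [signedSwap_comm, this hq hp hpq.symm (by omega)]
    have := w.injective.ne hpq
    omega
  simp only [h, true_iff]
  refine ⟨fun hlt ↦ ?_, lt_wordLength_mul_signedSwap hw hp hq h⟩
  by_contra! hle
  have hgt : w q < w p := lt_of_le_of_ne hle (w.injective.ne hpq.symm)
  exact (wordLength_mul_signedSwap_lt hw hp hq h hgt).asymm hlt

/-- Left multiplication by `sB i` shortens `w`; in one-line notation, the values `lower i` and
`upper i` of `w` appear in decreasing order. -/
def IsLeftDescent (w : Perm ℤ) (i : ℕ) : Prop := w⁻¹ (upper i) < w⁻¹ (lower i)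

lemma not_isLeftDescent {i : ℕ} : ¬IsLeftDescent w i ↔ w⁻¹ (lower i) < w⁻¹ (upper i) :=
  not_lt.trans (w⁻¹.injective.ne (lower_lt_upper i).ne).le_iff_lt

lemma isLeftDescent_sB_mul {i : ℕ} : IsLeftDescent (sB i * w) i ↔ ¬IsLeftDescent w i := by
  rw [not_isLeftDescent, IsLeftDescent, mul_inv_rev, inv_sB, sB_eq_signedSwap, Perm.mul_apply,
    Perm.mul_apply, signedSwap_apply_left (lower_ne_zero i) (upper_ne_zero i),
    signedSwap_apply_right (lower_ne_zero i) (upper_ne_zero i)]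

lemma IsLeftDescent.lt (hw : IsSignedPerm N w) {i : ℕ} (hi : IsLeftDescent w i) : i < N := by
  by_contra! hle
  have hupper : w⁻¹ (upper i) = upper i := hw.inv.apply_of_lt (by unfold upper; omega)
  rw [IsLeftDescent, hupper] at hi
  have hlower : w (w⁻¹ (lower i)) = w⁻¹ (lower i) :=
    hw.apply_of_lt (by unfold upper at hi; omega)
  rw [Perm.coe_inv, apply_symm_apply] at hlower
  rw [Perm.coe_inv, ← hlower] at hi
  exact hi.asymm (lower_lt_upper i)

lemma isSignedPerm_sB_mul (hw : IsSignedPerm N w) {i : ℕ} (hi : IsLeftDescent w i) :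
    IsSignedPerm N (sB i * w) :=
  (isSignedPerm_sB (hi.lt hw)).mul hw

lemma wordLength_sB_mul_of_not_isLeftDescent (hw : IsSignedPerm N w) {i : ℕ}
    (hi : ¬IsLeftDescent w i) : wordLength (sB i * w) = wordLength w + 1 := by
  have hinv := odd_inv hw.odd
  have hgt := lt_wordLength_mul_signedSwap hw (apply_ne_zero hinv (lower_ne_zero i))
    (apply_ne_zero hinv (upper_ne_zero i)) (not_isLeftDescent.1 hi)
    (by simpa using lower_lt_upper i)
  have hconj : w * signedSwap (w⁻¹ (lower i)) (w⁻¹ (upper i)) = sB i * w := by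
    rw [mul_signedSwap_eq hw.odd, sB_eq_signedSwap]
    simp
  obtain ⟨l, rfl, hl⟩ := hw.exists_length_eq_wordLength
  have hle := wordLength_wordProd_le (i :: l)
  rw [wordProd_cons, List.length_cons] at hle
  rw [hconj] at hgt
  omega

lemma wordLength_sB_mul_of_isLeftDescent (hw : IsSignedPerm N w) {i : ℕ}
    (hi : IsLeftDescent w i) : wordLength (sB i * w) + 1 = wordLength w := by
  have := wordLength_sB_mul_of_not_isLeftDescent (isSignedPerm_sB_mul hw hi)
    fun h ↦ isLeftDescent_sB_mul.1 h hi
  rw [← this, sB_mul_cancel]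

end wordLength

instance (w : Perm ℤ) : DecidablePred (IsLeftDescent w) := fun _ ↦ Int.decLt _ _

lemma IsSignedPerm.descent_induction {N : ℕ} {P : Perm ℤ → Prop}
    (step : ∀ w, IsSignedPerm N w → (∀ i, IsLeftDescent w i → P (sB i * w)) → P w)
    {w : Perm ℤ} (hw : IsSignedPerm N w) : P w := by
  induction h : wordLength w using Nat.strong_induction_on generalizing w with
  | _ L ih =>
    refine step w hw fun i hi ↦ ih _ ?_ (isSignedPerm_sB_mul hw hi) rfl
    have := wordLength_sB_mul_of_isLeftDescent hw hi
    omega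

/-- The reduced words of `w`, over the alphabet `ℕ`. -/
def reducedWords (w : Perm ℤ) : Set (List ℕ) := {l | wordProd l = w ∧ l.length = wordLength w}

/-- The number of reduced words of `w`. -/
noncomputable def numReducedWords (w : Perm ℤ) : ℕ := (reducedWords w).ncard

section reducedWords

variable {N : ℕ} {w : Perm ℤ}

lemma cons_mem_reducedWords_iff (hw : IsSignedPerm N w) {i : ℕ} {l : List ℕ} :
    i :: l ∈ reducedWords w ↔ IsLeftDescent w i ∧ l ∈ reducedWords (sB i * w) := by
  have hprod : wordProd (i :: l) = w ↔ wordProd l = sB i * w := by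
    rw [wordProd_cons, ← inv_mul_eq_iff_eq_mul, inv_sB, eq_comm]
  simp only [reducedWords, Set.mem_ofPred_eq, hprod, List.length_cons]
  constructor
  · rintro ⟨hl, hlen⟩
    have hi : IsLeftDescent w i := by
      by_contra hi
      have hup := wordLength_sB_mul_of_not_isLeftDescent hw hi
      have hle := wordLength_wordProd_le l
      rw [hl] at hle
      omega
    have := wordLength_sB_mul_of_isLeftDescent hw hi
    exact ⟨hi, hl, by omega⟩
  · rintro ⟨hi, hl, hlen⟩
    have := wordLength_sB_mul_of_isLeftDescent hw hi
    exact ⟨hl, by omega⟩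

lemma append_mem_reducedWords_iff {l t : List ℕ}
    (h : wordLength w = wordLength ((wordProd l)⁻¹ * w) + l.length) :
    l ++ t ∈ reducedWords w ↔ t ∈ reducedWords ((wordProd l)⁻¹ * w) := by
  rw [reducedWords, reducedWords, Set.mem_ofPred_eq, Set.mem_ofPred_eq, wordProd_append,
    List.length_append, h, eq_inv_mul_iff_mul_eq, add_comm l.length, Nat.add_right_cancel_iff]

lemma reducedWords_one : reducedWords 1 = {[]} := by
  ext l
  simp only [reducedWords, wordLength_one, List.length_eq_zero_iff, Set.mem_ofPred_eq,
    Set.mem_singleton_iff, and_iff_right_iff_imp]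
  rintro rfl
  exact wordProd_nil

lemma reducedWords_eq_biUnion (hw : IsSignedPerm N w) (hne : w ≠ 1) :
    reducedWords w = ⋃ i ∈ (↑((Finset.range N).filter (IsLeftDescent w)) : Set ℕ),
      List.cons i '' reducedWords (sB i * w) := by
  ext l
  simp only [Finset.coe_filter, Finset.mem_range, Set.mem_ofPred_eq, Set.mem_iUnion,
    Set.mem_image, exists_prop]
  constructor
  · intro hl
    cases l with
    | nil => exact absurd hl.1.symm hne
    | cons i l =>
      obtain ⟨hi, hl'⟩ := (cons_mem_reducedWords_iff hw).1 hl
      exact ⟨i, ⟨hi.lt hw, hi⟩, l, hl', rfl⟩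
  · rintro ⟨i, ⟨-, hi⟩, l, hl, rfl⟩
    exact (cons_mem_reducedWords_iff hw).2 ⟨hi, hl⟩

lemma finite_reducedWords (hw : IsSignedPerm N w) : (reducedWords w).Finite := by
  refine hw.descent_induction (P := fun w ↦ (reducedWords w).Finite) fun w hw ih ↦ ?_
  rcases eq_or_ne w 1 with rfl | hne
  · simp [reducedWords_one]
  · rw [reducedWords_eq_biUnion hw hne]
    exact (Finset.finite_toSet _).biUnion fun i hi ↦ (ih i (Finset.mem_filter.1 hi).2).image _

lemma numReducedWords_pos (hw : IsSignedPerm N w) : 0 < numReducedWords w := by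
  obtain ⟨l, hl⟩ := hw.exists_length_eq_wordLength
  exact (Set.ncard_pos (finite_reducedWords hw)).2 ⟨l, hl⟩

lemma numReducedWords_one : numReducedWords 1 = 1 := by
  rw [numReducedWords, reducedWords_one, Set.ncard_singleton]

lemma numReducedWords_eq_sum (hw : IsSignedPerm N w) (hne : w ≠ 1) :
    numReducedWords w =
      ∑ i ∈ Finset.range N, if IsLeftDescent w i then numReducedWords (sB i * w) else 0 := by
  rw [numReducedWords, reducedWords_eq_biUnion hw hne,
    Set.Finite.ncard_biUnion (Finset.finite_toSet _), finsum_mem_coe_finset, Finset.sum_filter]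
  · simp only [Set.ncard_image_of_injective _ List.cons_injective, numReducedWords]
  · intro i hi
    have hdesc := (Finset.mem_filter.1 hi).2
    exact (finite_reducedWords (isSignedPerm_sB_mul hw hdesc)).image _
  · refine fun i _ j _ hij ↦ Set.disjoint_left.2 ?_
    rintro _ ⟨l, -, rfl⟩ ⟨l', -, hl'⟩
    exact hij (List.cons_eq_cons.1 hl').1.symm

lemma IsSignedPerm.exists_isLeftDescent {N : ℕ} {w : Perm ℤ} (hw : IsSignedPerm N w) (hne : w ≠ 1) :
    ∃ i, IsLeftDescent w i := by
  obtain ⟨l, hl⟩ := hw.exists_length_eq_wordLength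
  cases l with
  | nil => exact absurd hl.1.symm hne
  | cons i l => exact ⟨i, ((cons_mem_reducedWords_iff hw).1 hl).1⟩

lemma lt_of_mem_reducedWords (hw : IsSignedPerm N w) {l : List ℕ} (hl : l ∈ reducedWords w) :
    ∀ i ∈ l, i < N := by
  induction l generalizing w with
  | nil => exact fun _ h ↦ absurd h List.not_mem_nil
  | cons i l ih =>
    obtain ⟨hi, hl'⟩ := (cons_mem_reducedWords_iff hw).1 hl
    exact List.forall_mem_cons.2 ⟨hi.lt hw, ih (isSignedPerm_sB_mul hw hi) hl'⟩

theorem rSet_eq_reducedWords (hw : IsSignedPerm N w) : RSet N w = reducedWords w := by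
  ext l
  constructor
  · rintro ⟨-, rfl, hmin⟩
    obtain ⟨l', hl'⟩ := hw.exists_length_eq_wordLength
    have hle := hmin l' (lt_of_mem_reducedWords hw hl') hl'.1
    exact ⟨rfl, (hle.trans_eq hl'.2).antisymm (wordLength_wordProd_le l)⟩
  · rintro ⟨rfl, hlen⟩
    refine ⟨lt_of_mem_reducedWords hw ⟨rfl, hlen⟩, rfl, fun l' _ hl' ↦ ?_⟩
    rw [hlen, ← hl']
    exact wordLength_wordProd_le l'

end reducedWords

/-- The summand of the transition equation at `k` which belongs to the letter `j`: the number of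
reduced words of the cover `w * signedSwap k j` of `w`, counted positively if `j < k` and negatively
if `k < j`. -/
noncomputable def coverTerm (k : ℤ) (w : Perm ℤ) (j : ℤ) : ℤ :=
  if wordLength (w * signedSwap k j) = wordLength w + 1 then
    (k - j).sign * numReducedWords (w * signedSwap k j)
  else 0

section transition

variable {M N : ℕ} {w : Perm ℤ} {j k : ℤ}

lemma coverTerm_self (k : ℤ) (w : Perm ℤ) : coverTerm k w k = 0 := by simp [coverTerm]

lemma sign_sub_eq_sign_sub {a b c d : ℤ} (hab : a ≠ b) (hcd : c ≠ d) (h : a < b ↔ c < d) :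
    (a - b).sign = (c - d).sign := by
  rcases lt_or_gt_of_ne hab with hlt | hgt
  · rw [Int.sign_eq_neg_one_of_neg (sub_neg.2 hlt), Int.sign_eq_neg_one_of_neg (by omega)]
  · rw [Int.sign_eq_one_of_pos (sub_pos.2 hgt), Int.sign_eq_one_of_pos (by omega)]

/-- The case of the exchange of the two letters `w k` and `w j` by `sB i`, which is responsible for
the correction term in `coverTerm_eq_sum`. -/
lemma coverTerm_sB_mul_of_eq (hw : IsSignedPerm N w) (hk : k ≠ 0) (hj : j ≠ 0) (hkj : k ≠ j)
    {i : ℕ} (h : w * signedSwap k j = sB i * w) :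
    (if wordLength (w * signedSwap k j) = wordLength w + 1 then (k - j).sign *
        if IsLeftDescent (w * signedSwap k j) i
          then (numReducedWords (sB i * (w * signedSwap k j)) : ℤ) else 0
      else 0) =
      (if IsLeftDescent w i then coverTerm k (sB i * w) j else 0) +
        (w k - w j).sign * numReducedWords w := by
  have hback : sB i * w * signedSwap k j = w := by rw [mul_assoc, h, sB_mul_cancel]
  have hlt := wordLength_lt_mul_signedSwap_iff hw hk hj hkj
  have hwkj := w.injective.ne hkj
  rw [h] at hlt ⊢
  rw [coverTerm, hback, sB_mul_cancel]
  simp only [isLeftDescent_sB_mul]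
  by_cases hi : IsLeftDescent w i
  · have hlen := wordLength_sB_mul_of_isLeftDescent hw hi
    have hsign : (j - k).sign = (w k - w j).sign :=
      sign_sub_eq_sign_sub hkj.symm hwkj (by omega)
    rw [if_neg (by omega), if_pos hi, if_pos hlen.symm, ← hsign, ← neg_sub k j, Int.sign_neg]
    ring
  · have hlen := wordLength_sB_mul_of_not_isLeftDescent hw hi
    rw [if_pos hlen, if_pos hi, if_neg hi, sign_sub_eq_sign_sub hkj hwkj (by omega), zero_add]

lemma coverTerm_sB_mul_of_ne (hw : IsSignedPerm N w) (hk : k ≠ 0) (hj : j ≠ 0) (hkj : k ≠ j)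
    {i : ℕ} (hs : sB i ≠ signedSwap (w k) (w j)) :
    (if wordLength (w * signedSwap k j) = wordLength w + 1 then (k - j).sign *
        if IsLeftDescent (w * signedSwap k j) i
          then (numReducedWords (sB i * (w * signedSwap k j)) : ℤ) else 0
      else 0) =
      if IsLeftDescent w i then coverTerm k (sB i * w) j else 0 := by
  set L := max (max N (i + 1)) (max k.natAbs j.natAbs)
  have hwL : IsSignedPerm L w := hw.mono (by omega)
  have hsw : IsSignedPerm L (sB i * w) := (isSignedPerm_sB (by omega)).mul hwL
  have hwt : IsSignedPerm L (w * signedSwap k j) :=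
    hwL.mul (isSignedPerm_signedSwap hk hj (by omega) (by omega))
  -- The four lengths involved differ by one along each application of `sB i`, and applying `sB i`
  -- does not affect which of `w` and `w * signedSwap k j` is the longer one.
  have hlt : wordLength w < wordLength (w * signedSwap k j) ↔
      wordLength (sB i * w) < wordLength (sB i * w * signedSwap k j) := by
    rw [wordLength_lt_mul_signedSwap_iff hwL hk hj hkj,
      wordLength_lt_mul_signedSwap_iff hsw hk hj hkj, Perm.mul_apply, Perm.mul_apply,
      sB_lt_sB_iff (apply_ne_zero hw.odd hk) (apply_ne_zero hw.odd hj) hs]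
  have hne := wordLength_mul_signedSwap_ne hwL hk hj hkj
  have hne' := wordLength_mul_signedSwap_ne hsw hk hj hkj
  have hdown := wordLength_sB_mul_of_isLeftDescent (i := i) hwL
  have hup := wordLength_sB_mul_of_not_isLeftDescent (i := i) hwL
  have hdown' := wordLength_sB_mul_of_isLeftDescent (i := i) hwt
  have hup' := wordLength_sB_mul_of_not_isLeftDescent (i := i) hwt
  rw [← mul_assoc] at hdown' hup'
  rw [coverTerm, ← mul_assoc]
  by_cases hi : IsLeftDescent w i <;> by_cases hi' : IsLeftDescent (w * signedSwap k j) i <;>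
    simp only [hi, hi', if_true, if_false, mul_zero, ite_self, forall_const, not_true_eq_false,
      not_false_eq_true, false_imp_iff] at hdown hup hdown' hup' ⊢
  · exact if_congr (by omega) rfl rfl
  · exact (if_neg (by omega)).symm
  · exact if_neg (by omega)

lemma coverTerm_eq_sum (hw : IsSignedPerm N w) (hk : k ∈ signedRange N) (hj : j ∈ signedRange N) :
    coverTerm k w j = ∑ i ∈ Finset.range N,
      ((if IsLeftDescent w i then coverTerm k (sB i * w) j else 0) +
        if w j = sB i (w k) then (w k - w j).sign * (numReducedWords w : ℤ) else 0) := by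
  rw [mem_signedRange] at hk hj
  rcases eq_or_ne k j with rfl | hkj
  · simp [coverTerm_self]
  have hwt : IsSignedPerm N (w * signedSwap k j) :=
    hw.mul (isSignedPerm_signedSwap hk.1 hj.1 hk.2 hj.2)
  have hrec : coverTerm k w j = ∑ i ∈ Finset.range N,
      if wordLength (w * signedSwap k j) = wordLength w + 1 then (k - j).sign *
        if IsLeftDescent (w * signedSwap k j) i
          then (numReducedWords (sB i * (w * signedSwap k j)) : ℤ) else 0
      else 0 := by
    rw [coverTerm]
    split_ifs with hcover
    · rw [numReducedWords_eq_sum hwt fun h ↦ by simp [h, wordLength_one] at hcover]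
      push_cast
      rw [Finset.mul_sum]
    · rw [Finset.sum_const_zero]
  rw [hrec]
  refine Finset.sum_congr rfl fun i _ ↦ ?_
  by_cases hs : sB i = signedSwap (w k) (w j)
  · have hwj : w j = sB i (w k) := by
      rw [hs, signedSwap_apply_left (apply_ne_zero hw.odd hk.1) (apply_ne_zero hw.odd hj.1)]
    rw [if_pos hwj]
    exact coverTerm_sB_mul_of_eq hw hk.1 hj.1 hkj (by rw [mul_signedSwap_eq hw.odd, hs])
  · have hwj : w j ≠ sB i (w k) := fun h ↦
      hs (h ▸ sB_eq_signedSwap_apply (h ▸ w.injective.ne hkj.symm))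
    rw [if_neg hwj, add_zero]
    exact coverTerm_sB_mul_of_ne hw hk.1 hj.1 hkj hs

lemma sum_sign_sub_sB {v : ℤ} (hv : v ≠ 0) (hvN : v.natAbs < N) :
    ∑ i ∈ Finset.range N, (v - sB i v).sign = 0 := by
  obtain ⟨m, hm⟩ : ∃ m, v.natAbs = m + 1 := Nat.exists_eq_succ_of_ne_zero (by omega)
  have hin : (v - sB m v).sign = (v - 0).sign :=
    sign_sub_eq_sign_sub (by grind [sB_apply, lower, upper]) hv (by grind [sB_apply, lower, upper])
  have hout : (v - sB (m + 1) v).sign = (0 - v).sign :=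
    sign_sub_eq_sign_sub (by grind [sB_apply, lower, upper]) hv.symm
      (by grind [sB_apply, lower, upper])
  rw [Finset.sum_eq_add m (m + 1) (by omega), hin, hout, sub_zero, zero_sub, Int.sign_neg,
    add_neg_cancel]
  · intro i _ hi
    have hfix : sB i v = v := by grind [sB_apply, lower, upper]
    rw [hfix, sub_self, Int.sign_zero]
  · exact fun h ↦ absurd (Finset.mem_range.2 (by omega)) h
  · exact fun h ↦ absurd (Finset.mem_range.2 (by omega)) h

lemma sum_coverTerm_eq_sum (hw : IsSignedPerm M w) (hk : k ∈ signedRange M) (hMN : M < N) :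
    ∑ j ∈ signedRange N, coverTerm k w j = ∑ i ∈ Finset.range N,
      if IsLeftDescent w i then ∑ j ∈ signedRange N, coverTerm k (sB i * w) j else 0 := by
  have hwN : IsSignedPerm N w := hw.mono hMN.le
  rw [mem_signedRange] at hk
  have hkN : k ∈ signedRange N := mem_signedRange.2 ⟨hk.1, by omega⟩
  have hwk : w k ≠ 0 := apply_ne_zero hw.odd hk.1
  have hcorrection : ∀ i ∈ Finset.range N, ∑ j ∈ signedRange N,
      (if w j = sB i (w k) then (w k - w j).sign * (numReducedWords w : ℤ) else 0) =
        (w k - sB i (w k)).sign * numReducedWords w := by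
    intro i hi
    have hsi : IsSignedPerm N (sB i) := isSignedPerm_sB (Finset.mem_range.1 hi)
    have hmem : w⁻¹ (sB i (w k)) ∈ signedRange N := mem_signedRange.2
      ⟨apply_ne_zero (odd_inv hw.odd) (apply_ne_zero hsi.odd hwk),
        hwN.inv.natAbs_apply_le (hsi.natAbs_apply_le (hwN.natAbs_apply_le (by omega)))⟩
    simp only [← Perm.eq_inv_iff_eq, Finset.sum_ite_eq', if_pos hmem]
    simp
  rw [Finset.sum_congr rfl fun j hj ↦ coverTerm_eq_sum hwN hkN hj, Finset.sum_comm]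
  simp only [Finset.sum_add_distrib]
  rw [Finset.sum_congr rfl hcorrection, ← Finset.sum_mul,
    sum_sign_sub_sB hwk ((hw.natAbs_apply_le hk.2).trans_lt hMN), zero_mul, add_zero]
  refine Finset.sum_congr rfl fun i _ ↦ ?_
  split_ifs with hi
  · rfl
  · exact Finset.sum_const_zero

/-- The transition equation. The covers of `w` in the larger group `B_N` enter it as well. -/
theorem sum_coverTerm_eq_zero (hw : IsSignedPerm M w) (hk : k ∈ signedRange M) (hMN : M < N) :
    ∑ j ∈ signedRange N, coverTerm k w j = 0 := by
  refine hw.descent_induction (P := fun w ↦ ∑ j ∈ signedRange N, coverTerm k w j = 0)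
    fun w hw ih ↦ ?_
  rw [sum_coverTerm_eq_sum hw hk hMN]
  refine Finset.sum_eq_zero fun i _ ↦ ?_
  split_ifs with hi
  exacts [ih i hi, rfl]

end transition

/-- `w` and `w'` have the same length and equally many reduced words. -/
def SameCount (w w' : Perm ℤ) : Prop :=
  wordLength w = wordLength w' ∧ numReducedWords w = numReducedWords w'

lemma SameCount.trans {u v w : Perm ℤ} (huv : SameCount u v) (hvw : SameCount v w) :
    SameCount u w := ⟨huv.1.trans hvw.1, huv.2.trans hvw.2⟩

section covers

variable {M N : ℕ} {v w : Perm ℤ}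

lemma sameCount_of_covers (hv : IsSignedPerm M v) {a b k : ℤ} (hk : k ∈ signedRange M)
    (hMN : M < N) (ha : a ∈ signedRange N) (hb : b ∈ signedRange N) (hak : a < k) (hkb : k < b)
    (hcover : wordLength (v * signedSwap k a) = wordLength v + 1)
    (honly : ∀ j ∈ signedRange N, wordLength (v * signedSwap k j) = wordLength v + 1 →
      j = a ∨ j = b) :
    SameCount (v * signedSwap k b) (v * signedSwap k a) := by
  have htransition := sum_coverTerm_eq_zero hv hk hMN
  have hzero : ∀ j ∈ signedRange N, j ≠ a ∧ j ≠ b → coverTerm k v j = 0 := fun j hj hne ↦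
    if_neg fun h ↦ (honly j hj h).elim hne.1 hne.2
  rw [Finset.sum_eq_add a b (by omega) hzero (fun h ↦ absurd ha h) (fun h ↦ absurd hb h),
    coverTerm, coverTerm, if_pos hcover, Int.sign_eq_one_of_pos (by omega),
    Int.sign_eq_neg_one_of_neg (by omega)] at htransition
  rw [mem_signedRange] at ha hk
  have hpos := numReducedWords_pos ((hv.mono hMN.le).mul
    (isSignedPerm_signedSwap hk.1 ha.1 (by omega) ha.2))
  split_ifs at htransition with hcover' <;> constructor <;> omega

lemma wordLength_add_three_le (hw : IsSignedPerm N w) {i j k : ℤ} (hi : i ≠ 0) (hj : j ≠ 0)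
    (hk : k ≠ 0) (hij : i < j) (hjk : j < k) (hij' : i ≠ -j) (hik' : i ≠ -k) (hjk' : j ≠ -k)
    (hwij : w i < w j) (hwjk : w j < w k) :
    wordLength w + 3 ≤ wordLength (w * signedSwap i k) := by
  set L := max N (max i.natAbs (max j.natAbs k.natAbs))
  have hw₀ : IsSignedPerm L w := hw.mono (by omega)
  have hw₁ : IsSignedPerm L (w * signedSwap i j) :=
    hw₀.mul (isSignedPerm_signedSwap hi hj (by omega) (by omega))
  have hw₂ : IsSignedPerm L (w * signedSwap i j * signedSwap j k) :=
    hw₁.mul (isSignedPerm_signedSwap hj hk (by omega) (by omega))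
  have hijk : signedSwap i j k = k := by
    rw [signedSwap_apply hi hj]
    split_ifs <;> omega
  have hjki : signedSwap j k i = i := by
    rw [signedSwap_apply hj hk]
    split_ifs <;> omega
  have h₁ := lt_wordLength_mul_signedSwap hw₀ hi hj hij hwij
  have h₂ := lt_wordLength_mul_signedSwap hw₁ hj hk hjk (by
    simpa only [Perm.mul_apply, signedSwap_apply_right hi hj, hijk] using hwij.trans hwjk)
  have h₃ := lt_wordLength_mul_signedSwap hw₂ hi hj hij (by
    simpa only [Perm.mul_apply, hjki, signedSwap_apply_left hi hj, signedSwap_apply_left hj hk,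
      hijk] using hwjk)
  have hconj : w * signedSwap i j * signedSwap j k * signedSwap i j = w * signedSwap i k := by
    rw [mul_assoc w, mul_signedSwap_eq (odd_signedSwap hi hj), signedSwap_apply_right hi hj, hijk,
      ← mul_assoc, mul_signedSwap_cancel hi hj]
  rw [hconj] at h₃
  omega

end covers

lemma signedSwap_apply_neg_iff {a b x : ℤ} (ha : 0 < a) (hb : 0 < b) :
    signedSwap a b x < 0 ↔ x < 0 := by
  rw [signedSwap_apply ha.ne' hb.ne']
  split_ifs <;> omega

/-- A signed permutation met while the letter at position `r` is sorted into the increasing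
sequence to its right. The positions up to `r` hold letters of absolute value at most `m`, and of
the letters beyond `m` those with a minus sign are `m + 1, m + 3, …, m + 2 * J - 1`. -/
structure IsSliding (M : ℕ) (r : ℤ) (m J : ℕ) (w : Perm ℤ) : Prop where
  isSignedPerm : IsSignedPerm M w
  pos : 0 < r
  le : m + 2 * J ≤ M
  strictMonoOn : StrictMonoOn w (Set.Ioi r)
  natAbs_le : ∀ p, 0 < p → p ≤ r → (w p).natAbs ≤ m
  lt_of_lt : ∀ p, r < p → w p < w r → w p < -m
  inv_neg_iff : ∀ a : ℤ, m < a → (w⁻¹ a < 0 ↔ a ≤ m + 2 * J ∧ (a - m) % 2 = 1)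

/-- One step of the sorting process: `w * signedSwap r s` and its product with `sB (m + 1)` are the
only two permutations which occur in the transition equation used in `IsSliding.sameCount_slide`. -/
def slide (r s : ℤ) (m : ℕ) (w : Perm ℤ) : Perm ℤ := sB (m + 1) * (w * signedSwap r s)

namespace IsSliding

variable {M m J : ℕ} {r s q : ℤ} {w : Perm ℤ}

lemma exists_positions (h : IsSliding M r m (J + 1) w) :
    ∃ s q, r < s ∧ s < q ∧ w s = -(m + 1) ∧ w q = m + 2 := by
  have hodd := h.isSignedPerm.odd
  obtain ⟨s, hs⟩ : ∃ s, w s = -(m + 1) := w.surjective _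
  obtain ⟨q, hq⟩ : ∃ q, w q = m + 2 := w.surjective _
  have hs' : w⁻¹ (m + 1) = -s := by rw [Perm.inv_eq_iff_eq, hodd, hs, neg_neg]
  have hq' : w⁻¹ (m + 2) = q := by rw [Perm.inv_eq_iff_eq, hq]
  have hneg := h.inv_neg_iff (m + 1) (by omega)
  have hpos := h.inv_neg_iff (m + 2) (by omega)
  rw [hs'] at hneg
  rw [hq'] at hpos
  have hq0 : q ≠ 0 := by
    rintro rfl
    rw [hodd.map_zero] at hq
    omega
  have hrs := h.natAbs_le s (by omega)
  have hrq := h.natAbs_le q (by omega)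
  refine ⟨s, q, by omega, ?_, hs, hq⟩
  rw [← h.strictMonoOn.lt_iff_lt (Set.mem_Ioi.2 (by omega)) (Set.mem_Ioi.2 (by omega))]
  omega

lemma le_rank (h : IsSliding M r m (J + 1) w) (hq : w q = m + 2) : q ≤ M := by
  by_contra! hlt
  have := h.isSignedPerm.apply_of_lt hlt
  have := h.le
  omega

lemma isSignedPerm_mul_signedSwap (h : IsSliding M r m (J + 1) w) (hrs : r < s) (hsq : s < q)
    (hq : w q = m + 2) : IsSignedPerm M (w * signedSwap r s) := by
  have hr := h.pos
  have hqM := h.le_rank hq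
  exact h.isSignedPerm.mul (isSignedPerm_signedSwap hr.ne' (by omega) (by omega) (by omega))

lemma lt_apply_of_lt (h : IsSliding M r m (J + 1) w) (hrs : r < s) (hs : w s = -(m + 1))
    {p : ℤ} (hp : s < p) : w r < w p := by
  have hmono := h.strictMonoOn (Set.mem_Ioi.2 hrs) (Set.mem_Ioi.2 (hrs.trans hp)) hp
  have hne : w p ≠ w r := w.injective.ne (by omega)
  have := h.lt_of_lt p (hrs.trans hp)
  omega

lemma mul_signedSwap_apply (h : IsSliding M r m (J + 1) w) (hrs : r < s) (hs : w s = -(m + 1))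
    {p : ℤ} (hp : 0 < p) :
    (w * signedSwap r s) p = if p = r then -((m : ℤ) + 1) else if p = s then w r else w p := by
  have hr := h.pos
  rw [Perm.mul_apply, signedSwap_apply hr.ne' (by omega), ← hs]
  split_ifs <;> first | rfl | omega

lemma lt_and_eq_of_lt_mul_signedSwap_apply (h : IsSliding M r m (J + 1) w)
    (hrs : r < s) (hs : w s = -(m + 1)) {p : ℤ} (hrp : -r < p)
    (hp : m + 1 < (w * signedSwap r s) p) : r < p ∧ (w * signedSwap r s) p = w p := by
  have hr := h.pos
  have hv : Function.Odd ⇑(w * signedSwap r s) :=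
    odd_mul h.isSignedPerm.odd (odd_signedSwap hr.ne' (by omega))
  have hval {p : ℤ} (hp : 0 < p) := h.mul_signedSwap_apply hrs hs hp
  have hwr := h.natAbs_le r hr le_rfl
  rcases lt_trichotomy p 0 with hneg | rfl | hpos
  · have hvp := hval (p := -p) (by omega)
    rw [if_neg (by omega), if_neg (by omega), hv] at hvp
    have := h.natAbs_le (-p) (by omega) (by omega)
    omega
  · rw [hv.map_zero] at hp
    omega
  · have hvp := hval hpos
    have hwp : (w * signedSwap r s) p = w p := by split_ifs at hvp <;> omega
    refine ⟨?_, hwp⟩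
    by_contra! hle
    have := h.natAbs_le p hpos hle
    omega

lemma sB_mul_eq_mul_signedSwap (h : IsSliding M r m (J + 1) w) (hrs : r < s) (hsq : s < q)
    (hs : w s = -(m + 1)) (hq : w q = m + 2) :
    sB (m + 1) * (w * signedSwap r s) = w * signedSwap r s * signedSwap r (-q) := by
  have hr := h.pos
  have hodd : Function.Odd ⇑(w * signedSwap r s) :=
    odd_mul h.isSignedPerm.odd (odd_signedSwap hr.ne' (by omega))
  have hvr : (w * signedSwap r s) r = -lower (m + 1) := by
    rw [h.mul_signedSwap_apply hrs hs hr, if_pos rfl, lower, if_neg (Nat.succ_ne_zero m)]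
    push_cast
    rfl
  have hvq : (w * signedSwap r s) (-q) = -upper (m + 1) := by
    rw [hodd, h.mul_signedSwap_apply hrs hs (by omega), if_neg (by omega), if_neg (by omega), hq,
      upper]
    push_cast
    ring
  rw [mul_signedSwap_eq hodd r, hvr, hvq, signedSwap_neg (lower_ne_zero _) (upper_ne_zero _),
    sB_eq_signedSwap]

lemma not_isLeftDescent_mul_signedSwap (h : IsSliding M r m (J + 1) w) (hrs : r < s) (hsq : s < q)
    (hs : w s = -(m + 1)) (hq : w q = m + 2) : ¬IsLeftDescent (w * signedSwap r s) (m + 1) := by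
  have hr := h.pos
  have hodd : Function.Odd ⇑(w * signedSwap r s) :=
    odd_mul h.isSignedPerm.odd (odd_signedSwap hr.ne' (by omega))
  have hlower : (w * signedSwap r s)⁻¹ (lower (m + 1)) = -r := by
    rw [Perm.inv_eq_iff_eq, hodd, h.mul_signedSwap_apply hrs hs hr, if_pos rfl, lower,
      if_neg (Nat.succ_ne_zero m)]
    push_cast
    ring
  have hupper : (w * signedSwap r s)⁻¹ (upper (m + 1)) = q := by
    rw [Perm.inv_eq_iff_eq, h.mul_signedSwap_apply hrs hs (by omega), if_neg (by omega),
      if_neg (by omega), hq, upper]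
    push_cast
    ring
  rw [not_isLeftDescent, hlower, hupper]
  omega

lemma eq_neg_of_cover_of_lt (h : IsSliding M r m (J + 1) w) (hrs : r < s) (hsq : s < q)
    (hs : w s = -(m + 1)) (hq : w q = m + 2) {j : ℤ} (hj : j ≠ 0) (hjr : j < r)
    (hcover : wordLength (w * signedSwap r s * signedSwap r j) =
      wordLength (w * signedSwap r s) + 1) :
    j = -q := by
  have hr := h.pos
  have hv := h.isSignedPerm_mul_signedSwap hrs hsq hq
  have hvr := h.mul_signedSwap_apply hrs hs hr
  have hvq := h.mul_signedSwap_apply hrs hs (p := q) (by omega)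
  rw [if_pos rfl] at hvr
  rw [if_neg (by omega), if_neg (by omega), hq] at hvq
  obtain ⟨p, rfl⟩ : ∃ p, j = -p := ⟨-j, (neg_neg j).symm⟩
  have hasc := (wordLength_lt_mul_signedSwap_iff hv hr.ne' hj hjr.ne').1 (by omega)
  have hne := (w * signedSwap r s).injective.ne hjr.ne
  rw [hv.odd] at hasc hne
  obtain ⟨hrp, hwp⟩ := h.lt_and_eq_of_lt_mul_signedSwap_apply hrs hs (p := p) (by omega) (by omega)
  by_contra hpq
  have hwpq : w p ≠ w q := w.injective.ne (by omega)
  have hqp : q < p := by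
    rw [← h.strictMonoOn.lt_iff_lt (Set.mem_Ioi.2 (hrs.trans hsq)) (Set.mem_Ioi.2 hrp)]
    omega
  have hlen := wordLength_add_three_le hv (i := -p) (j := -q) (by omega) (by omega) hr.ne'
    (by omega) (by omega) (by omega) (by omega) (by omega) (by rw [hv.odd, hv.odd]; omega)
    (by rw [hv.odd]; omega)
  rw [signedSwap_comm (-p)] at hlen
  omega

lemma eq_of_cover_of_gt (h : IsSliding M r m (J + 1) w) (hrs : r < s) (hsq : s < q)
    (hs : w s = -(m + 1)) (hq : w q = m + 2) {j : ℤ} (hrj : r < j)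
    (hcover : wordLength (w * signedSwap r s * signedSwap r j) =
      wordLength (w * signedSwap r s) + 1) :
    j = s := by
  have hr := h.pos
  have hv := h.isSignedPerm_mul_signedSwap hrs hsq hq
  have hwr := h.natAbs_le r hr le_rfl
  have hvr : (w * signedSwap r s) r = -((m : ℤ) + 1) := by
    rw [h.mul_signedSwap_apply hrs hs hr, if_pos rfl]
  have hvs : (w * signedSwap r s) s = w r := by
    rw [h.mul_signedSwap_apply hrs hs (by omega), if_neg (by omega), if_pos rfl]
  have hasc := ((wordLength_lt_mul_signedSwap_iff hv hr.ne' (by omega) hrj.ne).1 (by omega)).1 hrj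
  by_contra hjs
  have hvj : (w * signedSwap r s) j = w j := by
    rw [h.mul_signedSwap_apply hrs hs (by omega), if_neg hrj.ne', if_neg hjs]
  rcases lt_or_gt_of_ne hjs with hlt | hgt
  · have := h.strictMonoOn (Set.mem_Ioi.2 hrj) (Set.mem_Ioi.2 hrs) hlt
    omega
  · have := h.lt_apply_of_lt hrs hs hgt
    have := wordLength_add_three_le hv hr.ne' (j := s) (k := j) (by omega) (by omega) hrs hgt
      (by omega) (by omega) (by omega) (by omega) (by omega)
    omega

theorem sameCount_slide (h : IsSliding M r m (J + 1) w) (hrs : r < s) (hsq : s < q)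
    (hs : w s = -(m + 1)) (hq : w q = m + 2) : SameCount w (slide r s m w) := by
  have hr := h.pos
  have hv := h.isSignedPerm_mul_signedSwap hrs hsq hq
  have hcover := wordLength_sB_mul_of_not_isLeftDescent hv
    (h.not_isLeftDescent_mul_signedSwap hrs hsq hs hq)
  have hslide := h.sB_mul_eq_mul_signedSwap hrs hsq hs hq
  have hqM := h.le_rank hq
  have hsame := sameCount_of_covers hv (N := M + 1) (a := -q) (b := s) (k := r)
    (mem_signedRange.2 (by omega)) M.lt_succ_self (mem_signedRange.2 (by omega))
    (mem_signedRange.2 (by omega)) (by omega) hrs (hslide ▸ hcover)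
    fun j hj hj' ↦ ?_
  · rwa [mul_signedSwap_cancel hr.ne' (by omega), ← hslide] at hsame
  have hj0 := (mem_signedRange.1 hj).1
  rcases lt_trichotomy j r with hjr | rfl | hrj
  · exact .inl (h.eq_neg_of_cover_of_lt hrs hsq hs hq hj0 hjr hj')
  · simp [signedSwap_self] at hj'
  · exact .inr (h.eq_of_cover_of_gt hrs hsq hs hq hrj hj')

end IsSliding

namespace IsSliding

variable {M m J : ℕ} {r s q : ℤ} {w : Perm ℤ}

lemma slide_apply (h : IsSliding M r m (J + 1) w) (hrs : r < s) (hsq : s < q)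
    (hs : w s = -(m + 1)) (hq : w q = m + 2) {p : ℤ} (hp : 0 < p) :
    slide r s m w p = if p = r then -((m : ℤ) + 2) else if p = s then w r
      else if p = q then (m : ℤ) + 1 else w p := by
  have hr := h.pos
  have hodd := h.isSignedPerm.odd
  have hwr := h.natAbs_le r hr le_rfl
  rw [slide, Perm.mul_apply, h.mul_signedSwap_apply hrs hs hp]
  split_ifs with hpr hps hpq
  · grind [sB_apply, lower, upper]
  · grind [sB_apply, lower, upper]
  · rw [hpq, hq]
    grind [sB_apply, lower, upper]
  · have h₁ := w.injective.ne hps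
    have h₂ := w.injective.ne hpq
    have h₃ : w p ≠ w (-s) := w.injective.ne (by omega)
    have h₄ : w p ≠ w (-q) := w.injective.ne (by omega)
    rw [hodd] at h₃ h₄
    grind [sB_apply, lower, upper]

lemma slide_inv_neg_iff (h : IsSliding M r m (J + 1) w) (hrs : r < s) (hsq : s < q)
    (hs : w s = -(m + 1)) (hq : w q = m + 2) {a : ℤ} (ha : 0 < a) :
    (slide r s m w)⁻¹ a < 0 ↔ a ≠ m + 1 ∧ (a = m + 2 ∨ w⁻¹ a < 0) := by
  have hr := h.pos
  have hs' : w⁻¹ (m + 1) = -s := by rw [Perm.inv_eq_iff_eq, h.isSignedPerm.odd, hs, neg_neg]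
  have hq' : w⁻¹ (m + 2) = q := by rw [Perm.inv_eq_iff_eq, hq]
  have hinv : (signedSwap r s)⁻¹ = signedSwap r s :=
    inv_eq_of_mul_eq_one_left (signedSwap_mul_self hr.ne' (by omega))
  rw [slide, mul_inv_rev, mul_inv_rev, hinv, inv_sB, Perm.mul_apply, Perm.mul_apply,
    signedSwap_apply_neg_iff hr (by omega)]
  rcases eq_or_ne a (m + 1) with rfl | h₁
  · have hup : sB (m + 1) (m + 1) = m + 2 := by grind [sB_apply, lower, upper]
    rw [hup, hq']
    omega
  rcases eq_or_ne a (m + 2) with rfl | h₂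
  · have hdown : sB (m + 1) (m + 2) = m + 1 := by grind [sB_apply, lower, upper]
    rw [hdown, hs']
    omega
  · have hfix : sB (m + 1) a = a := by grind [sB_apply, lower, upper]
    rw [hfix]
    tauto

lemma strictMonoOn_slide (h : IsSliding M r m (J + 1) w) (hrs : r < s) (hsq : s < q)
    (hs : w s = -(m + 1)) (hq : w q = m + 2) : StrictMonoOn (slide r s m w) (Set.Ioi r) := by
  intro x hx y hy hxy
  have hr := h.pos
  have hwr := h.natAbs_le r hr le_rfl
  have hlt {x y : ℤ} (hx : r < x) (hy : r < y) : w x < w y ↔ x < y := h.strictMonoOn.lt_iff_lt hx hy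
  rw [Set.mem_Ioi] at hx hy
  have hne : w x ≠ w (-s) := w.injective.ne (by omega)
  rw [h.isSignedPerm.odd, hs] at hne
  rw [h.slide_apply hrs hsq hs hq (by omega), h.slide_apply hrs hsq hs hq (by omega),
    if_neg hx.ne', if_neg hy.ne']
  have hxs := hlt hx hrs
  have hxq := hlt hx (hrs.trans hsq)
  have hxy' := hlt hx hy
  have hsy := h.lt_apply_of_lt hrs hs (p := y)
  split_ifs <;> subst_vars <;> omega

theorem slide (h : IsSliding M r m (J + 1) w) (hrs : r < s) (hsq : s < q)
    (hs : w s = -(m + 1)) (hq : w q = m + 2) :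
    IsSliding M r (m + 2) J (slide r s m w) where
  isSignedPerm := by
    have := h.le
    exact (isSignedPerm_sB (by omega)).mul (h.isSignedPerm_mul_signedSwap hrs hsq hq)
  pos := h.pos
  le := by
    have := h.le
    omega
  strictMonoOn := h.strictMonoOn_slide hrs hsq hs hq
  natAbs_le p hp hpr := by
    have := h.natAbs_le p hp hpr
    rw [h.slide_apply hrs hsq hs hq hp]
    split_ifs <;> omega
  lt_of_lt p _ hlt := by
    rwa [h.slide_apply hrs hsq hs hq h.pos, if_pos rfl] at hlt
  inv_neg_iff a ha := by
    rw [h.slide_inv_neg_iff hrs hsq hs hq (by omega), h.inv_neg_iff a (by omega)]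
    omega

lemma strictMonoOn_Ioi_sub_one (h : IsSliding M r m 0 w) : StrictMonoOn w (Set.Ioi (r - 1)) := by
  have hr := h.pos
  have hgt {p : ℤ} (hp : r < p) : w r < w p := by
    by_contra! hle
    have hlt := h.lt_of_lt p hp (lt_of_le_of_ne hle (w.injective.ne hp.ne'))
    have hneg := h.inv_neg_iff (-w p) (by omega)
    rw [odd_inv h.isSignedPerm.odd, Perm.coe_inv, symm_apply_apply] at hneg
    omega
  intro x hx y hy hxy
  rw [Set.mem_Ioi] at hx hy
  rcases eq_or_ne x r with rfl | hxr
  · exact hgt hxy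
  · exact h.strictMonoOn (Set.mem_Ioi.2 (by omega)) (Set.mem_Ioi.2 (by omega)) hxy

theorem exists_sorted (h : IsSliding M r m J w) :
    ∃ w', SameCount w w' ∧ IsSignedPerm M w' ∧ StrictMonoOn w' (Set.Ioi (r - 1)) ∧
      (∀ p, 0 < p → p < r → w' p = w p) ∧
      ∀ a : ℤ, 0 < a → (w'⁻¹ a < 0 ↔
        if a ≤ m then w⁻¹ a < 0 else a ≤ m + 2 * J ∧ (a - m) % 2 = 0) := by
  induction J generalizing m w with
  | zero =>
    refine ⟨w, ⟨rfl, rfl⟩, h.isSignedPerm, h.strictMonoOn_Ioi_sub_one, fun _ _ _ ↦ rfl,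
      fun a _ ↦ ?_⟩
    split_ifs with ha
    · rfl
    · rw [h.inv_neg_iff a (by omega)]
      omega
  | succ J ih =>
    have := h.pos
    obtain ⟨s, q, hrs, hsq, hs, hq⟩ := h.exists_positions
    obtain ⟨w', hcount, hsigned, hmono, heq, hneg⟩ := ih (h.slide hrs hsq hs hq)
    refine ⟨w', (h.sameCount_slide hrs hsq hs hq).trans hcount, hsigned, hmono, fun p hp hpr ↦ ?_,
      fun a ha ↦ ?_⟩
    · rw [heq p hp hpr, h.slide_apply hrs hsq hs hq hp, if_neg hpr.ne, if_neg (by omega),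
        if_neg (by omega)]
    · rw [hneg a ha, h.slide_inv_neg_iff hrs hsq hs hq ha]
      push_cast
      split_ifs <;> omega

end IsSliding

lemma w0B_apply (n : ℕ) (x : ℤ) : w0B n x = if x.natAbs ≤ n then -x else x := by
  change w0BFun n x = _
  unfold w0BFun
  split_ifs <;> omega

lemma isSignedPerm_w0B (n : ℕ) : IsSignedPerm n (w0B n) where
  odd x := by
    rw [w0B_apply, w0B_apply]
    split_ifs <;> omega
  apply_of_lt x hx := by rw [w0B_apply, if_neg (by omega)]

/-- The product of two longest elements, which for `k ≤ n` changes the signs of `k + 1, …, n` and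
fixes `1, …, k`. -/
def partialFlip (n k : ℕ) : Perm ℤ := w0B n * w0B k

section partialFlip

variable {n k : ℕ}

lemma partialFlip_apply (hk : k ≤ n) (x : ℤ) :
    partialFlip n k x = if k < x.natAbs ∧ x.natAbs ≤ n then -x else x := by
  simp only [partialFlip, Perm.mul_apply, w0B_apply]
  split_ifs <;> omega

lemma partialFlip_zero (n : ℕ) : partialFlip n 0 = w0B n := by
  ext x
  rw [partialFlip_apply n.zero_le, w0B_apply]
  split_ifs <;> omega

lemma partialFlip_inv (hk : k ≤ n) : (partialFlip n k)⁻¹ = partialFlip n k := by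
  refine inv_eq_of_mul_eq_one_left (Equiv.ext fun x ↦ ?_)
  rw [Perm.mul_apply, partialFlip_apply hk, partialFlip_apply hk, Perm.one_apply]
  split_ifs <;> omega

lemma inv_w0B_mul_w0B (hk : k ≤ n) : (w0B k)⁻¹ * w0B n = partialFlip n k := by
  rw [inv_mul_eq_iff_eq_mul, partialFlip]
  ext x
  simp only [Perm.mul_apply, w0B_apply]
  split_ifs <;> omega

lemma isSignedPerm_partialFlip (hk : k ≤ n) : IsSignedPerm n (partialFlip n k) where
  odd x := by
    rw [partialFlip_apply hk, partialFlip_apply hk]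
    split_ifs <;> omega
  apply_of_lt x hx := by rw [partialFlip_apply hk, if_neg (by omega)]

end partialFlip

/-- The permutation obtained from `partialFlip n k` when the positions `n, n - 1, …, r + 1` have
been treated: their letters are in increasing order, and the positions up to `r` are untouched. The
letters with a minus sign are `k + 1, …, r` and every other one of those beyond. -/
structure IsStage (n k r : ℕ) (w : Perm ℤ) : Prop where
  isSignedPerm : IsSignedPerm (2 * n) w
  sameCount : SameCount (partialFlip n k) w
  strictMonoOn : StrictMonoOn w (Set.Ioi r)
  apply_eq : ∀ p : ℤ, 0 < p → p ≤ r → w p = partialFlip n k p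
  inv_neg_iff : ∀ a : ℤ, 0 < a → (w⁻¹ a < 0 ↔ (k < a ∧ a ≤ r) ∨
    ((2 * max r k - r : ℕ) < a ∧ a ≤ 2 * n - r ∧ (a - r) % 2 = 1))

namespace IsStage

variable {n k r : ℕ} {w : Perm ℤ}

lemma partialFlip (hk : k ≤ n) : IsStage n k n (partialFlip n k) where
  isSignedPerm := (isSignedPerm_partialFlip hk).mono (by omega)
  sameCount := ⟨rfl, rfl⟩
  strictMonoOn x hx y hy hxy := by
    have h := isSignedPerm_partialFlip hk
    rwa [h.apply_of_lt hx, h.apply_of_lt hy]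
  apply_eq _ _ _ := rfl
  inv_neg_iff a ha := by
    rw [partialFlip_inv hk, partialFlip_apply hk]
    split_ifs <;> omega

lemma natAbs_apply (hk : k ≤ n) (h : IsStage n k r w) {p : ℤ} (hp : 0 < p) (hpr : p ≤ r) :
    (w p).natAbs = p.natAbs := by
  rw [h.apply_eq p hp hpr, partialFlip_apply hk]
  split_ifs <;> omega

lemma lt_natAbs_apply (hk : k ≤ n) (h : IsStage n k r w) {p : ℤ} (hp : r < p) :
    r < (w p).natAbs := by
  by_contra! hle
  have hodd := h.isSignedPerm.odd
  have hne : w p ≠ 0 := apply_ne_zero hodd (by omega)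
  have habs := h.natAbs_apply hk (p := (w p).natAbs) (by omega) (by omega)
  have hpos : w (w p).natAbs ≠ w p := w.injective.ne (by omega)
  have hneg : w (w p).natAbs ≠ w (-p) := w.injective.ne (by omega)
  rw [hodd] at hneg
  omega

lemma isSliding (hk : k ≤ n) (hr : r < n) (h : IsStage n k (r + 1) w) :
    IsSliding (2 * n) (r + 1) (2 * max (r + 1) k - (r + 1)) (n - max (r + 1) k) w where
  isSignedPerm := h.isSignedPerm
  pos := by omega
  le := by omega
  strictMonoOn := h.strictMonoOn
  natAbs_le p hp hpr := by
    rw [h.natAbs_apply hk hp hpr]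
    omega
  lt_of_lt p hp hlt := by
    have habs := h.natAbs_apply hk (p := r + 1) (by omega) le_rfl
    have hgt := h.lt_natAbs_apply hk hp
    have hneg := h.inv_neg_iff (-w p) (by omega)
    rw [odd_inv h.isSignedPerm.odd, Perm.coe_inv, symm_apply_apply] at hneg
    omega
  inv_neg_iff a ha := by
    rw [h.inv_neg_iff a (by omega)]
    omega

lemma exists_pred (hk : k ≤ n) (hr : r < n) (h : IsStage n k (r + 1) w) :
    ∃ w', IsStage n k r w' := by
  obtain ⟨w', hcount, hsigned, hmono, heq, hneg⟩ := (h.isSliding hk hr).exists_sorted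
  refine ⟨w', hsigned, h.sameCount.trans hcount, ?_, fun p hp hpr ↦ ?_, fun a ha ↦ ?_⟩
  · rwa [add_sub_cancel_right] at hmono
  · rw [heq p hp (by omega), h.apply_eq p hp (by push_cast; omega)]
  · rw [hneg a ha, h.inv_neg_iff a ha]
    split_ifs <;> omega

end IsStage

theorem exists_isStage {n k r : ℕ} (hk : k ≤ n) (hr : r ≤ n) : ∃ w, IsStage n k r w := by
  induction hr using Nat.decreasingInduction with
  | of_succ r hr ih =>
    obtain ⟨w, hw⟩ := ih
    exact hw.exists_pred hk hr
  | self => exact ⟨_, .partialFlip hk⟩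

open Polynomial in
/-- Compare the coefficients just below the leading ones in the Lagrange interpolation of
`∏ a ∈ A, (X - z a) - ∏ a ∈ A, (X - y a)` at the nodes `y a`. -/
theorem sum_sub_mul_prod_sub_div_sub {ι F : Type*} [DecidableEq ι] [Field F] {A : Finset ι}
    {y : ι → F} (z : ι → F) (hy : Set.InjOn y A) :
    ∑ a ∈ A, (z a - y a) * ∏ b ∈ A.erase a, (y a - z b) / (y a - y b) =
      ∑ a ∈ A, (z a - y a) := by
  rcases A.eq_empty_or_nonempty with rfl | hne
  · simp
  set P : F[X] := ∏ a ∈ A, (X - C (y a)) - ∏ a ∈ A, (X - C (z a)) with hP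
  have hdegree (f : ι → F) : (∏ a ∈ A, (X - C (f a))).degree = (A.card : WithBot ℕ) := by
    rw [degree_prod]
    simp
  have hmonic (f : ι → F) := monic_prod_X_sub_C f A
  have hlt : P.degree < A.card := by
    rw [← hdegree y]
    exact degree_sub_lt_left ((hdegree y).trans (hdegree z).symm) (hmonic y).ne_zero
      (by rw [(hmonic y).leadingCoeff, (hmonic z).leadingCoeff])
  have hcoeff : P.coeff (A.card - 1) = ∑ a ∈ A, (z a - y a) := by
    rw [hP, coeff_sub, prod_X_sub_C_coeff_card_pred _ _ hne.card_pos,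
      prod_X_sub_C_coeff_card_pred _ _ hne.card_pos, neg_sub_neg, Finset.sum_sub_distrib]
  rw [← hcoeff, Lagrange.coeff_eq_sum hy hlt]
  refine Finset.sum_congr rfl fun a ha ↦ ?_
  have heval : P.eval (y a) = (z a - y a) * ∏ b ∈ A.erase a, (y a - z b) := by
    simp only [hP, eval_sub, eval_prod, eval_X, eval_C]
    rw [Finset.prod_eq_zero ha (sub_self _), ← Finset.mul_prod_erase _ _ ha]
    ring
  rw [heval, Finset.prod_div_distrib, mul_div_assoc]

/-- Schur's product formula for the number of shifted standard tableaux whose shape has the set of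
parts `A`, divided by the factorial of the size of the shape. -/
noncomputable def shiftedWeight (A : Finset ℕ) : ℚ :=
  ∏ a ∈ A, ((a.factorial : ℚ)⁻¹ * ∏ b ∈ A with b < a, ((a : ℚ) - b) / (a + b))

/-- The parts of the shape obtained by removing one box from the row of length `i + 1`. -/
def lowerPart (A : Finset ℕ) (i : ℕ) : Finset ℕ := (insert i (A.erase (i + 1))).erase 0

section shiftedWeight

variable {A : Finset ℕ} {a i : ℕ}

lemma shiftedWeight_empty : shiftedWeight ∅ = 1 := Finset.prod_empty

lemma shiftedWeight_insert (ha : a ∉ A) :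
    shiftedWeight (insert a A) =
      shiftedWeight A * ((a.factorial : ℚ)⁻¹ * ∏ b ∈ A, |(a : ℚ) - b| / (a + b)) := by
  have hfactor : ∀ b ∈ A, |(a : ℚ) - b| / (a + b) =
      (if b < a then ((a : ℚ) - b) / (a + b) else 1) *
        if a < b then ((b : ℚ) - a) / (b + a) else 1 := by
    intro b hb
    rcases lt_or_gt_of_ne (ne_of_mem_of_not_mem hb ha) with h | h
    · have hq : (b : ℚ) < a := by exact_mod_cast h
      rw [if_pos h, if_neg h.asymm, mul_one, abs_of_pos (sub_pos.2 hq)]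
    · have hq : (a : ℚ) < b := by exact_mod_cast h
      rw [if_neg h.asymm, if_pos h, one_mul, abs_of_neg (sub_neg.2 hq), neg_sub, add_comm (a : ℚ)]
  simp only [shiftedWeight, Finset.prod_filter]
  rw [Finset.prod_congr rfl hfactor, Finset.prod_mul_distrib, Finset.prod_insert ha]
  simp only [Finset.prod_insert ha, lt_irrefl, if_false, one_mul, Finset.prod_mul_distrib]
  ring

lemma shiftedWeight_erase_zero (A : Finset ℕ) : shiftedWeight (A.erase 0) = shiftedWeight A := by
  by_cases h0 : 0 ∈ A
  · conv_rhs => rw [← Finset.insert_erase h0, shiftedWeight_insert (Finset.notMem_erase 0 A)]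
    rw [Finset.prod_eq_one fun b hb ↦ ?_]
    · simp
    · have : (b : ℚ) ≠ 0 := by exact_mod_cast Finset.ne_of_mem_erase hb
      simp [this]
  · rw [Finset.erase_eq_of_notMem h0]

lemma abs_sub_div_add_eq_mul {b : ℕ} (hb : b ≠ 0) (hbi : b ≠ i + 1) :
    |(i : ℚ) - b| / (i + b) = |((i + 1 : ℕ) : ℚ) - b| / ((i + 1 : ℕ) + b) *
      (((i + 1 : ℕ) * ((i + 1 : ℕ) - 1) - b * (b + 1)) /
        ((i + 1 : ℕ) * ((i + 1 : ℕ) - 1) - b * (b - 1))) := by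
  have : (0 : ℚ) < b := by positivity
  have hnum : ((i : ℚ) + 1) * (i + 1 - 1) - b * (b + 1) = (i + 1 + b) * (i - b) := by ring
  have hden : ((i : ℚ) + 1) * (i + 1 - 1) - b * (b - 1) = (i + 1 - b) * (i + b) := by ring
  push_cast
  rw [hnum, hden]
  rcases lt_or_gt_of_ne hbi with h | h
  · have hq : (b : ℚ) ≤ i := by exact_mod_cast Nat.lt_succ_iff.1 h
    have hpos : 0 < (i : ℚ) + 1 - b := by linarith
    rw [abs_of_nonneg (by linarith), abs_of_pos hpos]
    field_simp
  · have hq : (i : ℚ) + 1 < b := by exact_mod_cast h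
    have hneg : (i : ℚ) + 1 - b < 0 := by linarith
    rw [abs_of_neg (by linarith), abs_of_neg hneg]
    field_simp [hneg.ne]

lemma shiftedWeight_lowerPart (h0 : 0 ∉ A) (hi : i + 1 ∈ A) (hiA : i ∉ A) :
    shiftedWeight (lowerPart A i) = shiftedWeight A * ((i + 1 : ℕ) * ∏ b ∈ A.erase (i + 1),
      (((i + 1 : ℕ) * ((i + 1 : ℕ) - 1) - b * (b + 1) : ℚ) /
        ((i + 1 : ℕ) * ((i + 1 : ℕ) - 1) - b * (b - 1)))) := by
  have hfactor := fun b (hb : b ∈ A.erase (i + 1)) ↦ abs_sub_div_add_eq_mul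
    (ne_of_mem_of_not_mem (Finset.mem_of_mem_erase hb) h0) (Finset.ne_of_mem_erase hb)
  rw [lowerPart, shiftedWeight_erase_zero,
    shiftedWeight_insert fun h ↦ hiA (Finset.mem_of_mem_erase h),
    Finset.prod_congr rfl hfactor, Finset.prod_mul_distrib]
  conv_rhs => rw [← Finset.insert_erase hi, shiftedWeight_insert (Finset.notMem_erase _ _)]
  rw [Finset.erase_insert (Finset.notMem_erase _ _), Nat.factorial_succ]
  push_cast
  field_simp

lemma sum_lowerPart (hi : i + 1 ∈ A) (hiA : i ∉ A) :
    (∑ a ∈ lowerPart A i, a) + 1 = ∑ a ∈ A, a := by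
  rw [lowerPart, Finset.sum_erase (f := fun a ↦ a) _ rfl,
    Finset.sum_insert fun h ↦ hiA (Finset.mem_of_mem_erase h), ← Finset.add_sum_erase A _ hi]
  ring

lemma injOn_mul_sub_one (h0 : 0 ∉ A) : Set.InjOn (fun a : ℕ ↦ (a : ℚ) * (a - 1)) A := by
  intro a ha b hb hab
  have ha1 : (1 : ℚ) ≤ a := by exact_mod_cast Nat.pos_of_ne_zero (ne_of_mem_of_not_mem ha h0)
  have hb1 : (1 : ℚ) ≤ b := by exact_mod_cast Nat.pos_of_ne_zero (ne_of_mem_of_not_mem hb h0)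
  have hfactor : ((a : ℚ) - b) * (a + b - 1) = 0 := by linear_combination hab
  rcases mul_eq_zero.1 hfactor with h | h
  · exact_mod_cast sub_eq_zero.1 h
  · linarith

/-- This is the recursion satisfied by the numbers of shifted standard tableaux, divided by the
factorial of the size of the shape less one. -/
theorem sum_shiftedWeight_lowerPart (h0 : 0 ∉ A) {N : ℕ} (hN : ∀ a ∈ A, a ≤ N) :
    ∑ i ∈ Finset.range N, (if i + 1 ∈ A ∧ i ∉ A then shiftedWeight (lowerPart A i) else 0) =
      (∑ a ∈ A, a : ℕ) * shiftedWeight A := by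
  have hlagrange := sum_sub_mul_prod_sub_div_sub (fun a : ℕ ↦ (a : ℚ) * (a + 1))
    (injOn_mul_sub_one h0)
  have hA : (Finset.range (N + 1)).filter (· ∈ A) = A := by
    ext a
    have := hN a
    grind
  have hshift (g : ℕ → ℚ) :
      ∑ a ∈ A, g a = ∑ i ∈ Finset.range N, if i + 1 ∈ A then g (i + 1) else 0 := by
    conv_lhs => rw [← hA, Finset.sum_filter, Finset.sum_range_succ', if_neg h0, add_zero]
  have hdouble (a : ℕ) : (a : ℚ) * (a + 1) - a * (a - 1) = 2 * a := by ring
  simp only [hdouble, mul_assoc, ← Finset.mul_sum] at hlagrange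
  rw [Nat.cast_sum, ← mul_left_cancel₀ two_ne_zero hlagrange, mul_comm, Finset.mul_sum, hshift]
  refine Finset.sum_congr rfl fun i _ ↦ ?_
  by_cases hi : i + 1 ∈ A
  · by_cases hiA : i ∈ A
    · rw [if_neg (fun h ↦ h.2 hiA), if_pos hi, Finset.prod_eq_zero
        (Finset.mem_erase.2 ⟨i.succ_ne_self.symm, hiA⟩), mul_zero, mul_zero]
      push_cast
      ring
    · rw [if_pos ⟨hi, hiA⟩, if_pos hi, shiftedWeight_lowerPart h0 hi hiA]
  · rw [if_neg (fun h ↦ hi h.1), if_neg hi]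

end shiftedWeight

/-- The values `w 1 < w 2 < …` increase, and `A` is the set of the letters that carry a minus sign
among them; `A` is the set of parts of the shifted shape of `w`. -/
structure IsGrassmannian (w : Perm ℤ) (A : Finset ℕ) : Prop where
  strictMonoOn : StrictMonoOn w (Set.Ioi 0)
  mem_iff : ∀ a : ℕ, a ∈ A ↔ w⁻¹ a < 0

namespace IsGrassmannian

variable {N i : ℕ} {w : Perm ℤ} {A : Finset ℕ}

lemma zero_notMem (hw : IsSignedPerm N w) (h : IsGrassmannian w A) : 0 ∉ A := by
  rw [h.mem_iff, Nat.cast_zero, (odd_inv hw.odd).map_zero]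
  exact lt_irrefl 0

lemma le_of_mem (hw : IsSignedPerm N w) (h : IsGrassmannian w A) {a : ℕ} (ha : a ∈ A) : a ≤ N := by
  by_contra! hlt
  rw [h.mem_iff, hw.inv.apply_of_lt (by exact_mod_cast hlt)] at ha
  omega

lemma eq_empty (h : IsGrassmannian 1 A) : A = ∅ := by
  refine Finset.eq_empty_of_forall_notMem fun a ha ↦ ?_
  rw [h.mem_iff, inv_one, Perm.one_apply] at ha
  omega

lemma isLeftDescent_iff (hw : IsSignedPerm N w) (h : IsGrassmannian w A) :
    IsLeftDescent w i ↔ i + 1 ∈ A ∧ i ∉ A := by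
  have hodd := odd_inv hw.odd
  rcases Nat.eq_zero_or_pos i with rfl | hi
  · have hlower : lower 0 = -upper 0 := rfl
    rw [IsLeftDescent, hlower, hodd, and_iff_left (h.zero_notMem hw), h.mem_iff]
    change w⁻¹ 1 < -w⁻¹ 1 ↔ w⁻¹ 1 < 0
    omega
  rw [IsLeftDescent, upper, lower, if_neg hi.ne', h.mem_iff, h.mem_iff, Nat.cast_succ]
  obtain ⟨x, hx⟩ : ∃ x, w x = i := ⟨_, w.apply_symm_apply i⟩
  obtain ⟨y, hy0, hy⟩ : ∃ y, y ≠ 0 ∧ w y = i + 1 :=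
    ⟨_, apply_ne_zero hodd (by omega), w.apply_symm_apply (i + 1)⟩
  rw [← hy, ← hx, Perm.coe_inv, symm_apply_apply, symm_apply_apply]
  have hlt {x y : ℤ} (hx : 0 < x) (hy : 0 < y) : w x < w y ↔ x < y := h.strictMonoOn.lt_iff_lt hx hy
  have hpos := @hlt x y
  have hneg := @hlt (-y) (-x)
  rw [hw.odd, hw.odd] at hneg
  omega

lemma strictMonoOn_sB_mul (hw : IsSignedPerm N w) (h : IsGrassmannian w A)
    (hi : IsLeftDescent w i) : StrictMonoOn (sB i * w) (Set.Ioi 0) := by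
  intro x hx y hy hxy
  rw [Set.mem_Ioi] at hx hy
  have hlt := h.strictMonoOn hx hy hxy
  refine (sB_lt_sB_iff (apply_ne_zero hw.odd hx.ne') (apply_ne_zero hw.odd hy.ne') ?_).2 hlt
  intro heq
  have hup := lt_wordLength_mul_signedSwap hw hx.ne' hy.ne' hxy hlt
  rw [mul_signedSwap_eq hw.odd, ← heq] at hup
  have := wordLength_sB_mul_of_isLeftDescent hw hi
  omega

theorem sB_mul (hw : IsSignedPerm N w) (h : IsGrassmannian w A) (hi : IsLeftDescent w i) :
    IsGrassmannian (sB i * w) (lowerPart A i) where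
  strictMonoOn := h.strictMonoOn_sB_mul hw hi
  mem_iff a := by
    obtain ⟨hiA, hiA'⟩ := (h.isLeftDescent_iff hw).1 hi
    have hodd := odd_inv hw.odd
    rw [lowerPart, Finset.mem_erase, Finset.mem_insert, Finset.mem_erase, mul_inv_rev, inv_sB,
      Perm.mul_apply]
    rcases eq_or_ne a 0 with rfl | ha
    · simp [(odd_sB i).map_zero, hodd.map_zero]
    rcases eq_or_ne a i with rfl | hai
    · have hup : sB a a = (a + 1 : ℕ) := by grind [sB_apply, lower, upper]
      rw [hup, ← h.mem_iff]
      tauto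
    rcases eq_or_ne a (i + 1) with rfl | hai'
    · have hdown : sB i (i + 1 : ℕ) = lower i := by grind [sB_apply, lower, upper]
      rw [hdown]
      have hle : 0 ≤ w⁻¹ (lower i) := by
        rw [h.mem_iff] at hiA hiA'
        unfold lower
        split_ifs with hi0
        · subst hi0
          rw [hodd]
          exact neg_nonneg.2 hiA.le
        · exact not_lt.1 hiA'
      exact iff_of_false (fun h' ↦ h'.2.elim hai fun h' ↦ h'.1 rfl) hle.not_gt
    · have hfix : sB i a = a := by grind [sB_apply, lower, upper]
      rw [hfix, ← h.mem_iff]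
      tauto

theorem wordLength_eq_sum (hw : IsSignedPerm N w) (h : IsGrassmannian w A) :
    wordLength w = ∑ a ∈ A, a := by
  revert A
  refine hw.descent_induction (P := fun w ↦ ∀ {A}, IsGrassmannian w A → wordLength w = ∑ a ∈ A, a)
    fun w hw ih A h ↦ ?_
  rcases eq_or_ne w 1 with rfl | hne
  · rw [h.eq_empty, Finset.sum_empty, wordLength_one]
  · obtain ⟨i, hi⟩ := hw.exists_isLeftDescent hne
    obtain ⟨hiA, hiA'⟩ := (h.isLeftDescent_iff hw).1 hi
    rw [← wordLength_sB_mul_of_isLeftDescent hw hi, ← sum_lowerPart hiA hiA',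
      ih i hi (h.sB_mul hw hi)]

theorem numReducedWords_eq (hw : IsSignedPerm N w) (h : IsGrassmannian w A) :
    (numReducedWords w : ℚ) = (wordLength w).factorial * shiftedWeight A := by
  revert A
  refine hw.descent_induction (P := fun w ↦ ∀ {A}, IsGrassmannian w A →
    (numReducedWords w : ℚ) = (wordLength w).factorial * shiftedWeight A) fun w hw ih A h ↦ ?_
  rcases eq_or_ne w 1 with rfl | hne
  · simp [h.eq_empty, shiftedWeight_empty, wordLength_one, numReducedWords_one]
  obtain ⟨j, hj⟩ := hw.exists_isLeftDescent hne
  obtain ⟨L, hL⟩ : ∃ L, wordLength w = L + 1 := ⟨_, (wordLength_sB_mul_of_isLeftDescent hw hj).symm⟩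
  have hterm (i : ℕ) : ((if IsLeftDescent w i then numReducedWords (sB i * w) else 0 : ℕ) : ℚ) =
      L.factorial * if i + 1 ∈ A ∧ i ∉ A then shiftedWeight (lowerPart A i) else 0 := by
    simp only [← h.isLeftDescent_iff hw]
    split_ifs with hi
    · have hlen := wordLength_sB_mul_of_isLeftDescent hw hi
      rw [hL, Nat.add_right_cancel_iff] at hlen
      rw [ih i hi (h.sB_mul hw hi), hlen]
    · simp
  rw [numReducedWords_eq_sum hw hne, Nat.cast_sum, Finset.sum_congr rfl fun i _ ↦ hterm i,
    ← Finset.mul_sum, sum_shiftedWeight_lowerPart (h.zero_notMem hw) fun _ ↦ h.le_of_mem hw,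
    ← h.wordLength_eq_sum hw, hL, Nat.factorial_succ]
  push_cast
  ring

end IsGrassmannian

/-- The odd numbers `2k + 1, 2k + 3, …, 2n - 1`. -/
def oddParts (k n : ℕ) : Finset ℕ := (Finset.Ico k n).image fun j ↦ 2 * j + 1

section oddParts

variable {k n : ℕ}

lemma mem_oddParts {a : ℕ} : a ∈ oddParts k n ↔ 2 * k < a ∧ a ≤ 2 * n ∧ a % 2 = 1 := by
  simp only [oddParts, Finset.mem_image, Finset.mem_Ico]
  exact ⟨by omega, fun h ↦ ⟨a / 2, by omega⟩⟩

lemma oddParts_self (n : ℕ) : oddParts n n = ∅ := by simp [oddParts]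

lemma oddParts_eq_insert (hk : k < n) : oddParts k n = insert (2 * k + 1) (oddParts (k + 1) n) := by
  ext a
  rw [Finset.mem_insert, mem_oddParts, mem_oddParts]
  omega

lemma notMem_oddParts_succ : 2 * k + 1 ∉ oddParts (k + 1) n := by
  rw [mem_oddParts]
  omega

lemma sum_oddParts (hk : k ≤ n) : ∑ a ∈ oddParts k n, a + k ^ 2 = n ^ 2 := by
  induction hk using Nat.decreasingInduction with
  | of_succ k hk ih =>
    rw [oddParts_eq_insert hk, Finset.sum_insert notMem_oddParts_succ]
    linarith
  | self => simp [oddParts_self]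

lemma prod_range_div_mul_factorial (m d : ℕ) :
    (∏ i ∈ Finset.range d, ((i : ℚ) + 1) / (m + i + 1)) * (m + d).factorial =
      d.factorial * m.factorial := by
  induction d with
  | zero => simp
  | succ d ih =>
    have hne : (m : ℚ) + d + 1 ≠ 0 := by positivity
    rw [Finset.prod_range_succ, ← add_assoc, Nat.factorial_succ, Nat.factorial_succ]
    push_cast
    rw [mul_assoc, ← mul_assoc (_ / _), div_mul_cancel₀ _ hne]
    linear_combination ((d : ℚ) + 1) * ih

lemma shiftedWeight_oddParts_mul_factorial (k d : ℕ) :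
    shiftedWeight (oddParts k (k + 1 + d)) * (2 * k + 1 + d).factorial =
      shiftedWeight (oddParts (k + 1) (k + 1 + d)) * d.factorial := by
  have hfactor (i : ℕ) : |((2 * k + 1 : ℕ) : ℚ) - (2 * (k + 1 + i) + 1 : ℕ)| /
      ((2 * k + 1 : ℕ) + (2 * (k + 1 + i) + 1 : ℕ)) = (i + 1) / ((2 * k + 1 : ℕ) + i + 1) := by
    push_cast
    rw [abs_of_nonpos (by linarith)]
    field_simp
    ring
  have hprod : ∏ b ∈ oddParts (k + 1) (k + 1 + d),
      |((2 * k + 1 : ℕ) : ℚ) - b| / ((2 * k + 1 : ℕ) + b) =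
        ∏ i ∈ Finset.range d, ((i : ℚ) + 1) / ((2 * k + 1 : ℕ) + i + 1) := by
    rw [oddParts, Finset.prod_image fun i _ j _ h ↦ by omega, Finset.prod_Ico_eq_prod_range,
      Nat.add_sub_cancel_left]
    exact Finset.prod_congr rfl fun i _ ↦ hfactor i
  have hfactorial := prod_range_div_mul_factorial (2 * k + 1) d
  rw [oddParts_eq_insert (by omega), shiftedWeight_insert notMem_oddParts_succ, hprod, mul_assoc,
    mul_assoc, hfactorial]
  field_simp

lemma shiftedWeight_oddParts_two (n : ℕ) :
    shiftedWeight (oddParts 2 (n + 2)) =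
      shiftedWeight (oddParts 0 (n + 2)) * ((n + 2) ^ 2 * ((n + 2) ^ 2 - 1)) := by
  have h₁ := shiftedWeight_oddParts_mul_factorial 0 (n + 1)
  have h₂ := shiftedWeight_oddParts_mul_factorial 1 n
  rw [show 0 + 1 + (n + 1) = n + 2 by ring, Nat.factorial_succ (n + 1), Nat.cast_mul, ← mul_assoc,
    mul_left_inj' (by positivity)] at h₁
  rw [show 1 + 1 + n = n + 2 by ring, show 2 * 1 + 1 + n = n + 3 by ring, Nat.factorial_succ,
    Nat.factorial_succ, Nat.factorial_succ, ← mul_assoc, ← mul_assoc, Nat.cast_mul, ← mul_assoc,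
    mul_left_inj' (by positivity)] at h₂
  rw [← h₂, ← h₁]
  push_cast
  ring

end oddParts

section partialFlip

variable {n k : ℕ}

lemma exists_isGrassmannian_sameCount_partialFlip (hk : k ≤ n) :
    ∃ w, IsSignedPerm (2 * n) w ∧ SameCount (partialFlip n k) w ∧
      IsGrassmannian w (oddParts k n) := by
  obtain ⟨w, hw⟩ := exists_isStage hk n.zero_le
  refine ⟨w, hw.isSignedPerm, hw.sameCount, hw.strictMonoOn, fun a ↦ ?_⟩
  rcases Nat.eq_zero_or_pos a with rfl | ha
  · rw [Nat.cast_zero, (odd_inv hw.isSignedPerm.odd).map_zero, mem_oddParts]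
    omega
  · rw [hw.inv_neg_iff a (by omega), mem_oddParts]
    omega

lemma wordLength_partialFlip (hk : k ≤ n) : wordLength (partialFlip n k) + k ^ 2 = n ^ 2 := by
  obtain ⟨w, hw, hcount, h⟩ := exists_isGrassmannian_sameCount_partialFlip hk
  rw [hcount.1, h.wordLength_eq_sum hw, sum_oddParts hk]

lemma numReducedWords_partialFlip (hk : k ≤ n) :
    (numReducedWords (partialFlip n k) : ℚ) =
      (wordLength (partialFlip n k)).factorial * shiftedWeight (oddParts k n) := by
  obtain ⟨w, hw, hcount, h⟩ := exists_isGrassmannian_sameCount_partialFlip hk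
  rw [hcount.1, hcount.2, h.numReducedWords_eq hw]

lemma wordLength_w0B (n : ℕ) : wordLength (w0B n) = n ^ 2 := by
  simpa [partialFlip_zero] using wordLength_partialFlip n.zero_le

theorem numReducedWords_w0B (hn : 2 ≤ n) :
    numReducedWords (w0B n) = (n ^ 2 - 2) * (n ^ 2 - 3) * numReducedWords (partialFlip n 2) := by
  obtain ⟨m, rfl⟩ := Nat.exists_eq_add_of_le' hn
  have hlen := wordLength_partialFlip hn
  have h₀ := numReducedWords_partialFlip (m + 2).zero_le
  have h₂ := numReducedWords_partialFlip hn
  set L := wordLength (partialFlip (m + 2) 2)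
  have hsq : ((m : ℚ) + 2) ^ 2 = L + 4 := by exact_mod_cast hlen.symm
  rw [shiftedWeight_oddParts_two, hsq] at h₂
  rw [partialFlip_zero, wordLength_w0B, ← hlen] at h₀
  rw [← hlen, show L + 2 ^ 2 - 2 = L + 2 by omega, show L + 2 ^ 2 - 3 = L + 1 by omega]
  qify
  rw [h₀, h₂]
  simp only [Nat.factorial_succ, Nat.reducePow]
  push_cast
  ring

end partialFlip

section w0B

variable {n : ℕ}

lemma IsSignedPerm.commute_w0B {w : Perm ℤ} (hw : IsSignedPerm n w) : Commute (w0B n) w := by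
  ext x
  rw [Perm.mul_apply, Perm.mul_apply, w0B_apply, w0B_apply]
  rcases le_or_gt x.natAbs n with hx | hx
  · rw [if_pos hx, if_pos (hw.natAbs_apply_le hx), hw.odd]
  · rw [if_neg hx.not_ge, hw.apply_of_natAbs hx, if_neg hx.not_ge]

lemma rotate_one_mem_reducedWords_w0B {l : List ℕ} (hl : l ∈ reducedWords (w0B n)) :
    l.rotate 1 ∈ reducedWords (w0B n) := by
  cases l with
  | nil => exact hl
  | cons i l =>
    have hi := isSignedPerm_sB (lt_of_mem_reducedWords (isSignedPerm_w0B n) hl i List.mem_cons_self)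
    refine ⟨?_, (List.length_rotate _ _).trans hl.2⟩
    rw [List.rotate_cons_succ, List.rotate_zero, wordProd_append, wordProd_cons, wordProd_nil,
      mul_one, ← mul_right_inj (sB i), ← mul_assoc, ← wordProd_cons, hl.1, hi.commute_w0B.eq]

end w0B

lemma is01_iff {l : List ℕ} :
    is01 l = true ↔ ∃ t, l = [0, 1, 0, 1] ++ t ∨ l = [1, 0, 1, 0] ++ t := by
  rcases l with _ | ⟨a, _ | ⟨b, _ | ⟨c, _ | ⟨d, t⟩⟩⟩⟩ <;> simp [is01, and_assoc, exists_or]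

lemma is01_drop_eq_is01_rotate {l : List ℕ} {j : ℕ} (hj : j + 4 ≤ l.length) :
    is01 (l.drop j) = is01 (l.rotate j) := by
  have hlen : 4 ≤ (l.drop j).length := by
    rw [List.length_drop]
    omega
  rw [List.rotate_eq_drop_append_take (by omega)]
  match l.drop j, hlen with
  | _ :: _ :: _ :: _ :: _, _ => rfl

section rotation

variable {L : ℕ} {S : Finset (List ℕ)}

lemma image_rotate_eq (hrot : ∀ l ∈ S, l.rotate 1 ∈ S) (j : ℕ) :
    S.image (fun l ↦ l.rotate j) = S := by
  refine Finset.eq_of_subset_of_card_le (Finset.image_subset_iff.2 ?_)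
    (Finset.card_image_of_injective S (List.rotate_injective j)).ge
  induction j with
  | zero => simp
  | succ j ih =>
    intro l hl
    rw [← List.rotate_rotate]
    exact hrot _ (ih l hl)

lemma card_filter_is01_drop (hlen : ∀ l ∈ S, l.length = L) (hrot : ∀ l ∈ S, l.rotate 1 ∈ S)
    {j : ℕ} (hj : j + 4 ≤ L) :
    (S.filter fun l ↦ is01 (l.drop j) = true).card = (S.filter fun l ↦ is01 l = true).card := by
  conv_rhs => rw [← image_rotate_eq hrot j, Finset.filter_image,
    Finset.card_image_of_injective _ (List.rotate_injective j)]
  congr 1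
  refine Finset.filter_congr fun l hl ↦ ?_
  rw [is01_drop_eq_is01_rotate (hj.trans_eq (hlen l hl).symm)]

/-- Rotating the words moves the occurrences of `0101` and `1010` to the front. -/
theorem sum_m01Count_of_rotate_mem (hlen : ∀ l ∈ S, l.length = L)
    (hrot : ∀ l ∈ S, l.rotate 1 ∈ S) :
    ∑ l ∈ S, m01Count l = (L - 3) * (S.filter fun l ↦ is01 l = true).card := by
  have hcount : ∀ l ∈ S, m01Count l =
      ∑ j ∈ Finset.range (L - 3), if is01 (l.drop j) = true then 1 else 0 := by
    intro l hl
    rw [m01Count, ← Finset.card_filter]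
    congr 1
    ext j
    simp only [Finset.mem_filter, Finset.mem_range, hlen l hl, and_congr_left_iff]
    intro h01
    obtain ⟨t, ht⟩ := is01_iff.1 h01
    have hdrop : 4 ≤ (l.drop j).length := by
      rcases ht with ht | ht <;> rw [ht] <;> simp
    rw [List.length_drop, hlen l hl] at hdrop
    omega
  have hpos : ∀ j ∈ Finset.range (L - 3), (∑ l ∈ S, if is01 (l.drop j) = true then 1 else 0) =
      (S.filter fun l ↦ is01 l = true).card := by
    intro j hj
    rw [Finset.mem_range] at hj
    rw [← Finset.card_filter, card_filter_is01_drop hlen hrot (by omega)]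
  rw [Finset.sum_congr rfl hcount, Finset.sum_comm, Finset.sum_congr rfl hpos, Finset.sum_const,
    Finset.card_range, smul_eq_mul]

end rotation

lemma wordProd_0101 : wordProd [0, 1, 0, 1] = w0B 2 := by
  refine (isSignedPerm_wordProd (by decide)).eq_of_forall_pos (isSignedPerm_w0B 2) fun x hx hx2 ↦ ?_
  interval_cases x <;> decide

lemma wordProd_1010 : wordProd [1, 0, 1, 0] = w0B 2 := by
  refine (isSignedPerm_wordProd (by decide)).eq_of_forall_pos (isSignedPerm_w0B 2) fun x hx hx2 ↦ ?_
  interval_cases x <;> decide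

theorem ncard_is01_reducedWords_w0B {n : ℕ} (hn : 2 ≤ n) :
    {l ∈ reducedWords (w0B n) | is01 l = true}.ncard = 2 * numReducedWords (partialFlip n 2) := by
  have hlen := wordLength_partialFlip hn
  have happend {p : List ℕ} (hp : wordProd p = w0B 2) (hp4 : p.length = 4) (t : List ℕ) :
      p ++ t ∈ reducedWords (w0B n) ↔ t ∈ reducedWords (partialFlip n 2) := by
    rw [append_mem_reducedWords_iff, hp, inv_w0B_mul_w0B hn]
    rw [hp, inv_w0B_mul_w0B hn, wordLength_w0B, hp4]
    omega
  have hunion : {l ∈ reducedWords (w0B n) | is01 l = true} =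
      ([0, 1, 0, 1] ++ ·) '' reducedWords (partialFlip n 2) ∪
        ([1, 0, 1, 0] ++ ·) '' reducedWords (partialFlip n 2) := by
    ext l
    simp only [Set.mem_ofPred_eq, is01_iff, Set.mem_union, Set.mem_image]
    constructor
    · rintro ⟨hl, t, rfl | rfl⟩
      · exact .inl ⟨t, (happend wordProd_0101 rfl t).1 hl, rfl⟩
      · exact .inr ⟨t, (happend wordProd_1010 rfl t).1 hl, rfl⟩
    · rintro (⟨t, ht, rfl⟩ | ⟨t, ht, rfl⟩)
      · exact ⟨(happend wordProd_0101 rfl t).2 ht, t, .inl rfl⟩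
      · exact ⟨(happend wordProd_1010 rfl t).2 ht, t, .inr rfl⟩
  have hfin := finite_reducedWords (isSignedPerm_partialFlip hn)
  rw [hunion, Set.ncard_union_eq _ (hfin.image _) (hfin.image _),
    Set.ncard_image_of_injective _ (List.append_right_injective _),
    Set.ncard_image_of_injective _ (List.append_right_injective _), ← two_mul, numReducedWords]
  rw [Set.disjoint_left]
  rintro _ ⟨t, -, rfl⟩ ⟨t', -, h⟩
  simp at h

end Hyperoctahedral

open Hyperoctahedral

/-- For every `n ≥ 2`, the expected number of `01` moves in a uniformly random reduced
decomposition of the longest element `w₀ᴮ ∈ Bₙ` equals `2/(n² - 2)`; equivalently,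
`(n² - 2) · Σ_{ω ∈ R(w₀ᴮ)} m(ω) = 2 · |R(w₀ᴮ)|`. -/
theorem expected_01_moves_B (n : ℕ) (hn : 2 ≤ n) :
    (n ^ 2 - 2) * ∑ᶠ ω ∈ RSet n (w0B n), m01Count ω
      = 2 * Nat.card ↥(RSet n (w0B n)) := by
  have hfin := finite_reducedWords (isSignedPerm_w0B n)
  have hsum := sum_m01Count_of_rotate_mem (S := hfin.toFinset) (L := n ^ 2)
    (fun l hl ↦ (hfin.mem_toFinset.1 hl).2.trans (wordLength_w0B n))
    fun l hl ↦ hfin.mem_toFinset.2 (rotate_one_mem_reducedWords_w0B (hfin.mem_toFinset.1 hl))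
  have hfront : (hfin.toFinset.filter fun l ↦ is01 l = true).card =
      2 * numReducedWords (partialFlip n 2) := by
    rw [← ncard_is01_reducedWords_w0B hn, ← Set.ncard_coe_finset, Finset.coe_filter]
    simp only [hfin.mem_toFinset]
  rw [rSet_eq_reducedWords (isSignedPerm_w0B n), finsum_mem_eq_finite_toFinset_sum _ hfin, hsum,
    hfront, Nat.card_coe_set_eq, ← numReducedWords, numReducedWords_w0B hn]
  ring
end

section
/- (Reiner) For every integer n ≥ 3, the expected number of Yang–Baxter moves in a uniformly random reduced decomposition of the longest element w_0 ∈ S_n equals 1; equivalently, Σ_{ω ∈ R(w_0)} yb(ω) = |R(w_0)|, where yb(ω) denotes the number of Yang–Baxter moves in ω. -/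
/-- The adjacent transposition `sᵢ = (i, i+1)` of the symmetric group, realized as a
permutation of `ℕ`. -/
def sA (i : ℕ) : Equiv.Perm ℕ := Equiv.swap i (i + 1)

/-- The product `s_{i₁} ⋯ s_{i_ℓ}` corresponding to the word `i₁ ⋯ i_ℓ`. -/
def wordProdA (l : List ℕ) : Equiv.Perm ℕ := (l.map sA).prod

/-- The underlying function of the longest element `w₀ ∈ Sₙ`: `i ↦ n + 1 - i` on
`{1, …, n}`, fixing all other points. -/
def w0AFun (n : ℕ) : ℕ → ℕ := fun i => if 1 ≤ i ∧ i ≤ n then n + 1 - i else i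

lemma w0AFun_involutive (n : ℕ) : Function.Involutive (w0AFun n) := by
  intro i
  unfold w0AFun
  split_ifs <;> omega

/-- The longest element `w₀ ∈ Sₙ`, as a permutation of `ℕ`. -/
def w0A (n : ℕ) : Equiv.Perm ℕ := (w0AFun_involutive n).toPerm

/-- `l` is a reduced decomposition of `w` in `Sₙ`: a word over the alphabet
`{1, …, n-1}` whose product of generators is `w`, of minimal length among all such
words. -/
def IsReducedWordA (n : ℕ) (w : Equiv.Perm ℕ) (l : List ℕ) : Prop :=
  (∀ i ∈ l, 1 ≤ i ∧ i < n) ∧ wordProdA l = w ∧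
    ∀ l' : List ℕ, (∀ i ∈ l', 1 ≤ i ∧ i < n) → wordProdA l' = w → l.length ≤ l'.length

/-- `R(w)`, the set of reduced decompositions of `w` in `Sₙ`. -/
def RSetA (n : ℕ) (w : Equiv.Perm ℕ) : Set (List ℕ) := {l | IsReducedWordA n w l}

/-!
Rotation `i₁ i₂ ⋯ i_ℓ ↦ i₂ ⋯ i_ℓ (n - i₁)` permutes `R(w₀)`, so each of the `N - 2` possible
positions, `N = n (n - 1) / 2`, carries equally many Yang–Baxter moves. The words that begin with
`k (k+1) k` or with `(k+1) k (k+1)` are both counted by `|R(uₖ)|`, where `w₀ = sₖ sₖ₊₁ sₖ uₖ`.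

Both `w₀` and `uₖ` are dominant. For a dominant `w`, the Lascoux–Schützenberger transition
equation shows that `|R(w)|` obeys the recursion for standard Young tableaux whose shape is the
Lehmer code of `w`, so it is given by the Frobenius formula in the beta-numbers of that shape. The
quotient `|R(uₖ)| / |R(w₀)|` becomes a product of two coefficients of `(1 - x)^(-5/2)`, up to a
factor depending only on `n`, and the sum over `k` is a coefficient of `(1 - x)^(-5)`.
-/

namespace YangBaxter

open Finset

variable {n a k : ℕ} {w : Equiv.Perm ℕ} {l : List ℕ}

/-! ### Reduced words and inversions -/

/-- The symmetric group `Sₙ`, realized as the group of permutations of `ℕ` that fix every point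
outside `{1, …, n}`. -/
def symmetricGroup (n : ℕ) : Subgroup (Equiv.Perm ℕ) :=
  fixingSubgroup (Equiv.Perm ℕ) (Set.Icc 1 n)ᶜ

lemma mem_symmetricGroup : w ∈ symmetricGroup n ↔ ∀ x, ¬ (1 ≤ x ∧ x ≤ n) → w x = x := by
  simp [symmetricGroup, mem_fixingSubgroup_iff, not_and]

lemma apply_mem_Icc_iff (hw : w ∈ symmetricGroup n) {x : ℕ} : w x ∈ Icc 1 n ↔ x ∈ Icc 1 n := by
  rw [mem_symmetricGroup] at hw
  simp only [mem_Icc]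
  refine ⟨fun h => ?_, fun h => ?_⟩ <;> by_contra hx
  · exact hx (by rwa [hw x hx] at h)
  · exact hx (by rwa [← w.injective (hw _ hx)] at h)

lemma mem_Icc_of_apply_ne (hw : w ∈ symmetricGroup n) {x : ℕ} (hx : w x ≠ x) : x ∈ Icc 1 n := by
  rw [mem_Icc]
  exact not_imp_comm.1 (mem_symmetricGroup.1 hw x) hx

lemma swap_mem_symmetricGroup {i j : ℕ} (hi : i ∈ Icc 1 n) (hj : j ∈ Icc 1 n) :
    Equiv.swap i j ∈ symmetricGroup n := by
  rw [mem_Icc] at hi hj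
  exact mem_symmetricGroup.2 fun x hx =>
    Equiv.swap_apply_of_ne_of_ne (by rintro rfl; exact hx hi) (by rintro rfl; exact hx hj)

lemma sA_mem_symmetricGroup (ha : 1 ≤ a ∧ a < n) : sA a ∈ symmetricGroup n :=
  swap_mem_symmetricGroup (mem_Icc.2 ⟨ha.1, ha.2.le⟩) (mem_Icc.2 ⟨by lia, ha.2⟩)

lemma sA_apply (a x : ℕ) :
    sA a x = if x = a then a + 1 else if x = a + 1 then a else x :=
  Equiv.swap_apply_def a (a + 1) x

@[simp]
lemma sA_inv (a : ℕ) : (sA a)⁻¹ = sA a := Equiv.swap_inv _ _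

@[simp]
lemma sA_mul_self_mul (a : ℕ) (w : Equiv.Perm ℕ) : sA a * (sA a * w) = w :=
  Equiv.swap_mul_self_mul _ _ w

lemma bounds_of_inversion (hw : w ∈ symmetricGroup n) {i j : ℕ} (hij : i < j) (h : w j < w i) :
    1 ≤ i ∧ j ≤ n := by
  constructor <;> by_contra hn
  · obtain rfl : i = 0 := by lia
    exact not_lt_bot (mem_symmetricGroup.1 hw 0 (by lia) ▸ h)
  · have hj := mem_symmetricGroup.1 hw j (by lia)
    have hi := (apply_mem_Icc_iff hw).2 (mem_Icc_of_apply_ne hw (x := i) (by lia))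
    rw [mem_Icc] at hi
    lia

lemma mem_Ico_of_descent (hw : w ∈ symmetricGroup n) (hk : w (k + 1) < w k) : k ∈ Ico 1 n :=
  mem_Ico.2 (bounds_of_inversion hw k.lt_succ_self hk)

lemma mem_Ico_of_left_descent (hw : w ∈ symmetricGroup n) (ha : w.symm (a + 1) < w.symm a) :
    a ∈ Ico 1 n :=
  mem_Ico_of_descent (inv_mem hw) ha

lemma exists_descent (hw : w ≠ 1) : ∃ k, w (k + 1) < w k := by
  by_contra! h
  have hmono : StrictMono w :=
    strictMono_nat_of_lt_succ fun k => (h k).lt_of_ne (w.injective.ne k.lt_succ_self.ne)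
  have hmono' : StrictMono w.symm := fun x y hxy => hmono.lt_iff_lt.1 (by simpa using hxy)
  refine hw (Equiv.ext fun x => le_antisymm ?_ hmono.le_apply)
  simpa using hmono'.le_apply (x := w x)

/-- The Lehmer code of a permutation: `code w i` is the number of inversions of `w` whose left
position is `i`. -/
noncomputable def code (w : Equiv.Perm ℕ) (i : ℕ) : ℕ := {j | i < j ∧ w j < w i}.ncard

lemma finite_setOf_apply_lt (w : Equiv.Perm ℕ) (i m : ℕ) : {j | i < j ∧ w j < m}.Finite :=
  ((Set.finite_Iio m).preimage w.injective.injOn).subset fun _ hj => hj.2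

@[simp]
lemma code_one : code 1 = 0 := by
  ext i
  have : {j | i < j ∧ j < i} = ∅ := by ext; simp; lia
  simp [code, this]

/-- The Coxeter length of `w ∈ Sₙ`, computed as the sum of its Lehmer code. -/
noncomputable def invCount (n : ℕ) (w : Equiv.Perm ℕ) : ℕ := ∑ i ∈ Icc 1 n, code w i

lemma invCount_one : invCount n 1 = 0 := by simp [invCount]

lemma invCount_eq_add_one {u : Equiv.Perm ℕ} {i : ℕ} (hi : i ∈ Icc 1 n)
    (h : code w = code u + Pi.single i 1) : invCount n w = invCount n u + 1 := by
  simp [invCount, h, sum_add_distrib, hi]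

lemma code_eq_of_left_descent (ha : w.symm (a + 1) < w.symm a) :
    code w = code (sA a * w) + Pi.single (w.symm (a + 1)) 1 := by
  obtain ⟨p, rfl⟩ : ∃ p, a = w p := ⟨w.symm a, by simp⟩
  obtain ⟨q, hq⟩ : ∃ q, w q = w p + 1 := w.surjective _
  rw [← hq] at ha ⊢
  simp only [Equiv.symm_apply_apply] at ha ⊢
  have hsA (x : ℕ) : (sA (w p) * w) x = if x = p then w q else if x = q then w p else w x := by
    simp only [Equiv.Perm.mul_apply, sA_apply, ← hq, w.injective.eq_iff]
  ext i
  rw [code, Pi.add_apply]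
  rcases eq_or_ne i q with rfl | hi
  · have hset : {j | i < j ∧ w j < w i} = insert p {j | i < j ∧ (sA (w p) * w) j < w p} := by
      ext j
      have := w.injective.eq_iff (a := j) (b := p)
      simp only [hsA, Set.mem_ofPred_eq, Set.mem_insert_iff]
      grind
    rw [hset, Set.ncard_insert_of_notMem (by simp [hsA, hq]) (finite_setOf_apply_lt _ _ _)]
    simp [code, hsA, ha.ne]
  · rw [Pi.single_eq_of_ne hi, add_zero, code]
    congr 1
    ext j
    have := w.injective.eq_iff (a := j) (b := p)
    have := w.injective.eq_iff (a := j) (b := q)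
    have := w.injective.eq_iff (a := i) (b := p)
    have := w.injective.eq_iff (a := i) (b := q)
    simp only [hsA, Set.mem_ofPred_eq]
    grind

lemma invCount_of_left_descent (hw : w ∈ symmetricGroup n) (ha : w.symm (a + 1) < w.symm a) :
    invCount n w = invCount n (sA a * w) + 1 := by
  have hmem := mem_Ico.1 (mem_Ico_of_left_descent hw ha)
  exact invCount_eq_add_one
    ((apply_mem_Icc_iff (inv_mem hw)).2 (mem_Icc.2 ⟨by lia, hmem.2⟩)) (code_eq_of_left_descent ha)

lemma sA_mul_mem_of_left_descent (hw : w ∈ symmetricGroup n) (ha : w.symm (a + 1) < w.symm a) :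
    sA a * w ∈ symmetricGroup n :=
  mul_mem (sA_mem_symmetricGroup (mem_Ico.1 (mem_Ico_of_left_descent hw ha))) hw

lemma symm_sA_mul_apply (a x : ℕ) (w : Equiv.Perm ℕ) :
    (sA a * w).symm x = w.symm (sA a x) := rfl

lemma left_descent_sA_mul (ha : ¬ w.symm (a + 1) < w.symm a) :
    (sA a * w).symm (a + 1) < (sA a * w).symm a := by
  have hne : w.symm (a + 1) ≠ w.symm a := w.symm.injective.ne a.lt_succ_self.ne'
  simp only [symm_sA_mul_apply, sA_apply]
  grind

lemma invCount_of_not_left_descent (hw : w ∈ symmetricGroup n) (ha : 1 ≤ a ∧ a < n)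
    (h : ¬ w.symm (a + 1) < w.symm a) : invCount n (sA a * w) = invCount n w + 1 := by
  simpa using invCount_of_left_descent (mul_mem (sA_mem_symmetricGroup ha) hw)
    (left_descent_sA_mul h)

@[simp]
lemma wordProdA_cons : wordProdA (a :: l) = sA a * wordProdA l := by simp [wordProdA]

lemma wordProdA_reverse : wordProdA l.reverse = (wordProdA l)⁻¹ := by
  simp [wordProdA, List.prod_inv_reverse, Function.comp_def]

lemma wordProdA_mem (hl : ∀ i ∈ l, 1 ≤ i ∧ i < n) : wordProdA l ∈ symmetricGroup n := by
  refine list_prod_mem fun g hg => ?_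
  obtain ⟨i, hi, rfl⟩ := List.mem_map.1 hg
  exact sA_mem_symmetricGroup (hl i hi)

lemma invCount_wordProdA_le (hl : ∀ i ∈ l, 1 ≤ i ∧ i < n) :
    invCount n (wordProdA l) ≤ l.length := by
  induction l with
  | nil => simp [wordProdA, invCount_one]
  | cons a l ih =>
    obtain ⟨ha, hl⟩ := List.forall_mem_cons.1 hl
    have hw := wordProdA_mem hl
    rw [wordProdA_cons, List.length_cons]
    by_cases h : (wordProdA l).symm (a + 1) < (wordProdA l).symm a
    · have := invCount_of_left_descent hw h
      have := ih hl
      lia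
    · have := invCount_of_not_left_descent hw ha h
      have := ih hl
      lia

lemma exists_left_descent (hw : w ≠ 1) : ∃ a, w.symm (a + 1) < w.symm a :=
  exists_descent (inv_ne_one.2 hw)

@[elab_as_elim]
lemma symmetricGroup_induction {motive : (w : Equiv.Perm ℕ) → w ∈ symmetricGroup n → Prop}
    (step : ∀ w (hw : w ∈ symmetricGroup n), (∀ a (ha : w.symm (a + 1) < w.symm a),
      motive (sA a * w) (sA_mul_mem_of_left_descent hw ha)) → motive w hw)
    (hw : w ∈ symmetricGroup n) : motive w hw := by
  induction h : invCount n w using Nat.strong_induction_on generalizing w with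
  | _ m ih =>
    refine step w hw fun a ha => ih _ ?_ (sA_mul_mem_of_left_descent hw ha) rfl
    have := invCount_of_left_descent hw ha
    lia

lemma exists_word_length_eq_invCount (hw : w ∈ symmetricGroup n) :
    ∃ l : List ℕ, (∀ i ∈ l, 1 ≤ i ∧ i < n) ∧ wordProdA l = w ∧ l.length = invCount n w := by
  induction hw using symmetricGroup_induction with
  | step w hw ih =>
    rcases eq_or_ne w 1 with rfl | hne
    · exact ⟨[], by simp, rfl, by simp [invCount_one]⟩
    obtain ⟨a, ha⟩ := exists_left_descent hne
    obtain ⟨l, hl, hprod, hlen⟩ := ih a ha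
    refine ⟨a :: l, List.forall_mem_cons.2 ⟨?_, hl⟩, by simp [hprod], ?_⟩
    · exact mem_Ico.1 (mem_Ico_of_left_descent hw ha)
    · rw [List.length_cons, hlen, invCount_of_left_descent hw ha]

lemma mem_RSetA_iff (hw : w ∈ symmetricGroup n) :
    l ∈ RSetA n w ↔ (∀ i ∈ l, 1 ≤ i ∧ i < n) ∧ wordProdA l = w ∧ l.length = invCount n w := by
  refine and_congr_right fun hl => and_congr_right fun hprod => ⟨fun hmin => ?_, ?_⟩
  · obtain ⟨l', hl', hprod', hlen'⟩ := exists_word_length_eq_invCount hw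
    exact le_antisymm (hlen' ▸ hmin l' hl' hprod') (hprod ▸ invCount_wordProdA_le hl)
  · rintro hlen l' hl' rfl
    exact hlen ▸ invCount_wordProdA_le hl'

lemma nil_mem_RSetA_iff : [] ∈ RSetA n w ↔ w = 1 := by
  simp [RSetA, IsReducedWordA, wordProdA, eq_comm]

lemma cons_mem_RSetA_iff (hw : w ∈ symmetricGroup n) :
    a :: l ∈ RSetA n w ↔ w.symm (a + 1) < w.symm a ∧ l ∈ RSetA n (sA a * w) := by
  rw [mem_RSetA_iff hw, List.forall_mem_cons, wordProdA_cons, List.length_cons]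
  constructor
  · rintro ⟨⟨ha, hl⟩, rfl, hlen⟩
    have hdesc : (sA a * wordProdA l).symm (a + 1) < (sA a * wordProdA l).symm a := by
      by_contra h
      have := invCount_of_not_left_descent hw ha h
      have := invCount_wordProdA_le hl
      rw [sA_mul_self_mul] at *
      lia
    have := invCount_of_left_descent hw hdesc
    refine ⟨hdesc, (mem_RSetA_iff (sA_mul_mem_of_left_descent hw hdesc)).2 ⟨hl, ?_, by lia⟩⟩
    rw [sA_mul_self_mul]
  · rintro ⟨ha, h⟩
    obtain ⟨hl, hprod, hlen⟩ := (mem_RSetA_iff (sA_mul_mem_of_left_descent hw ha)).1 h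
    refine ⟨⟨mem_Ico.1 (mem_Ico_of_left_descent hw ha), hl⟩, by simp [hprod], ?_⟩
    rw [hlen, invCount_of_left_descent hw ha]

lemma reverse_mem_RSetA_inv_iff : l.reverse ∈ RSetA n w⁻¹ ↔ l ∈ RSetA n w := by
  simp only [RSetA, IsReducedWordA, Set.mem_ofPred_eq, List.mem_reverse, wordProdA_reverse,
    inv_inj, List.length_reverse]
  refine and_congr_right fun _ => and_congr_right fun _ => ?_
  refine ⟨fun h l' hl' hprod => ?_, fun h l' hl' hprod => ?_⟩ <;>
    simpa using h l'.reverse (by simpa using hl') (by simp [wordProdA_reverse, hprod])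

lemma finite_RSetA (n : ℕ) (w : Equiv.Perm ℕ) : (RSetA n w).Finite := by
  rcases (RSetA n w).eq_empty_or_nonempty with h | ⟨l₀, hl₀⟩
  · simp [h]
  refine ((List.finite_length_eq (Fin n) l₀.length).image (List.map (↑))).subset fun l hl => ?_
  refine ⟨l.pmap Fin.mk fun i hi => (hl.1 i hi).2, ?_, by simp [List.map_pmap]⟩
  simpa using le_antisymm (hl.2.2 l₀ hl₀.1 hl₀.2.1) (hl₀.2.2 l hl.1 hl.2.1)

/-- The set `R(w)` of reduced decompositions of `w`, as a finset. -/
noncomputable def reducedWords (n : ℕ) (w : Equiv.Perm ℕ) : Finset (List ℕ) :=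
  (finite_RSetA n w).toFinset

@[simp]
lemma mem_reducedWords : l ∈ reducedWords n w ↔ l ∈ RSetA n w := Set.Finite.mem_toFinset _

lemma card_reducedWords_one : #(reducedWords n 1) = 1 := by
  rw [card_eq_one]
  refine ⟨[], ext fun l => ?_⟩
  rw [mem_reducedWords, mem_RSetA_iff (one_mem _), invCount_one, mem_singleton,
    List.length_eq_zero_iff]
  refine ⟨fun h => h.2.2, ?_⟩
  rintro rfl
  simp [wordProdA]

lemma card_reducedWords_inv : #(reducedWords n w⁻¹) = #(reducedWords n w) := by
  refine (card_nbij' List.reverse List.reverse ?_ ?_ ?_ ?_).symm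
  · simp [Set.MapsTo, reverse_mem_RSetA_inv_iff]
  · simp [Set.MapsTo, ← reverse_mem_RSetA_inv_iff (w := w)]
  all_goals simp [Set.LeftInvOn]

open Classical in
lemma card_reducedWords_eq_sum_left (hw : w ∈ symmetricGroup n) (hne : w ≠ 1) :
    #(reducedWords n w) =
      ∑ a ∈ Ico 1 n with w.symm (a + 1) < w.symm a, #(reducedWords n (sA a * w)) := by
  have : reducedWords n w = {a ∈ Ico 1 n | w.symm (a + 1) < w.symm a}.biUnion fun a =>
      (reducedWords n (sA a * w)).map ⟨List.cons a, List.cons_injective⟩ := by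
    ext l
    rcases l with _ | ⟨a, l⟩
    · simp [nil_mem_RSetA_iff, hne]
    · have hmem : w.symm (a + 1) < w.symm a → 1 ≤ a ∧ a < n := fun h =>
        mem_Ico.1 (mem_Ico_of_left_descent hw h)
      simpa [cons_mem_RSetA_iff hw] using by tauto
  rw [this, card_biUnion]
  · simp
  · intro a _ b _ hab
    simp [disjoint_left, hab.symm]

open Classical in
lemma card_reducedWords_eq_sum_right (hw : w ∈ symmetricGroup n) (hne : w ≠ 1) :
    #(reducedWords n w) = ∑ k ∈ Ico 1 n with w (k + 1) < w k, #(reducedWords n (w * sA k)) := by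
  rw [← card_reducedWords_inv, card_reducedWords_eq_sum_left (inv_mem hw) (inv_ne_one.2 hne)]
  refine sum_congr rfl fun k _ => ?_
  rw [← card_reducedWords_inv, mul_inv_rev, sA_inv, inv_inv]

/-! ### Transitions -/

/-- `v ⋖ v · (i j)` in the Bruhat order, where `i < j`: right multiplication by `(i j)` raises the
length by exactly one. -/
def Cover (v : Equiv.Perm ℕ) (i j : ℕ) : Prop :=
  i < j ∧ v i < v j ∧ ∀ c, i < c → c < j → ¬ (v i < v c ∧ v c < v j)

lemma cover_iff_of_apply_eq_succ {v : Equiv.Perm ℕ} {i j : ℕ} (h : v j = v i + 1) :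
    Cover v i j ↔ i < j :=
  ⟨fun hc => hc.1, fun hij => ⟨hij, by lia, fun c _ _ => by lia⟩⟩

lemma not_cover_of_apply_lt {v : Equiv.Perm ℕ} {i j : ℕ} (h : v j < v i) : ¬ Cover v i j :=
  fun hc => hc.2.1.not_gt h

lemma symm_mul_swap_apply (v : Equiv.Perm ℕ) (i j x : ℕ) :
    (v * Equiv.swap i j).symm x = Equiv.swap i j (v.symm x) := rfl

lemma cover_and_left_descent_iff {v : Equiv.Perm ℕ} {i j : ℕ} (h : ¬ (v i = a ∧ v j = a + 1))
    (h' : ¬ (v i = a + 1 ∧ v j = a)) :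
    Cover v i j ∧ (v * Equiv.swap i j).symm (a + 1) < (v * Equiv.swap i j).symm a ↔
      v.symm (a + 1) < v.symm a ∧ Cover (sA a * v) i j := by
  obtain ⟨p, rfl⟩ := v.surjective a
  obtain ⟨q, hq⟩ := v.surjective (v p + 1)
  have hpq : p ≠ q := by rintro rfl; lia
  have hu (x : ℕ) : (sA (v p) * v) x = if x = p then v q else if x = q then v p else v x := by
    simp only [Equiv.Perm.mul_apply, sA_apply, ← hq, v.injective.eq_iff]
  have hvp (x : ℕ) : v x = v p ↔ x = p := v.injective.eq_iff
  have hvq (x : ℕ) : v x = v q ↔ x = q := v.injective.eq_iff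
  have hup : (sA (v p) * v) p = v q := by simp [hu]
  have huq : (sA (v p) * v) q = v p := by simp [hu, hpq.symm]
  have huc (x : ℕ) (hp : x ≠ p) (hq : x ≠ q) : (sA (v p) * v) x = v x := by simp [hu, hp, hq]
  simp only [symm_mul_swap_apply, Equiv.symm_apply_apply, ← hq, v.injective.eq_iff] at h h' ⊢
  generalize sA (v p) * v = u at *
  clear hu
  simp only [Cover, Equiv.swap_apply_def]
  constructor
  · rintro ⟨⟨hij, hlt, hc⟩, hs⟩
    have hcp := hc p
    have hcq := hc q
    have hqp : q < p := by grind
    exact ⟨hqp, hij, by grind, fun c hc₁ hc₂ => by have := hc c hc₁ hc₂; grind⟩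
  · rintro ⟨hqp, hij, hlt, hc⟩
    have hcp := hc p
    have hcq := hc q
    exact ⟨⟨hij, by grind, fun c hc₁ hc₂ => by have := hc c hc₁ hc₂; grind⟩, by grind⟩

lemma sA_mul_mul_swap {v : Equiv.Perm ℕ} {i j : ℕ} (hi : v i = a) (hj : v j = a + 1) :
    sA a * (v * Equiv.swap i j) = v := by
  rw [sA, ← hj, ← hi, ← mul_assoc, ← Equiv.mul_swap_eq_swap_mul, mul_assoc, Equiv.swap_mul_self,
    mul_one]

open Classical in
/-- The sign with which `v · (r j)` enters the transition identity: `1` if it covers `v` and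
`r < j`, `-1` if it covers `v` and `j < r`, and `0` if it does not cover `v`. -/
noncomputable def coverSign (v : Equiv.Perm ℕ) (r j : ℕ) : ℤ :=
  (if Cover v r j then 1 else 0) - (if Cover v j r then 1 else 0)

lemma coverSign_mul_ite_left_descent (v : Equiv.Perm ℕ) (r j a : ℕ) (H : Equiv.Perm ℕ → ℤ) :
    (coverSign v r j * if (v * Equiv.swap r j).symm (a + 1) < (v * Equiv.swap r j).symm a then
        H (sA a * (v * Equiv.swap r j)) else 0) =
      (if v.symm (a + 1) < v.symm a then
        coverSign (sA a * v) r j * H (sA a * v * Equiv.swap r j) else 0) +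
      (if v r = a ∧ v j = a + 1 then H v else 0) - (if v j = a ∧ v r = a + 1 then H v else 0) := by
  wlog hrj : ¬ (v j = a ∧ v r = a + 1) generalizing r j with hsymm
  · have h := hsymm j r (by lia)
    have hsign (u : Equiv.Perm ℕ) : coverSign u r j = -coverSign u j r := by simp [coverSign]
    rw [Equiv.swap_comm, hsign, hsign, neg_mul, h]
    split_ifs <;> ring
  by_cases hjr : v r = a ∧ v j = a + 1
  · obtain ⟨rfl, hj⟩ := hjr
    have hne : r ≠ j := by rintro rfl; lia
    have hr : (sA (v r) * v) r = v r + 1 := by simp [sA]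
    have hj' : (sA (v r) * v) j = v r := by simp [sA, hj]
    have hsymm : v.symm (v r + 1) = j := by simp [← hj]
    rw [← mul_assoc, mul_assoc (sA _), sA_mul_mul_swap rfl hj]
    simp only [coverSign, symm_mul_swap_apply, hsymm, Equiv.symm_apply_apply,
      Equiv.swap_apply_left, Equiv.swap_apply_right, cover_iff_of_apply_eq_succ hj,
      not_cover_of_apply_lt (v := v) (i := j) (j := r) (by lia),
      not_cover_of_apply_lt (v := sA (v r) * v) (i := r) (j := j) (by lia),
      cover_iff_of_apply_eq_succ (v := sA (v r) * v) (i := j) (j := r) (by lia), hj]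
    rcases hne.lt_or_gt with h | h <;> simp [h, h.not_gt]
  · have h₁ := cover_and_left_descent_iff hjr (by lia)
    have h₂ := cover_and_left_descent_iff hrj (by lia)
    rw [Equiv.swap_comm] at h₂
    simp only [coverSign, if_neg hrj, if_neg hjr, ← mul_assoc] at *
    split_ifs <;> simp_all

lemma sum_ite_apply_eq {v : Equiv.Perm ℕ} (hv : v ∈ symmetricGroup n) {m : ℕ} (hm : m ∈ Icc 1 n)
    (x : ℤ) : ∑ j ∈ Icc 1 n, (if v j = m then x else 0) = x := by
  have hmem : v.symm m ∈ Icc 1 n := (apply_mem_Icc_iff (inv_mem hv)).2 hm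
  simp_rw [← Equiv.eq_symm_apply]
  simp [hmem]

lemma mul_swap_ne_one_of_cover {v : Equiv.Perm ℕ} {i j : ℕ} (h : Cover v i j) :
    v * Equiv.swap i j ≠ 1 := by
  intro h1
  have hi : (v * Equiv.swap i j) i = i := by simp [h1]
  have hj : (v * Equiv.swap i j) j = j := by simp [h1]
  simp only [Equiv.Perm.mul_apply, Equiv.swap_apply_left, Equiv.swap_apply_right] at hi hj
  have := h.1
  have := h.2.1
  lia

open Classical in
lemma coverSign_mul_card_reducedWords {v : Equiv.Perm ℕ} (hv : v ∈ symmetricGroup n) {r j : ℕ}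
    (hr : r ∈ Icc 1 n) (hj : j ∈ Icc 1 n) :
    coverSign v r j * (#(reducedWords n (v * Equiv.swap r j)) : ℤ) =
      ∑ a ∈ Ico 1 n,
        (coverSign v r j * if (v * Equiv.swap r j).symm (a + 1) < (v * Equiv.swap r j).symm a then
          (#(reducedWords n (sA a * (v * Equiv.swap r j))) : ℤ) else 0) := by
  by_cases h : Cover v r j ∨ Cover v j r
  · have hne : v * Equiv.swap r j ≠ 1 := by
      rcases h with h | h
      · exact mul_swap_ne_one_of_cover h
      · exact Equiv.swap_comm r j ▸ mul_swap_ne_one_of_cover h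
    rw [card_reducedWords_eq_sum_left (mul_mem hv (swap_mem_symmetricGroup hr hj)) hne,
      ← mul_sum, sum_filter]
    push_cast
    rfl
  · simp only [not_or] at h
    simp [coverSign, h]

/-- Lascoux and Schützenberger's transition: the numbers of reduced decompositions of the covers
`v · (r j)` with `j` to the right and to the left of `r` balance. The points `i` and `k` keep
all these covers in `Sₙ`. -/
theorem sum_coverSign_mul_card_reducedWords {v : Equiv.Perm ℕ} (hv : v ∈ symmetricGroup n)
    {i r k : ℕ} (hi : 1 ≤ i) (hir : i < r) (hrk : r < k) (hk : k ≤ n) (hvi : v i < v r)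
    (hvk : v r < v k) :
    ∑ j ∈ Icc 1 n, coverSign v r j * (#(reducedWords n (v * Equiv.swap r j)) : ℤ) = 0 := by
  induction hv using symmetricGroup_induction with
  | step v hv ih =>
  have hr : r ∈ Icc 1 n := mem_Icc.2 ⟨by lia, by lia⟩
  rw [sum_congr rfl fun j hj => coverSign_mul_card_reducedWords hv hr hj, sum_comm]
  simp_rw [coverSign_mul_ite_left_descent v r _ _ fun u => (#(reducedWords n u) : ℤ),
    sum_sub_distrib, sum_add_distrib]
  have hdesc (a : ℕ) (_ : a ∈ Ico 1 n) : ∑ j ∈ Icc 1 n, (if v.symm (a + 1) < v.symm a then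
      coverSign (sA a * v) r j * (#(reducedWords n (sA a * v * Equiv.swap r j)) : ℤ)
        else 0) = 0 := by
    split_ifs with ha
    · have hlt {x y : ℕ} (hxy : x < y) (hv : v x < v y) : (sA a * v) x < (sA a * v) y := by
        simp only [Equiv.Perm.mul_apply, sA_apply]
        grind
      exact ih a ha (hlt hir hvi) (hlt hrk hvk)
    · exact sum_const_zero
  have hv₁ := mem_Icc.1 ((apply_mem_Icc_iff hv).2 (mem_Icc.2 ⟨hi, by lia⟩))
  have hv₂ := mem_Icc.1 ((apply_mem_Icc_iff hv).2 (mem_Icc.2 ⟨by lia, hk⟩))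
  have hup : ∑ a ∈ Ico 1 n, ∑ j ∈ Icc 1 n,
      (if v r = a ∧ v j = a + 1 then (#(reducedWords n v) : ℤ) else 0) = #(reducedWords n v) := by
    rw [sum_eq_single_of_mem (v r) (mem_Ico.2 ⟨by lia, by lia⟩)
      fun a _ ha => sum_eq_zero fun j _ => if_neg fun h => ha h.1.symm]
    simpa using sum_ite_apply_eq hv (mem_Icc.2 ⟨by lia, by lia⟩) _
  have hdown : ∑ a ∈ Ico 1 n, ∑ j ∈ Icc 1 n,
      (if v j = a ∧ v r = a + 1 then (#(reducedWords n v) : ℤ) else 0) = #(reducedWords n v) := by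
    rw [sum_eq_single_of_mem (v r - 1) (mem_Ico.2 ⟨by lia, by lia⟩)
      fun a _ ha => sum_eq_zero fun j _ => if_neg fun h => ha (by lia)]
    simpa [Nat.sub_add_cancel (show 1 ≤ v r by lia)] using
      sum_ite_apply_eq hv (m := v r - 1) (mem_Icc.2 ⟨by lia, by lia⟩) _
  rw [sum_eq_zero hdesc, hup, hdown]
  ring

lemma card_reducedWords_mul_swap_eq_of_unique_covers {v : Equiv.Perm ℕ}
    (hv : v ∈ symmetricGroup n) {i r j : ℕ} (hi : 1 ≤ i) (hj : j ≤ n) (hir : Cover v i r)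
    (hrj : Cover v r j) (hi_unique : ∀ c, 1 ≤ c → Cover v c r → c = i)
    (hj_unique : ∀ c, Cover v r c → c = j) :
    #(reducedWords n (v * Equiv.swap r j)) = #(reducedWords n (v * Equiv.swap i r)) := by
  have hi' := hir.1
  have hj' := hrj.1
  have hne : i ≠ j := by lia
  have hsign : ∀ c ∈ Icc 1 n, c ∉ ({i, j} : Finset ℕ) → coverSign v r c = 0 := by
    intro c hc hcij
    rw [mem_insert, mem_singleton, not_or] at hcij
    simp [coverSign, mt (hi_unique c (mem_Icc.1 hc).1) hcij.1, mt (hj_unique c) hcij.2]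
  have hsub : {i, j} ⊆ Icc 1 n := by
    intro c
    simp only [mem_insert, mem_singleton, mem_Icc]
    lia
  have hsum := sum_coverSign_mul_card_reducedWords hv hi hi' hj' hj hir.2.1 hrj.2.1
  rw [← sum_subset hsub fun c hc hcij => by rw [hsign c hc hcij, zero_mul], sum_pair hne] at hsum
  have hri : ¬ Cover v r i := fun h => h.1.not_gt hi'
  have hjr : ¬ Cover v j r := fun h => h.1.not_gt hj'
  simp only [coverSign, hir, hrj, hri, hjr, if_true, if_false, Equiv.swap_comm r i] at hsum
  lia

/-! ### Dominant permutations -/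

/-- A dominant permutation: its Lehmer code, read from position `1`, is a partition. -/
def IsDominant (w : Equiv.Perm ℕ) : Prop := ∀ k, 1 ≤ k → code w (k + 1) ≤ code w k

lemma code_succ_lt_of_descent (hk : w (k + 1) < w k) : code w (k + 1) < code w k := by
  refine Set.ncard_lt_ncard ⟨?_, fun h => ?_⟩ (finite_setOf_apply_lt _ _ _)
  · exact fun x hx => ⟨by have := hx.1; lia, hx.2.trans hk⟩
  · exact (h ⟨k.lt_succ_self, hk⟩ : k + 1 < k + 1 ∧ _).1.false

lemma code_le_code_succ_of_not_descent (hk : ¬ w (k + 1) < w k) :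
    code w k ≤ code w (k + 1) := by
  refine Set.ncard_le_ncard (fun x hx => ?_) (finite_setOf_apply_lt _ _ _)
  obtain ⟨hkx, hlt⟩ : k < x ∧ w x < w k := hx
  have hne : x ≠ k + 1 := by rintro rfl; exact hk hlt
  exact ⟨by lia, by lia⟩

lemma code_lt_code_succ_of_lt_lt {c : ℕ} (hkc : k + 1 < c) (h₁ : w k < w c)
    (h₂ : w c < w (k + 1)) : code w k < code w (k + 1) := by
  refine Set.ncard_lt_ncard ⟨fun x hx => ?_, fun h => ?_⟩ (finite_setOf_apply_lt _ _ _)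
  · obtain ⟨hkx, hlt⟩ : k < x ∧ w x < w k := hx
    have hne : x ≠ k + 1 := by rintro rfl; lia
    exact ⟨by lia, by lia⟩
  · exact h₁.not_gt (h ⟨hkc, h₂⟩ : k < c ∧ w c < w k).2

namespace IsDominant

lemma descent_iff (hw : IsDominant w) (hk : 1 ≤ k) :
    w (k + 1) < w k ↔ code w (k + 1) ≠ code w k :=
  ⟨fun h => (code_succ_lt_of_descent h).ne,
    not_imp_comm.1 fun h => (hw k hk).antisymm (code_le_code_succ_of_not_descent h)⟩

lemma avoids_132 (hw : IsDominant w) {a b c : ℕ} (ha : 1 ≤ a) (hab : a < b) (hbc : b < c)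
    (hac : w a < w c) : ¬ w c < w b := by
  suffices ∀ t, a ≤ t → t < c → w t < w c from (this b hab.le hbc).not_gt
  intro t hat
  induction t, hat using Nat.le_induction with
  | base => exact fun _ => hac
  | succ t hat ih =>
    intro htc
    by_contra h
    have hne : w (t + 1) ≠ w c := w.injective.ne htc.ne
    exact (hw t (by lia)).not_gt (code_lt_code_succ_of_lt_lt htc (ih (by lia)) (by lia))

end IsDominant

/-- `j` is the position to the right of `k` holding the largest value below `w k`. -/
def IsMaxBelow (w : Equiv.Perm ℕ) (k j : ℕ) : Prop :=
  k < j ∧ w j < w k ∧ ∀ x, k < x → w x < w k → w x ≤ w j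

lemma exists_isMaxBelow_of_descent (hk : w (k + 1) < w k) : ∃ j, IsMaxBelow w k j := by
  obtain ⟨j, hj, hmax⟩ := Set.exists_max_image _ w (finite_setOf_apply_lt w k (w k))
    ⟨k + 1, k.lt_succ_self, hk⟩
  exact ⟨j, hj.1, hj.2, fun x hkx hlt => hmax x ⟨hkx, hlt⟩⟩

lemma IsMaxBelow.code_eq {j : ℕ} (h : IsMaxBelow w k j) :
    code w = code (w * Equiv.swap k j) + Pi.single k 1 := by
  obtain ⟨hkj, hlt, hmax⟩ := h
  have hu (x : ℕ) : (w * Equiv.swap k j) x = if x = k then w j else if x = j then w k else w x := by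
    simp only [Equiv.Perm.mul_apply, Equiv.swap_apply_def]
    split_ifs <;> rfl
  have hinj (x y : ℕ) : w x = w y ↔ x = y := w.injective.eq_iff
  ext i
  rw [Pi.add_apply]
  rcases lt_trichotomy i k with hi | rfl | hi
  · rw [Pi.single_eq_of_ne hi.ne, add_zero, code, code, ← Set.ncard_image_of_injective _
      (Equiv.swap k j).injective, Equiv.image_eq_preimage_symm]
    congr 1
    ext x
    simp only [Set.mem_preimage, Set.mem_ofPred_eq, hu, Equiv.symm_swap, Equiv.swap_apply_def]
    grind
  · have hset : {x | i < x ∧ w x < w i} = insert j {x | i < x ∧ (w * Equiv.swap i j) x < w j} := by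
      ext x
      have := hmax x
      simp only [hu, Set.mem_insert_iff, Set.mem_ofPred_eq]
      grind
    rw [code, hset, Set.ncard_insert_of_notMem (by simp [hu, hkj.ne', hlt.le])
      (finite_setOf_apply_lt _ _ _)]
    simp [code, hu]
  · rw [Pi.single_eq_of_ne hi.ne', add_zero, code, code]
    congr 1
    ext x
    have := hmax x
    have := hmax i
    simp only [hu, Set.mem_ofPred_eq]
    grind

lemma IsDominant.lt_of_isMaxBelow (hw : IsDominant w) {j c : ℕ} (hj : IsMaxBelow w k j)
    (hk : w (k + 1) < w k) (hkc : k + 1 < c) (hc : w j < w c) : j < c ∧ w k < w c := by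
  obtain ⟨hkj, hlt, hmax⟩ := hj
  have hwk : w k < w c := by
    by_contra hwc
    exact hc.not_ge (hmax c (by lia) ((not_lt.1 hwc).lt_of_ne (w.injective.ne (by lia))))
  refine ⟨lt_of_not_ge fun hcj => ?_, hwk⟩
  have hne : c ≠ j := by rintro rfl; exact hc.false
  have hmaxk := hmax (k + 1) k.lt_succ_self hk
  have hne' : w (k + 1) ≠ w j := w.injective.ne (by lia)
  exact hw.avoids_132 (by lia) hkc (by lia) (by lia) (hlt.trans hwk)

lemma sA_mul_swap_mul_sA {j : ℕ} (hj : k + 1 < j) :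
    sA k * Equiv.swap (k + 1) j * sA k = Equiv.swap k j := by
  rw [sA, Equiv.swap_comm k, Equiv.swap_comm _ j, Equiv.swap_mul_swap_mul_swap hj.ne' (by lia)]

lemma IsDominant.card_reducedWords_mul_sA (hw : IsDominant w) (hwn : w ∈ symmetricGroup n) {j : ℕ}
    (hj : IsMaxBelow w k j) (hk : w (k + 1) < w k) :
    #(reducedWords n (w * sA k)) = #(reducedWords n (w * Equiv.swap k j)) := by
  obtain ⟨hkj, hlt, hmax⟩ := id hj
  obtain ⟨hk1, hjn⟩ := bounds_of_inversion hwn hkj hlt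
  obtain rfl | hkj' := eq_or_lt_of_le (Nat.succ_le_of_lt hkj)
  · rfl
  -- Avoidance of `132` leaves the transition of `v` at `k + 1` with one cover on either side.
  set v := w * sA k * Equiv.swap (k + 1) j with hv
  have hvn : v ∈ symmetricGroup n :=
    mul_mem (mul_mem hwn (sA_mem_symmetricGroup ⟨hk1, by lia⟩))
      (swap_mem_symmetricGroup (mem_Icc.2 ⟨by lia, by lia⟩) (mem_Icc.2 ⟨by lia, hjn⟩))
  have hvk : v k = w (k + 1) := by
    simp [hv, sA, Equiv.swap_apply_of_ne_of_ne k.lt_succ_self.ne hkj.ne]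
  have hvk1 : v (k + 1) = w j := by
    simp [hv, sA, Equiv.swap_apply_of_ne_of_ne hkj.ne' hkj'.ne']
  have hvj : v j = w k := by simp [hv, sA]
  have hvc (c : ℕ) (h₁ : c ≠ k) (h₂ : c ≠ k + 1) (h₃ : c ≠ j) : v c = w c := by
    simp [hv, sA, Equiv.swap_apply_of_ne_of_ne, h₁, h₂, h₃]
  have hmaxk := hmax (k + 1) k.lt_succ_self hk
  have hne : w (k + 1) ≠ w j := w.injective.ne hkj'.ne
  have h := card_reducedWords_mul_swap_eq_of_unique_covers hvn hk1 hjn (i := k) (r := k + 1)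
    ⟨k.lt_succ_self, by lia, by lia⟩ ⟨hkj', by lia, fun c hc₁ hc₂ => ?_⟩
    (fun c hc hcov => ?_) fun c hcov => ?_
  · rw [hv, Equiv.mul_swap_mul_self] at h
    rw [h, mul_assoc w, mul_assoc w, ← sA, sA_mul_swap_mul_sA hkj']
  · rw [hvk1, hvj, hvc c (by lia) (by lia) (by lia)]
    exact fun h => h.1.not_ge (hmax c (by lia) h.2)
  · by_contra hck
    obtain ⟨hck1, hlt', -⟩ := hcov
    rw [hvk1, hvc c hck (by lia) (by lia)] at hlt'
    exact hw.avoids_132 hc (b := k) (by lia) hkj hlt' hlt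
  · by_contra hcj
    obtain ⟨hkc, hlt', hbetween⟩ := hcov
    rw [hvk1, hvc c (by lia) (by lia) hcj] at hlt' hbetween
    obtain ⟨hjc, hwk⟩ := hw.lt_of_isMaxBelow hj hk hkc hlt'
    exact hbetween j hkj' hjc (by lia)

lemma IsDominant.exists_of_descent (hw : IsDominant w) (hwn : w ∈ symmetricGroup n)
    (hk : w (k + 1) < w k) :
    ∃ u ∈ symmetricGroup n, IsDominant u ∧ code w = code u + Pi.single k 1 ∧
      #(reducedWords n (w * sA k)) = #(reducedWords n u) := by
  obtain ⟨j, hj⟩ := exists_isMaxBelow_of_descent hk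
  obtain ⟨hk1, hjn⟩ := bounds_of_inversion hwn hj.1 hj.2.1
  have hkj := hj.1
  have hcode := hj.code_eq
  refine ⟨w * Equiv.swap k j, ?_, fun i hi => ?_, hcode, hw.card_reducedWords_mul_sA hwn hj hk⟩
  · exact mul_mem hwn
      (swap_mem_symmetricGroup (mem_Icc.2 ⟨hk1, by lia⟩) (mem_Icc.2 ⟨by lia, hjn⟩))
  · have hi' := hw i hi
    have hlt := code_succ_lt_of_descent hk
    simp only [hcode, Pi.add_apply, Pi.single_apply] at hi' hlt
    split_ifs at hi' hlt <;> grind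

/-! ### The Frobenius formula -/

section Vandermonde

open Matrix Polynomial

lemma sum_det_updateRow {ι R : Type*} [Fintype ι] [DecidableEq ι] [CommRing R]
    (A B : Matrix ι ι R) : ∑ i, (A.updateRow i (B.row i)).det = (B * A.adjugate).trace := by
  refine sum_congr rfl fun i _ => ?_
  rw [← cramer_transpose_apply, cramer_eq_adjugate_mulVec, ← adjugate_transpose, diag_apply]
  simp only [mulVec, dotProduct, mul_apply, transpose_apply, row_apply, mul_comm]

/- In the basis of falling factorials `x ↦ x (x - 1) ⋯ (x - j + 1)` the row of `bᵢ - 1`, multiplied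
by `bᵢ`, has entries `bᵢ - j` times those of the row of `bᵢ`. -/
lemma sum_mul_det_vandermonde_sub_single {R : Type*} [CommRing R] [IsDomain R] (b : Fin n → R) :
    ∑ i, b i * (vandermonde (b - Pi.single i 1)).det =
      (∑ i, b i - ∑ i : Fin n, (i : R)) * (vandermonde b).det := by
  have hdet (c : Fin n → R) : (vandermonde c).det =
      (of fun i j : Fin n => (descPochhammer R j).eval (c i)).det :=
    det_eval_matrixOfPolynomials_eq_det_vandermonde c _ (fun j => descPochhammer_natDegree R j)
      fun j => monic_descPochhammer R j
  set A : Matrix (Fin n) (Fin n) R := of fun i j => (descPochhammer R j).eval (b i) with hA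
  set B : Matrix (Fin n) (Fin n) R := diagonal b * A - A * diagonal fun j : Fin n => (j : R) with hB
  have hrow (i j : Fin n) : b i * (descPochhammer R j).eval (b i - 1) = B i j := by
    have hleft := descPochhammer_succ_left R j
    rw [descPochhammer_succ_right] at hleft
    simpa [hA, hB, mul_comm, mul_sub, eq_comm] using congrArg (eval (b i)) hleft
  have hterm (i : Fin n) : b i * (vandermonde (b - Pi.single i 1)).det =
      (A.updateRow i (B.row i)).det := by
    have : B.row i = b i • fun j : Fin n => (descPochhammer R j).eval (b i - 1) :=
      funext fun j => (hrow i j).symm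
    rw [this, det_updateRow_smul, hdet]
    congr 2
    ext p j
    obtain rfl | hpi := eq_or_ne p i
    · simp
    · simp [hpi, hA]
  rw [sum_congr rfl fun i _ => hterm i, sum_det_updateRow, hB, sub_mul, trace_sub,
    Matrix.mul_assoc, mul_adjugate, trace_mul_comm (A * _), ← Matrix.mul_assoc, adjugate_mul,
    hdet, ← hA]
  simp [trace_diagonal, sub_mul, mul_comm]

lemma det_vandermonde_update {F : Type*} [Field F] {b : Fin n → F} (hb : b.Injective) (j : Fin n)
    (y : F) : (vandermonde (Function.update b j y)).det =
      (Lagrange.basis univ b j).eval y * (vandermonde b).det := by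
  have hpow (m : Fin n) : y ^ (m : ℕ) = ∑ k, (Lagrange.basis univ b k).eval y * b k ^ (m : ℕ) := by
    have hdeg : (X ^ (m : ℕ) : F[X]).degree < #(univ : Finset (Fin n)) := by
      rw [degree_X_pow, card_fin]; exact_mod_cast m.2
    have := congrArg (eval y) (Lagrange.eq_interpolate (v := b) hb.injOn hdeg)
    simpa [Lagrange.interpolate_apply, eval_finsetSum, mul_comm] using this
  rw [← smul_eq_mul,
    ← det_updateRow_sum (vandermonde b) j fun k => (Lagrange.basis univ b k).eval y]
  congr 1
  ext p m
  obtain rfl | hpj := eq_or_ne p j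
  · simp [vandermonde_apply, hpow]
  · simp [vandermonde_apply, hpj]

lemma det_vandermonde_comp_swap {R : Type*} [CommRing R] {i j : Fin n} (hij : i ≠ j)
    (b : Fin n → R) :
    (vandermonde (b ∘ Equiv.swap i j)).det = -(vandermonde b).det := by
  have := det_permute (Equiv.swap i j) (vandermonde b)
  rw [Equiv.Perm.sign_swap hij] at this
  simpa using! this

end Vandermonde

/-- The first-column hook lengths of the partition `code w`, in increasing order; padded by zeros
to `n` parts. The row of index `i` of the partition is counted from the bottom, so it is the part
`code w (n - i)`. -/
noncomputable def betaNumber (n : ℕ) (w : Equiv.Perm ℕ) (i : Fin n) : ℕ := code w (n - i) + i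

lemma sum_fin_sub_eq_sum_Icc {M : Type*} [AddCommMonoid M] (f : ℕ → M) :
    ∑ i : Fin n, f (n - i) = ∑ k ∈ Icc 1 n, f k := by
  rw [Fin.sum_univ_eq_sum_range fun i => f (n - i)]
  refine sum_nbij' (n - ·) (n - ·) ?_ ?_ ?_ ?_ fun _ _ => rfl <;>
    simp only [mem_range, mem_Icc] <;> lia

lemma sum_betaNumber (n : ℕ) (w : Equiv.Perm ℕ) :
    ∑ i, betaNumber n w i = invCount n w + ∑ i : Fin n, (i : ℕ) := by
  simp only [betaNumber, sum_add_distrib, invCount, sum_fin_sub_eq_sum_Icc (code w)]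

lemma betaNumber_eq_add_single {u : Equiv.Perm ℕ} {i : Fin n}
    (h : code w = code u + Pi.single (n - i : ℕ) 1) :
    betaNumber n w = betaNumber n u + Pi.single i 1 := by
  ext j
  have : (n - j : ℕ) = n - i ↔ j = i := by rw [Fin.ext_iff]; lia
  simp only [betaNumber, h, Pi.add_apply, Pi.single_apply, this]
  lia

lemma prod_factorial_add_single {ι : Type*} [Fintype ι] [DecidableEq ι] (b : ι → ℕ) (i : ι) :
    ∏ j, ((b + Pi.single i 1 : ι → ℕ) j).factorial = (b i + 1) * ∏ j, (b j).factorial := by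
  rw [← mul_prod_erase univ _ (mem_univ i), ← mul_prod_erase univ _ (mem_univ i), ← mul_assoc]
  congr 1
  · simp [Nat.factorial_succ]
  · exact prod_congr rfl fun j hj => by simp [ne_of_mem_erase hj]

/-- The Vandermonde determinant of the beta-numbers, taken in `ℚ`. -/
noncomputable def betaDet (n : ℕ) (w : Equiv.Perm ℕ) : ℚ :=
  (Matrix.vandermonde fun i => (betaNumber n w i : ℚ)).det

lemma sum_betaNumber_mul_det (n : ℕ) (w : Equiv.Perm ℕ) :
    ∑ i, (betaNumber n w i : ℚ) *
      (Matrix.vandermonde ((fun j => (betaNumber n w j : ℚ)) - Pi.single i 1)).det =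
      invCount n w * betaDet n w := by
  have hsum : ∑ i, (betaNumber n w i : ℚ) = invCount n w + ∑ i : Fin n, (i : ℚ) := by
    exact_mod_cast sum_betaNumber n w
  rw [sum_mul_det_vandermonde_sub_single fun i => (betaNumber n w i : ℚ), hsum,
    add_sub_cancel_right, betaDet]

lemma card_reducedWords_one_mul_prod_factorial (n : ℕ) :
    (#(reducedWords n 1) : ℚ) * ∏ i, ((betaNumber n 1 i).factorial : ℚ) =
      (invCount n 1).factorial * betaDet n 1 := by
  have hbeta (i : Fin n) : betaNumber n 1 i = i := by simp [betaNumber, code_one]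
  simp only [betaDet, hbeta, card_reducedWords_one, invCount_one, Nat.cast_one, one_mul,
    Nat.factorial_zero]
  cases n with
  | zero => simp
  | succ m =>
    rw [Matrix.det_vandermonde_id_eq_superFactorial, ← Nat.prod_range_factorial_succ]
    push_cast
    rw [Fin.prod_univ_eq_prod_range fun i => (i.factorial : ℚ), prod_range_succ']
    simp

lemma det_vandermonde_sub_single_eq_betaDet {u : Equiv.Perm ℕ} {i : Fin n}
    (h : code w = code u + Pi.single (n - i : ℕ) 1) :
    (Matrix.vandermonde ((fun j => (betaNumber n w j : ℚ)) - Pi.single i 1)).det =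
      betaDet n u := by
  rw [betaDet]
  congr 2
  ext j
  obtain rfl | hji := eq_or_ne j i <;> simp [betaNumber_eq_add_single h, *]

lemma eq_one_of_invCount_eq_zero (hw : w ∈ symmetricGroup n) (h : invCount n w = 0) : w = 1 := by
  by_contra hne
  obtain ⟨a, ha⟩ := exists_left_descent hne
  have := invCount_of_left_descent hw ha
  lia

open Classical in
lemma card_reducedWords_eq_sum_fin (hw : w ∈ symmetricGroup n) (hne : w ≠ 1) :
    #(reducedWords n w) = ∑ i : Fin n,
      if w (n - i + 1) < w (n - i) then #(reducedWords n (w * sA (n - i))) else 0 := by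
  rw [sum_fin_sub_eq_sum_Icc fun k => if w (k + 1) < w k then #(reducedWords n (w * sA k)) else 0,
    ← sum_filter, card_reducedWords_eq_sum_right hw hne]
  congr 1
  ext k
  simp only [mem_filter, mem_Ico, mem_Icc, and_congr_left_iff]
  intro hk
  have := mem_Ico.1 (mem_Ico_of_descent hw hk)
  lia

namespace IsDominant

lemma betaNumber_mul_det_eq_zero (hw : IsDominant w) (hwn : w ∈ symmetricGroup n) {i : Fin n}
    (h : ¬ w (n - i + 1) < w (n - i)) : (betaNumber n w i : ℚ) *
      (Matrix.vandermonde ((fun j => (betaNumber n w j : ℚ)) - Pi.single i 1)).det = 0 := by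
  rcases Nat.eq_zero_or_pos i with hi | hi
  · have hcode : code w n = 0 := by
      refine (Set.ncard_eq_zero (finite_setOf_apply_lt _ _ _)).2
        (Set.eq_empty_of_forall_notMem fun j hj => ?_)
      exact (bounds_of_inversion hwn hj.1 hj.2).2.not_gt hj.1
    simp [betaNumber, hi, hcode]
  · set p : Fin n := ⟨i - 1, by lia⟩
    have hpi : p ≠ i := by rw [Ne, Fin.ext_iff]; lia
    have hcode : code w (n - p) = code w (n - i) := by
      have := not_not.1 (mt (hw.descent_iff (by lia)).2 h)
      rwa [show (n - i + 1 : ℕ) = n - p by lia] at this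
    have hbeta : betaNumber n w i = betaNumber n w p + 1 := by
      rw [betaNumber, betaNumber, hcode]; lia
    rw [Matrix.det_zero_of_row_eq hpi, mul_zero]
    ext m
    simp [Matrix.vandermonde_apply, hpi, hbeta]

/-- The Frobenius formula for the number of standard tableaux of shape `code w`. -/
theorem card_reducedWords_mul_prod_factorial (hw : IsDominant w) (hwn : w ∈ symmetricGroup n) :
    (#(reducedWords n w) : ℚ) * ∏ i, ((betaNumber n w i).factorial : ℚ) =
      (invCount n w).factorial * betaDet n w := by
  classical
  induction hm : invCount n w generalizing w with
  | zero =>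
    obtain rfl := eq_one_of_invCount_eq_zero hwn hm
    rw [card_reducedWords_one_mul_prod_factorial, hm]
  | succ m ih =>
    have hne : w ≠ 1 := by rintro rfl; simp [invCount_one] at hm
    have hterm (i : Fin n) : (if w (n - i + 1) < w (n - i) then
        (#(reducedWords n (w * sA (n - i))) : ℚ) else 0) * ∏ j, ((betaNumber n w j).factorial : ℚ) =
        m.factorial * ((betaNumber n w i : ℚ) *
          (Matrix.vandermonde ((fun j => (betaNumber n w j : ℚ)) - Pi.single i 1)).det) := by
      split_ifs with h
      · obtain ⟨u, hun, hu, hcode, hcard⟩ := hw.exists_of_descent hwn h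
        have hinv := invCount_eq_add_one (n := n) (mem_Icc.2 ⟨by lia, by lia⟩) hcode
        have hprod : ∏ j, ((betaNumber n w j).factorial : ℚ) =
            betaNumber n w i * ∏ j, ((betaNumber n u j).factorial : ℚ) := by
          have := prod_factorial_add_single (betaNumber n u) i
          rw [betaNumber_eq_add_single hcode]
          exact_mod_cast by simpa using this
        rw [hcard, hprod, mul_left_comm, ih hu hun (by lia), mul_left_comm,
          det_vandermonde_sub_single_eq_betaDet hcode]
      · rw [zero_mul, hw.betaNumber_mul_det_eq_zero hwn h, mul_zero]
    rw [card_reducedWords_eq_sum_fin hwn hne]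
    push_cast
    rw [sum_mul, sum_congr rfl fun i _ => hterm i, ← mul_sum, sum_betaNumber_mul_det, hm,
      Nat.factorial_succ]
    push_cast
    ring

end IsDominant

/-! ### The longest element -/

lemma w0A_apply (n i : ℕ) : w0A n i = if 1 ≤ i ∧ i ≤ n then n + 1 - i else i := rfl

@[simp]
lemma w0A_symm (n : ℕ) : (w0A n).symm = w0A n := (w0AFun_involutive n).toPerm_symm

lemma w0A_mem_symmetricGroup (n : ℕ) : w0A n ∈ symmetricGroup n :=
  mem_symmetricGroup.2 fun _ hx => if_neg hx

lemma code_w0A {i : ℕ} (hi : 1 ≤ i) : code (w0A n) i = n - i := by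
  have : {j | i < j ∧ w0A n j < w0A n i} = Set.Ioc i n := by
    ext j
    simp only [w0A_apply, Set.mem_ofPred_eq, Set.mem_Ioc]
    grind
  rw [code, this, ← coe_Ioc, Set.ncard_coe_finset, Nat.card_Ioc]

lemma isDominant_w0A (n : ℕ) : IsDominant (w0A n) := fun k hk => by
  rw [code_w0A hk, code_w0A (by lia)]
  lia

lemma betaNumber_w0A (i : Fin n) : betaNumber n (w0A n) i = 2 * i := by
  rw [betaNumber, code_w0A (by lia)]
  lia

lemma invCount_w0A (n : ℕ) : invCount n (w0A n) = n.choose 2 := by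
  have (i : Fin n) : code (w0A n) (n - i) = i := by rw [code_w0A (by lia)]; lia
  rw [invCount, ← sum_fin_sub_eq_sum_Icc (code (w0A n)), sum_congr rfl fun i _ => this i,
    Fin.sum_univ_eq_sum_range fun i => i, sum_range_id, Nat.choose_two_right]

lemma w0A_symm_succ_lt {i : ℕ} (hi : 1 ≤ i) (hin : i < n) :
    (w0A n).symm (i + 1) < (w0A n).symm i := by
  simp only [w0A_symm, w0A_apply]
  grind

/-- The permutation `u` such that `w = sₖ sₖ₊₁ sₖ u`. -/
def braidCofactor (k : ℕ) (w : Equiv.Perm ℕ) : Equiv.Perm ℕ := sA k * (sA (k + 1) * (sA k * w))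

lemma braidCofactor_eq (k : ℕ) (w : Equiv.Perm ℕ) :
    braidCofactor k w = sA (k + 1) * (sA k * (sA (k + 1) * w)) := by
  have hbraid : sA k * sA (k + 1) * sA k = sA (k + 1) * sA k * sA (k + 1) := by
    ext x
    simp only [Equiv.Perm.mul_apply, sA_apply]
    grind
  simpa only [braidCofactor, mul_assoc] using congrArg (· * w) hbraid

lemma braidCofactor_mem_symmetricGroup (hw : w ∈ symmetricGroup n) (hk : 1 ≤ k)
    (hkn : k + 1 < n) : braidCofactor k w ∈ symmetricGroup n := by
  have hsA : sA k ∈ symmetricGroup n := sA_mem_symmetricGroup ⟨hk, by lia⟩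
  exact mul_mem hsA (mul_mem (sA_mem_symmetricGroup ⟨by lia, hkn⟩) (mul_mem hsA hw))

@[simp]
lemma sA_apply_left (k : ℕ) : sA k k = k + 1 := Equiv.swap_apply_left _ _

@[simp]
lemma sA_apply_right (k : ℕ) : sA k (k + 1) = k := Equiv.swap_apply_right _ _

@[simp]
lemma sA_apply_succ_succ (k : ℕ) : sA k (k + 1 + 1) = k + 1 + 1 :=
  Equiv.swap_apply_of_ne_of_ne (by lia) (by lia)

@[simp]
lemma sA_succ_apply (k : ℕ) : sA (k + 1) k = k := Equiv.swap_apply_of_ne_of_ne (by lia) (by lia)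

lemma code_eq_code_braidCofactor_add (h₁ : w.symm (k + 1) < w.symm k)
    (h₂ : w.symm (k + 1 + 1) < w.symm (k + 1)) :
    code w = code (braidCofactor k w) + Pi.single (w.symm (k + 1 + 1)) 1 +
      Pi.single (w.symm (k + 1 + 1)) 1 + Pi.single (w.symm (k + 1)) 1 := by
  have hpos : (sA k * w).symm (k + 1 + 1) = w.symm (k + 1 + 1) := by
    simp [symm_sA_mul_apply]
  have hpos' : (sA (k + 1) * (sA k * w)).symm (k + 1) = w.symm (k + 1 + 1) := by
    simp [symm_sA_mul_apply]
  rw [code_eq_of_left_descent h₁, code_eq_of_left_descent (a := k + 1) (w := sA k * w),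
    code_eq_of_left_descent (a := k) (w := sA (k + 1) * _), hpos, hpos', braidCofactor]
  · simpa [symm_sA_mul_apply] using h₂
  · simpa [symm_sA_mul_apply] using h₂.trans h₁

lemma braid_append_mem_RSetA_iff (hw : w ∈ symmetricGroup n) (h₁ : w.symm (k + 1) < w.symm k)
    (h₂ : w.symm (k + 1 + 1) < w.symm (k + 1)) :
    k :: (k + 1) :: k :: l ∈ RSetA n w ↔ l ∈ RSetA n (braidCofactor k w) := by
  have hw₁ := sA_mul_mem_of_left_descent hw h₁
  have hd₁ : (sA k * w).symm (k + 1 + 1) < (sA k * w).symm (k + 1) := by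
    simpa [symm_sA_mul_apply] using h₂.trans h₁
  have hd₂ : (sA (k + 1) * (sA k * w)).symm (k + 1) < (sA (k + 1) * (sA k * w)).symm k := by
    simpa [symm_sA_mul_apply] using h₂
  rw [cons_mem_RSetA_iff hw, cons_mem_RSetA_iff hw₁,
    cons_mem_RSetA_iff (sA_mul_mem_of_left_descent hw₁ hd₁), braidCofactor]
  exact (and_iff_right h₁).trans ((and_iff_right hd₁).trans (and_iff_right hd₂))

lemma braid_append_mem_RSetA_iff' (hw : w ∈ symmetricGroup n) (h₁ : w.symm (k + 1) < w.symm k)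
    (h₂ : w.symm (k + 1 + 1) < w.symm (k + 1)) :
    (k + 1) :: k :: (k + 1) :: l ∈ RSetA n w ↔ l ∈ RSetA n (braidCofactor k w) := by
  have hw₁ := sA_mul_mem_of_left_descent hw h₂
  have hd₁ : (sA (k + 1) * w).symm (k + 1) < (sA (k + 1) * w).symm k := by
    simpa [symm_sA_mul_apply] using h₂.trans h₁
  have hd₂ : (sA k * (sA (k + 1) * w)).symm (k + 1 + 1) <
      (sA k * (sA (k + 1) * w)).symm (k + 1) := by
    simpa [symm_sA_mul_apply] using h₁
  rw [cons_mem_RSetA_iff hw, cons_mem_RSetA_iff hw₁,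
    cons_mem_RSetA_iff (sA_mul_mem_of_left_descent hw₁ hd₁), braidCofactor_eq]
  exact (and_iff_right h₂).trans ((and_iff_right hd₁).trans (and_iff_right hd₂))

lemma code_w0A_eq (hk : 1 ≤ k) (hkn : k + 1 < n) :
    code (w0A n) = code (braidCofactor k (w0A n)) + Pi.single (n - (k + 1)) 1 +
      Pi.single (n - (k + 1)) 1 + Pi.single (n - k) 1 := by
  have h := code_eq_code_braidCofactor_add (w0A_symm_succ_lt hk (by lia))
    (w0A_symm_succ_lt (by lia) hkn)
  have hval {i : ℕ} (hi : i < n) : w0A n (i + 1) = n - i := by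
    rw [w0A_apply]
    grind
  rwa [w0A_symm, hval hkn, hval (by lia)] at h

lemma isDominant_braidCofactor_w0A (hk : 1 ≤ k) (hkn : k + 1 < n) :
    IsDominant (braidCofactor k (w0A n)) := by
  intro i hi
  have hcode (j : ℕ) := congrFun (code_w0A_eq hk hkn) j
  have h := hcode i
  have h' := hcode (i + 1)
  rw [code_w0A (by lia)] at h h'
  simp only [Pi.add_apply, Pi.single_apply] at h h'
  split_ifs at h h' <;> lia

lemma invCount_braidCofactor_w0A (hk : 1 ≤ k) (hkn : k + 1 < n) :
    invCount n (w0A n) = invCount n (braidCofactor k (w0A n)) + 3 := by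
  have h : n - (k + 1) ∈ Icc 1 n := mem_Icc.2 ⟨by lia, by lia⟩
  have h' : n - k ∈ Icc 1 n := mem_Icc.2 ⟨by lia, by lia⟩
  simp [invCount, code_w0A_eq hk hkn, sum_add_distrib, h, h']

lemma betaNumber_braidCofactor_w0A {i j : Fin n} (hi : 1 ≤ (i : ℕ)) (hij : (j : ℕ) = i + 1) :
    betaNumber n (braidCofactor i (w0A n)) =
      Function.update (fun l : Fin n => 2 * (l : ℕ)) j (2 * i - 1) ∘ Equiv.swap i j := by
  ext l
  have h := congrFun (code_w0A_eq hi (hij ▸ j.2)) (n - l)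
  rw [code_w0A (by lia)] at h
  simp only [Pi.add_apply, Pi.single_apply] at h
  simp only [betaNumber, Function.comp_apply, Function.update_apply, Equiv.swap_apply_def,
    Fin.ext_iff]
  grind

/-! ### Rotation of reduced words -/

/-- The rotation `i₁ i₂ ⋯ i_ℓ ↦ i₂ ⋯ i_ℓ (n - i₁)`, which permutes the reduced words of `w₀`. -/
def rotateWord (n : ℕ) : List ℕ → List ℕ
  | [] => []
  | i :: l => l ++ [n - i]

lemma sA_mul_w0A (ha : 1 ≤ a ∧ a < n) : sA a * w0A n = w0A n * sA (n - a) := by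
  ext x
  simp only [Equiv.Perm.mul_apply, sA_apply, w0A_apply]
  grind

lemma wordProdA_concat (l : List ℕ) (a : ℕ) : wordProdA (l ++ [a]) = wordProdA l * sA a := by
  simp [wordProdA]

lemma rotateWord_mem (hl : l ∈ reducedWords n (w0A n)) :
    rotateWord n l ∈ reducedWords n (w0A n) := by
  rw [mem_reducedWords, mem_RSetA_iff (w0A_mem_symmetricGroup n)] at hl ⊢
  obtain ⟨hletters, hprod, hlen⟩ := hl
  cases l with
  | nil => exact ⟨hletters, hprod, hlen⟩
  | cons i l =>
    obtain ⟨hi, hl⟩ := List.forall_mem_cons.1 hletters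
    rw [wordProdA_cons] at hprod
    have hconj : w0A n = sA i * w0A n * sA (n - i) := by
      rw [sA_mul_w0A hi, mul_assoc, sA, Equiv.swap_mul_self, mul_one]
    refine ⟨?_, ?_, by simpa [rotateWord] using hlen⟩
    · simp only [rotateWord, List.mem_append, List.mem_singleton]
      rintro j (hj | rfl)
      · exact hl j hj
      · lia
    · rw [rotateWord, wordProdA_concat, hconj, ← hprod, sA_mul_self_mul]

lemma injOn_rotateWord (n : ℕ) : Set.InjOn (rotateWord n) {l | ∀ i ∈ l, i < n} := by
  rintro (_ | ⟨i, l⟩) (hl : ∀ i ∈ _, i < n) (_ | ⟨j, l'⟩) (hl' : ∀ i ∈ _, i < n) h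
  · rfl
  · simp [rotateWord] at h
  · simp [rotateWord] at h
  · obtain ⟨rfl, hij⟩ := List.append_inj' h rfl
    have hi := hl i List.mem_cons_self
    have hj := hl' j List.mem_cons_self
    rw [List.singleton_inj] at hij
    rw [show i = j by lia]

lemma image_rotateWord_reducedWords_w0A (n : ℕ) :
    (reducedWords n (w0A n)).image (rotateWord n) = reducedWords n (w0A n) := by
  refine eq_of_subset_of_card_le (image_subset_iff.2 fun _ => rotateWord_mem) ?_
  refine (card_image_of_injOn ((injOn_rotateWord n).mono fun l hl i hi => ?_)).ge
  exact ((mem_reducedWords.1 hl).1 i hi).2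

lemma card_filter_rotateWord (n : ℕ) (p : List ℕ → Prop) [DecidablePred p] :
    #{l ∈ reducedWords n (w0A n) | p (rotateWord n l)} = #{l ∈ reducedWords n (w0A n) | p l} := by
  conv_rhs => rw [← image_rotateWord_reducedWords_w0A, filter_image]
  refine (card_image_of_injOn ((injOn_rotateWord n).mono fun l hl i hi => ?_)).symm
  exact ((mem_reducedWords.1 (mem_filter.1 hl).1).1 i hi).2

lemma isYB_iff : isYB l = true ↔
    ∃ k t, 1 ≤ k ∧ (l = k :: (k + 1) :: k :: t ∨ l = (k + 1) :: k :: (k + 1) :: t) := by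
  constructor
  · intro h
    match l, h with
    | a :: b :: c :: t, h =>
      simp only [isYB, Bool.or_eq_true, Bool.and_eq_true, bne_iff_ne, beq_iff_eq] at h
      obtain ⟨⟨ha, rfl⟩, rfl⟩ | ⟨⟨hb, rfl⟩, rfl⟩ := h
      · exact ⟨c, t, Nat.pos_of_ne_zero ha, .inl rfl⟩
      · exact ⟨b, t, Nat.pos_of_ne_zero hb, .inr rfl⟩
  · rintro ⟨k, t, hk, rfl | rfl⟩ <;> simp [isYB, Nat.ne_of_gt hk]

lemma isYB_append {l' : List ℕ} (h : 3 ≤ l.length) : isYB (l ++ l') = isYB l := by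
  match l, h with
  | _ :: _ :: _ :: _, _ => rfl

lemma isYB_eq_false_of_length_lt (h : l.length < 3) : isYB l = false := by
  rw [← Bool.not_eq_true, isYB_iff]
  rintro ⟨k, t, -, rfl | rfl⟩ <;> simp at h <;> lia

lemma length_of_mem_reducedWords_w0A (hl : l ∈ reducedWords n (w0A n)) :
    l.length = n.choose 2 := by
  rw [mem_reducedWords, mem_RSetA_iff (w0A_mem_symmetricGroup n)] at hl
  rw [hl.2.2, invCount_w0A]

lemma card_filter_isYB_drop {j : ℕ} (h : j + 3 ≤ n.choose 2) :
    #{l ∈ reducedWords n (w0A n) | isYB (l.drop j)} =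
      #{l ∈ reducedWords n (w0A n) | isYB l} := by
  induction j with
  | zero => simp
  | succ j ih =>
    rw [← ih (by lia), ← card_filter_rotateWord n fun l => isYB (l.drop j)]
    congr 1
    refine filter_congr fun l hl => ?_
    have hlen := length_of_mem_reducedWords_w0A hl
    match l with
    | [] => simp [rotateWord]
    | i :: l =>
      rw [List.length_cons] at hlen
      rw [List.drop_succ_cons, rotateWord, List.drop_append_of_le_length (by lia),
        isYB_append (by rw [List.length_drop]; lia)]

lemma sum_ybCount (n : ℕ) : ∑ l ∈ reducedWords n (w0A n), ybCount l =
    (n.choose 2 - 2) * #{l ∈ reducedWords n (w0A n) | isYB l} := by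
  calc ∑ l ∈ reducedWords n (w0A n), ybCount l
    _ = ∑ l ∈ reducedWords n (w0A n), #{j ∈ range (n.choose 2) | isYB (l.drop j)} :=
      sum_congr rfl fun l hl => by rw [ybCount, length_of_mem_reducedWords_w0A hl]
    _ = ∑ j ∈ range (n.choose 2), #{l ∈ reducedWords n (w0A n) | isYB (l.drop j)} :=
      sum_card_bipartiteAbove_eq_sum_card_bipartiteBelow _
    _ = ∑ j ∈ range (n.choose 2 - 2), #{l ∈ reducedWords n (w0A n) | isYB (l.drop j)} := by
      refine (sum_subset (range_subset_range.2 (Nat.sub_le _ _)) fun j _ hj => ?_).symm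
      rw [card_eq_zero, filter_eq_empty_iff]
      intro l hl
      rw [mem_range] at hj
      rw [isYB_eq_false_of_length_lt]
      · exact Bool.false_ne_true
      · rw [List.length_drop, length_of_mem_reducedWords_w0A hl]
        lia
    _ = (n.choose 2 - 2) * #{l ∈ reducedWords n (w0A n) | isYB l} := by
      rw [sum_congr rfl fun j hj => card_filter_isYB_drop (by have := mem_range.1 hj; lia),
        sum_const, card_range, smul_eq_mul]

lemma filter_isYB_eq (n : ℕ) : {l ∈ reducedWords n (w0A n) | isYB l} =
    (Ico 1 (n - 1)).biUnion fun k => (reducedWords n (braidCofactor k (w0A n))).image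
      (fun l => k :: (k + 1) :: k :: l) ∪ (reducedWords n (braidCofactor k (w0A n))).image
      fun l => (k + 1) :: k :: (k + 1) :: l := by
  have hmem {k : ℕ} (hk : 1 ≤ k) (hkn : k + 1 < n) (l : List ℕ) :=
    (braid_append_mem_RSetA_iff (l := l) (w0A_mem_symmetricGroup n)
      (w0A_symm_succ_lt hk (by lia)) (w0A_symm_succ_lt (by lia) hkn))
  have hmem' {k : ℕ} (hk : 1 ≤ k) (hkn : k + 1 < n) (l : List ℕ) :=
    (braid_append_mem_RSetA_iff' (l := l) (w0A_mem_symmetricGroup n)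
      (w0A_symm_succ_lt hk (by lia)) (w0A_symm_succ_lt (by lia) hkn))
  ext l
  simp only [mem_filter, mem_biUnion, mem_union, mem_image, mem_Ico, mem_reducedWords]
  constructor
  · rintro ⟨hl, hYB⟩
    obtain ⟨k, t, hk, rfl | rfl⟩ := isYB_iff.1 hYB
    · have hkn : k + 1 < n := (hl.1 (k + 1) (by simp)).2
      exact ⟨k, ⟨hk, by lia⟩, .inl ⟨t, (hmem hk hkn t).1 hl, rfl⟩⟩
    · have hkn : k + 1 < n := (hl.1 (k + 1) (by simp)).2
      exact ⟨k, ⟨hk, by lia⟩, .inr ⟨t, (hmem' hk hkn t).1 hl, rfl⟩⟩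
  · rintro ⟨k, ⟨hk, hkn⟩, ⟨t, ht, rfl⟩ | ⟨t, ht, rfl⟩⟩
    · exact ⟨(hmem hk (by lia) t).2 ht, isYB_iff.2 ⟨k, t, hk, .inl rfl⟩⟩
    · exact ⟨(hmem' hk (by lia) t).2 ht, isYB_iff.2 ⟨k, t, hk, .inr rfl⟩⟩

lemma card_filter_isYB (n : ℕ) : #{l ∈ reducedWords n (w0A n) | isYB l} =
    2 * ∑ k ∈ Ico 1 (n - 1), #(reducedWords n (braidCofactor k (w0A n))) := by
  rw [filter_isYB_eq, card_biUnion, mul_sum]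
  · refine sum_congr rfl fun k _ => ?_
    rw [card_union_of_disjoint, card_image_of_injective, card_image_of_injective, two_mul]
    · exact fun l l' h => by simpa using h
    · exact fun l l' h => by simpa using h
    · rw [disjoint_left]
      simp only [mem_image]
      rintro _ ⟨l, -, rfl⟩ ⟨l', -, h⟩
      simp at h
  · intro k _ k' _ hne
    rw [Function.onFun, disjoint_left]
    simp only [mem_union, mem_image]
    rintro _ (⟨l, -, rfl⟩ | ⟨l, -, rfl⟩) (⟨l', -, h⟩ | ⟨l', -, h⟩) <;> simp at h <;> lia

/-! ### Summation over the braids -/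

lemma succ_mul_multichoose_succ {R : Type*} [CommRing R] [BinomialRing R] (r : R) (m : ℕ) :
    (m + 1) * Ring.multichoose r (m + 1) = Ring.multichoose r m * (r + m) := by
  have : IsAddTorsionFree R := BinomialRing.toIsAddTorsionFree
  have hfact (m : ℕ) : m.factorial • Ring.multichoose r m = (ascPochhammer R m).eval r := by
    rw [Ring.factorial_nsmul_multichoose_eq_ascPochhammer, Polynomial.ascPochhammer_smeval_eq_eval]
  rw [← nsmul_right_inj m.factorial_ne_zero, ← smul_mul_assoc m.factorial (Ring.multichoose r m),
    hfact, ← ascPochhammer_succ_eval, ← hfact, Nat.factorial_succ, nsmul_eq_mul, nsmul_eq_mul]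
  push_cast
  ring

lemma multichoose_eq_prod {F : Type*} [Field F] [CharZero F] [BinomialRing F] (r : F) (m : ℕ) :
    Ring.multichoose r m = ∏ e ∈ range m, (r + e) / (e + 1) := by
  induction m with
  | zero => simp
  | succ m ih =>
    rw [prod_range_succ, ← ih, mul_div_assoc', ← succ_mul_multichoose_succ,
      mul_div_cancel_left₀ _ (Nat.cast_add_one_ne_zero m)]

lemma sum_antidiagonal_multichoose_mul {R : Type*} [CommRing R] [BinomialRing R] (r s : R)
    (m : ℕ) : ∑ x ∈ antidiagonal m, Ring.multichoose r x.1 * Ring.multichoose s x.2 =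
      Ring.multichoose (r + s) m := by
  have h := Ring.add_choose_eq m (Commute.all (-r) (-s))
  rw [← neg_add, Ring.choose_neg'] at h
  apply (MulAction.injective (Int.negOnePow m))
  beta_reduce
  rw [h, smul_sum]
  refine sum_congr rfl fun x hx => ?_
  rw [Ring.choose_neg', Ring.choose_neg', smul_mul_smul_comm, ← Int.negOnePow_add,
    ← Nat.cast_add, mem_antidiagonal.1 hx]

lemma prod_erase_eq_prod_range_mul {M : Type*} [CommMonoid M] (f : ℕ → M) (j : Fin n) :
    ∏ i ∈ univ.erase j, f i =
      (∏ e ∈ range j, f (j - 1 - e)) * ∏ e ∈ range (n - 1 - j), f (j + 1 + e) := by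
  set g := Function.update f j 1
  obtain ⟨q, hq⟩ : ∃ q, n = j + (1 + q) := ⟨n - 1 - j, by lia⟩
  have hfg {i : ℕ} (hi : i ≠ j) : g i = f i := Function.update_of_ne hi _ _
  have hgj : g j = 1 := Function.update_self _ _ _
  calc ∏ i ∈ univ.erase j, f i
    _ = ∏ i ∈ univ.erase j, g i :=
      prod_congr rfl fun i hi => (hfg (Fin.val_injective.ne (ne_of_mem_erase hi))).symm
    _ = ∏ i ∈ range n, g i := by
      rw [prod_erase univ (f := fun i : Fin n => g i) hgj, Fin.prod_univ_eq_prod_range g]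
    _ = (∏ e ∈ range j, g (j - 1 - e)) * ∏ e ∈ range (n - 1 - j), g (j + 1 + e) := by
      rw [prod_range_reflect, show n - 1 - j = q by lia]
      conv_lhs => rw [hq, prod_range_add, prod_range_add]
      simp [hgj, add_assoc]
    _ = (∏ e ∈ range j, f (j - 1 - e)) * ∏ e ∈ range (n - 1 - j), f (j + 1 + e) := by
      congr 1 <;> refine prod_congr rfl fun e he => hfg ?_ <;> rw [mem_range] at he <;> lia

lemma eval_lagrangeBasis_two_mul {F : Type*} [Field F] [CharZero F] [BinomialRing F] (t : F)
    (j : Fin n) : (Lagrange.basis univ (fun i : Fin n => 2 * (i : F)) j).eval (2 * (j - t)) =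
      Ring.multichoose (1 - t) j * Ring.multichoose (1 + t) (n - 1 - j) := by
  have hfactor (i : Fin n) : (Lagrange.basisDivisor (2 * (j : F)) (2 * i)).eval (2 * (j - t)) =
      (j - t - i) / (j - i) := by
    rw [Lagrange.basisDivisor, Polynomial.eval_mul, Polynomial.eval_C, Polynomial.eval_sub,
      Polynomial.eval_X, Polynomial.eval_C, ← mul_sub, ← mul_sub, inv_mul_eq_div,
      mul_div_mul_left _ _ two_ne_zero]
  rw [Lagrange.basis, Polynomial.eval_prod, prod_congr rfl fun i _ => hfactor i,
    prod_erase_eq_prod_range_mul fun i => ((j : F) - t - i) / (j - i), multichoose_eq_prod,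
    multichoose_eq_prod]
  congr 1 <;> refine prod_congr rfl fun e he => ?_
  · rw [mem_range] at he
    rw [Nat.sub_sub, Nat.cast_sub (by lia)]
    push_cast
    ring_nf
  · rw [← neg_div_neg_eq]
    push_cast
    ring_nf

lemma betaDet_braidCofactor_w0A {i j : Fin n} (hi : 1 ≤ (i : ℕ)) (hij : (j : ℕ) = i + 1) :
    betaDet n (braidCofactor i (w0A n)) = -(Ring.multichoose (-1 / 2 : ℚ) j *
      Ring.multichoose (5 / 2 : ℚ) (n - 1 - j)) * betaDet n (w0A n) := by
  have hcast : (fun l => (betaNumber n (braidCofactor i (w0A n)) l : ℚ)) =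
      Function.update (fun l : Fin n => 2 * (l : ℚ)) j (2 * ((j : ℕ) - 3 / 2)) ∘
        Equiv.swap i j := by
    ext l
    rw [betaNumber_braidCofactor_w0A hi hij, Function.comp_apply, Function.comp_apply,
      Function.update_apply, Function.update_apply, hij]
    split_ifs
    · rw [Nat.cast_sub (by lia)]
      push_cast
      ring
    · push_cast
      rfl
  have hne : i ≠ j := by rw [Ne, Fin.ext_iff]; lia
  have hinj : Function.Injective fun l : Fin n => 2 * (l : ℚ) := fun l l' h => by
    simpa [Fin.ext_iff] using h
  simp only [betaDet, hcast, det_vandermonde_comp_swap hne, det_vandermonde_update hinj,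
    eval_lagrangeBasis_two_mul, betaNumber_w0A, Nat.cast_mul, Nat.cast_ofNat]
  norm_num

lemma prod_factorial_betaNumber_w0A {i j : Fin n} (hi : 1 ≤ (i : ℕ)) (hij : (j : ℕ) = i + 1) :
    ∏ l, (betaNumber n (w0A n) l).factorial = (2 * i + 2) * (2 * i + 1) * (2 * i) *
      ∏ l, (betaNumber n (braidCofactor i (w0A n)) l).factorial := by
  have hfact : (2 * j : ℕ).factorial =
      (2 * i + 2) * (2 * i + 1) * (2 * i) * (2 * i - 1 : ℕ).factorial := by
    obtain ⟨m, hm⟩ : ∃ m, (2 * i : ℕ) = m + 1 := ⟨2 * i - 1, by lia⟩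
    rw [hij, mul_add, mul_one, hm, Nat.add_sub_cancel]
    simp only [Nat.factorial_succ]
    ring
  rw [betaNumber_braidCofactor_w0A hi hij, funext betaNumber_w0A]
  simp only [Function.comp_apply]
  rw [Equiv.prod_comp _ fun l => (Function.update (fun l : Fin n => 2 * (l : ℕ)) j _ l).factorial,
    ← mul_prod_erase univ _ (mem_univ j), ← mul_prod_erase univ _ (mem_univ j), hfact,
    Function.update_self, mul_assoc _ (2 * i - 1 : ℕ).factorial]
  congr 2
  exact prod_congr rfl fun l hl => by rw [Function.update_of_ne (ne_of_mem_erase hl)]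

lemma card_reducedWords_braidCofactor_w0A_mul_factorial {i j : Fin n} (hi : 1 ≤ (i : ℕ))
    (hij : (j : ℕ) = i + 1) :
    (#(reducedWords n (braidCofactor i (w0A n))) : ℚ) * (n.choose 2).factorial =
      -((2 * i + 2) * (2 * i + 1) * (2 * i) * Ring.multichoose (-1 / 2 : ℚ) j) *
        Ring.multichoose (5 / 2 : ℚ) (n - 1 - j) *
          ((n.choose 2 - 3).factorial * #(reducedWords n (w0A n))) := by
  have hin : (i : ℕ) + 1 < n := hij ▸ j.2
  have hw₀ := (isDominant_w0A n).card_reducedWords_mul_prod_factorial (w0A_mem_symmetricGroup n)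
  have hu := (isDominant_braidCofactor_w0A hi hin).card_reducedWords_mul_prod_factorial
    (braidCofactor_mem_symmetricGroup (w0A_mem_symmetricGroup n) hi hin)
  have hinv : invCount n (braidCofactor i (w0A n)) = n.choose 2 - 3 := by
    rw [← invCount_w0A, invCount_braidCofactor_w0A hi hin, Nat.add_sub_cancel]
  have hprod : ∏ l, ((betaNumber n (w0A n) l).factorial : ℚ) =
      (2 * i + 2) * (2 * i + 1) * (2 * i) *
        ∏ l, ((betaNumber n (braidCofactor i (w0A n)) l).factorial : ℚ) := by
    exact_mod_cast prod_factorial_betaNumber_w0A hi hij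
  rw [hinv, betaDet_braidCofactor_w0A hi hij] at hu
  rw [hprod, invCount_w0A] at hw₀
  have hne : ∏ l, ((betaNumber n (braidCofactor i (w0A n)) l).factorial : ℚ) ≠ 0 :=
    prod_ne_zero_iff.2 fun l _ => Nat.cast_ne_zero.2 (Nat.factorial_ne_zero _)
  apply mul_right_cancel₀ hne
  linear_combination ((n.choose 2).factorial : ℚ) * hu -
    (-(Ring.multichoose (-1 / 2 : ℚ) j * Ring.multichoose (5 / 2 : ℚ) (n - 1 - j))) *
      ((n.choose 2 - 3).factorial : ℚ) * hw₀

lemma multichoose_neg_half_add_two (p : ℕ) :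
    -((2 * p + 4) * (2 * p + 3) * (2 * p + 2) * Ring.multichoose (-1 / 2 : ℚ) (p + 2)) =
      3 * Ring.multichoose (5 / 2 : ℚ) p := by
  induction p with
  | zero => norm_num [multichoose_eq_prod, prod_range_succ]
  | succ p ih =>
    have h₁ := succ_mul_multichoose_succ (-1 / 2 : ℚ) (p + 2)
    have h₂ := succ_mul_multichoose_succ (5 / 2 : ℚ) p
    have hp : (p : ℚ) + 1 ≠ 0 := by positivity
    apply mul_left_cancel₀ hp
    push_cast at h₁ ⊢
    linear_combination -2 * (2 * p + 5) * (2 * p + 4) * (p + 1) * h₁ + (p + 5 / 2) * ih - 3 * h₂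

lemma card_reducedWords_braidCofactor_w0A (p q : ℕ) (hn : n = p + q + 3) :
    (#(reducedWords n (braidCofactor (p + 1) (w0A n))) : ℚ) * (n.choose 2).factorial =
      Ring.multichoose (5 / 2 : ℚ) p * Ring.multichoose (5 / 2 : ℚ) q *
        (3 * (n.choose 2 - 3).factorial * #(reducedWords n (w0A n))) := by
  have h := card_reducedWords_braidCofactor_w0A_mul_factorial (i := (⟨p + 1, by lia⟩ : Fin n))
    (j := (⟨p + 2, by lia⟩ : Fin n)) (Nat.le_add_left 1 p) rfl
  have hp := multichoose_neg_half_add_two p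
  rw [show n - 1 - (p + 2) = q by lia] at h
  push_cast at h
  linear_combination h + Ring.multichoose (5 / 2 : ℚ) q *
    ((n.choose 2 - 3).factorial * #(reducedWords n (w0A n))) * hp

lemma sum_card_reducedWords_braidCofactor_w0A_mul_factorial (s : ℕ) (hn : n = s + 3) :
    (∑ k ∈ Ico 1 (n - 1), #(reducedWords n (braidCofactor k (w0A n)))) * (n.choose 2).factorial =
      (n + 1).choose 4 * (3 * (n.choose 2 - 3).factorial * #(reducedWords n (w0A n))) := by
  have hsum : ∑ x ∈ antidiagonal s, Ring.multichoose (5 / 2 : ℚ) x.1 *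
      Ring.multichoose (5 / 2 : ℚ) x.2 = (n + 1).choose 4 := by
    rw [sum_antidiagonal_multichoose_mul, Ring.multichoose_eq, hn,
      show s + 3 + 1 = s + 4 from rfl, ← Nat.choose_symm_add, ← Ring.choose_natCast]
    push_cast
    ring_nf
  have hIco : ∑ k ∈ Ico 1 (n - 1), #(reducedWords n (braidCofactor k (w0A n))) =
      ∑ x ∈ antidiagonal s, #(reducedWords n (braidCofactor (x.1 + 1) (w0A n))) := by
    rw [Nat.sum_antidiagonal_eq_sum_range_succ_mk, sum_Ico_eq_sum_range,
      show n - 1 - 1 = s + 1 by lia]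
    simp only [add_comm 1]
  apply Nat.cast_injective (R := ℚ)
  rw [hIco]
  push_cast
  rw [sum_mul, ← hsum, sum_mul]
  refine sum_congr rfl fun x hx => card_reducedWords_braidCofactor_w0A x.1 x.2 ?_
  rw [hn, mem_antidiagonal.1 hx]

lemma choose_two_choose_two (n : ℕ) : (n.choose 2).choose 2 = 3 * (n + 1).choose 4 := by
  apply Nat.cast_injective (R := ℚ)
  push_cast [Nat.cast_choose_two, Nat.cast_choose_eq_descPochhammer_div, descPochhammer_succ_eval,
    descPochhammer_zero, Polynomial.eval_one, Nat.factorial]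
  ring

lemma two_mul_sum_card_reducedWords_braidCofactor_w0A (hn : 3 ≤ n) :
    (n.choose 2 - 2) * (2 * ∑ k ∈ Ico 1 (n - 1), #(reducedWords n (braidCofactor k (w0A n)))) =
      #(reducedWords n (w0A n)) := by
  obtain ⟨s, hs⟩ := Nat.exists_eq_add_of_le' hn
  set S := ∑ k ∈ Ico 1 (n - 1), #(reducedWords n (braidCofactor k (w0A n)))
  obtain ⟨m, hm⟩ : ∃ m, n.choose 2 = m + 3 :=
    Nat.exists_eq_add_of_le' (Nat.choose_le_choose 2 hn)
  have hsum : S * _ = _ := sum_card_reducedWords_braidCofactor_w0A_mul_factorial s hs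
  have hchoose := choose_two_choose_two n
  rw [hm, Nat.add_sub_cancel, Nat.factorial_succ, Nat.factorial_succ, Nat.factorial_succ] at hsum
  rw [hm] at hchoose ⊢
  have hpos : 0 < m.factorial * (m + 3).choose 2 :=
    mul_pos m.factorial_pos (Nat.choose_pos (by lia))
  rw [show m + 3 - 2 = m + 1 by lia]
  apply Nat.eq_of_mul_eq_mul_left hpos
  calc m.factorial * (m + 3).choose 2 * ((m + 1) * (2 * S))
    _ = ((m + 3).choose 2 * 2) * ((m + 1) * m.factorial) * S := by ring
    _ = (m + 3) * (m + 2) * ((m + 1) * m.factorial) * S := by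
      rw [Nat.choose_succ_right_eq, Nat.choose_one_right]
      rfl
    _ = S * ((m + 2 + 1) * ((m + 1 + 1) * ((m + 1) * m.factorial))) := by ring
    _ = m.factorial * (m + 3).choose 2 * #(reducedWords n (w0A n)) := by
      rw [hsum, hchoose]
      ring

end YangBaxter

/-- (Reiner) For every `n ≥ 3`, the expected number of Yang–Baxter moves in a uniformly
random reduced decomposition of the longest element `w₀ ∈ Sₙ` equals `1`; equivalently,
`Σ_{ω ∈ R(w₀)} yb(ω) = |R(w₀)|`. -/
theorem expected_yang_baxter_A (n : ℕ) (hn : 3 ≤ n) :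
    ∑ᶠ ω ∈ RSetA n (w0A n), ybCount ω = Nat.card ↥(RSetA n (w0A n)) := by
  open Finset YangBaxter in
  have hcoe : RSetA n (w0A n) = reducedWords n (w0A n) := (finite_RSetA n _).coe_toFinset.symm
  open Finset YangBaxter in
  calc ∑ᶠ ω ∈ RSetA n (w0A n), ybCount ω
    _ = ∑ ω ∈ reducedWords n (w0A n), ybCount ω := by rw [hcoe, finsum_mem_coe_finset]
    _ = (n.choose 2 - 2) * #{l ∈ reducedWords n (w0A n) | isYB l} := sum_ybCount n
    _ = (n.choose 2 - 2) *
        (2 * ∑ k ∈ Ico 1 (n - 1), #(reducedWords n (braidCofactor k (w0A n)))) := by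
      rw [card_filter_isYB]
    _ = #(reducedWords n (w0A n)) := two_mul_sum_card_reducedWords_braidCofactor_w0A hn
    _ = Nat.card ↥(RSetA n (w0A n)) := by rw [hcoe, Nat.card_coe_set_eq, Set.ncard_coe_finset]
end

section
/- Let n ≥ 3, let k satisfy 1 ≤ k ≤ n−2, and let j satisfy 1 ≤ j ≤ n²−2. Then the number of reduced decompositions ω = i_1⋯i_{n²} of w_0^B ∈ B_n with (i_j, i_{j+1}, i_{j+2}) ∈ {(k, k+1, k), (k+1, k, k+1)} equals the number of reduced decompositions ω = i_1⋯i_{n²} of w_0^B with (i_1, i_2, i_3) ∈ {(k, k+1, k), (k+1, k, k+1)}. -/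
theorem prod_eq_of_isRotated {M : Type*} [LeftCancelMonoid M] {l l' : List M} (h : l ~r l')
    (hcomm : ∀ g ∈ l, Commute g l.prod) : l'.prod = l.prod := by
  obtain ⟨p, rfl⟩ := h
  set u := l.take (p % l.length)
  set v := l.drop (p % l.length)
  have prod_uv : u.prod * v.prod = l.prod := List.prod_take_mul_prod_drop l _
  have u_comm : Commute u.prod l.prod :=
    Commute.list_prod_left u l.prod fun g hg => hcomm g (List.mem_of_mem_take hg)
  rw [List.rotate_eq_drop_append_take_mod, List.prod_append]
  refine mul_left_cancel (a := u.prod) ?_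
  rw [← mul_assoc, prod_uv, u_comm.eq]

theorem IsReducedWord.of_isRotated {n : ℕ} {w : Equiv.Perm ℤ} {l l' : List ℕ}
    (hw : ∀ a < n, Commute (sB a) w) (hl : IsReducedWord n w l) (h : l ~r l') :
    IsReducedWord n w l' := by
  obtain ⟨letters_lt, rfl, minimal⟩ := hl
  refine ⟨fun a ha => letters_lt a (h.mem_iff.mpr ha), ?_, ?_⟩
  · refine prod_eq_of_isRotated (h.map sB) fun g hg => ?_
    obtain ⟨a, ha, rfl⟩ := List.mem_map.mp hg
    exact hw a (letters_lt a ha)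
  · rw [← h.perm.length_eq]
    exact minimal

/-- Cyclic rotation by `p` letters, as a bijection on words. -/
noncomputable def rotateEquiv (α : Type*) (p : ℕ) : List α ≃ List α :=
  Equiv.ofBijective (·.rotate p)
    ⟨List.rotate_injective p, fun _ => ⟨_, List.rotate_eq_iff.mpr rfl⟩⟩

theorem take_rotate_eq_take_drop {α : Type*} {p m : ℕ} {l : List α} (h : p + m ≤ l.length) :
    (l.rotate p).take m = (l.drop p).take m := by
  rw [List.rotate_eq_drop_append_take (by lia), List.take_append_of_le_length]
  rw [List.length_drop]
  lia

theorem card_isReducedWord_factor_eq {n p m : ℕ} {w : Equiv.Perm ℤ}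
    (hw : ∀ a < n, Commute (sB a) w) (hlen : ∀ l, IsReducedWord n w l → p + m ≤ l.length)
    (S : Set (List ℕ)) :
    Nat.card {l : List ℕ // IsReducedWord n w l ∧ (l.drop p).take m ∈ S}
      = Nat.card {l : List ℕ // IsReducedWord n w l ∧ l.take m ∈ S} := by
  refine Nat.card_congr ((rotateEquiv ℕ p).subtypeEquiv fun l => ?_)
  have rotated : l ~r rotateEquiv ℕ p l := ⟨p, rfl⟩
  have reduced_iff : IsReducedWord n w l ↔ IsReducedWord n w (rotateEquiv ℕ p l) :=
    ⟨fun hl => hl.of_isRotated hw rotated, fun hl => hl.of_isRotated hw rotated.symm⟩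
  rw [← reduced_iff, and_congr_right_iff]
  intro hl
  rw [← take_rotate_eq_take_drop (hlen l hl)]
  rfl

theorem sB_apply (a : ℕ) (x : ℤ) : sB a x =
    if a = 0 then (if x = 1 then -1 else if x = -1 then 1 else x)
    else if x = a then (a : ℤ) + 1 else if x = (a : ℤ) + 1 then (a : ℤ)
    else if x = -(a : ℤ) then -((a : ℤ) + 1) else if x = -((a : ℤ) + 1) then -(a : ℤ) else x := by
  unfold sB
  by_cases ha : a = 0
  · simp only [ha, if_true, Equiv.swap_apply_def]
  · simp only [ha, if_false, Equiv.Perm.mul_apply, Equiv.swap_apply_def]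
    split_ifs <;> lia

theorem odd_sB (a : ℕ) : Function.Odd (sB a) := by
  intro x
  simp only [sB_apply]
  split_ifs <;> lia

theorem wordProd_cons (a : ℕ) (l : List ℕ) : wordProd (a :: l) = sB a * wordProd l := by
  simp only [wordProd, List.map_cons, List.prod_cons]

theorem odd_wordProd (l : List ℕ) : Function.Odd (wordProd l) := by
  induction l with
  | nil => exact fun _ => rfl
  | cons a l ih =>
    rw [wordProd_cons, Equiv.Perm.coe_mul]
    exact (odd_sB a).comp_odd ih

theorem w0B_apply (n : ℕ) (x : ℤ) :
    w0B n x = if -(n : ℤ) ≤ x ∧ x ≤ (n : ℤ) then -x else x := rfl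

theorem neg_le_sB_and_sB_le_iff {n a : ℕ} (ha : a < n) (x : ℤ) :
    (-(n : ℤ) ≤ sB a x ∧ sB a x ≤ n) ↔ (-(n : ℤ) ≤ x ∧ x ≤ n) := by
  rw [sB_apply]
  split_ifs <;> lia

theorem commute_sB_w0B {n a : ℕ} (ha : a < n) : Commute (sB a) (w0B n) := by
  ext x
  simp only [Equiv.Perm.mul_apply, w0B_apply, neg_le_sB_and_sB_le_iff ha]
  split_ifs
  · exact (odd_sB a).eq x
  · rfl

/-- The positive roots of `Bₙ`. With the convention `e₋ᵢ = -eᵢ`, the pair `(x, y)` stands for the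
root `e_y - e_x`. The pairs `(x, y)` and `(-y, -x)` stand for the same root, and the condition
`-y ≤ x < y` selects one of the two; `(-y, y)` stands for the root in the direction `e_y`. -/
noncomputable def positiveRoots (n : ℕ) : Finset (ℤ × ℤ) :=
  (Finset.Icc (-n : ℤ) n ×ˢ Finset.Icc (1 : ℤ) n).filter
    fun r => r.1 ≠ 0 ∧ -r.2 ≤ r.1 ∧ r.1 < r.2

/-- The inversions of a signed permutation `w`: the positive roots that `w` makes negative. -/
noncomputable def inversions (n : ℕ) (w : Equiv.Perm ℤ) : Finset (ℤ × ℤ) :=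
  (positiveRoots n).filter fun r => w r.2 < w r.1

/-- The pair encoding the simple root of the generator `s_a`, in the convention of
`positiveRoots`. -/
def simpleRoot (a : ℕ) : ℤ × ℤ := (if a = 0 then -1 else (a : ℤ), (a : ℤ) + 1)

theorem mem_positiveRoots {n : ℕ} {r : ℤ × ℤ} :
    r ∈ positiveRoots n ↔ r.1 ≠ 0 ∧ -r.2 ≤ r.1 ∧ r.1 < r.2 ∧ r.2 ≤ n := by
  simp only [positiveRoots, Finset.mem_filter, Finset.mem_product, Finset.mem_Icc]
  lia

theorem mem_inversions {n : ℕ} {w : Equiv.Perm ℤ} {r : ℤ × ℤ} :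
    r ∈ inversions n w ↔ r ∈ positiveRoots n ∧ w r.2 < w r.1 :=
  Finset.mem_filter

theorem positiveRoots_succ (n : ℕ) :
    positiveRoots (n + 1) =
      positiveRoots n ∪ (Finset.Icc (-(n + 1) : ℤ) n).erase 0 ×ˢ {(n + 1 : ℤ)} := by
  ext ⟨x, y⟩
  simp only [Finset.mem_union, mem_positiveRoots, Finset.mem_product, Finset.mem_erase,
    Finset.mem_Icc, Finset.mem_singleton, Nat.cast_add, Nat.cast_one]
  lia

theorem card_positiveRoots (n : ℕ) : (positiveRoots n).card = n ^ 2 := by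
  induction n with
  | zero => rfl
  | succ n ih =>
    have card_new : ((Finset.Icc (-(n + 1) : ℤ) n).erase 0).card = 2 * n + 1 := by
      rw [Finset.card_erase_of_mem (Finset.mem_Icc.mpr (by lia)), Int.card_Icc]
      lia
    have disjoint_new : Disjoint (positiveRoots n)
        ((Finset.Icc (-(n + 1) : ℤ) n).erase 0 ×ˢ {(n + 1 : ℤ)}) := by
      rw [Finset.disjoint_left]
      intro r hr hr'
      have := (mem_positiveRoots.mp hr).2.2.2
      have := Finset.mem_singleton.mp (Finset.mem_product.mp hr').2
      lia
    rw [positiveRoots_succ, Finset.card_union_of_disjoint disjoint_new, Finset.card_product,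
      Finset.card_singleton, card_new, ih]
    ring

theorem eq_simpleRoot_of_sB_lt {a : ℕ} {x y : ℤ} (hx : x ≠ 0) (hy : y ≠ 0) (hxy : x < y)
    (h : sB a y < sB a x) : (x, y) = simpleRoot a ∨ (-y, -x) = simpleRoot a := by
  simp only [simpleRoot, Prod.mk.injEq]
  simp only [sB_apply] at h
  split_ifs at h ⊢ <;> lia

theorem eq_map_symm_simpleRoot_of_new_inversion {n a : ℕ} {w : Equiv.Perm ℤ}
    (hw : Function.Odd w) {r : ℤ × ℤ} (hr : r ∈ inversions n (sB a * w) \ inversions n w) :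
    r = (simpleRoot a).map w.symm w.symm ∨ (-r.2, -r.1) = (simpleRoot a).map w.symm w.symm := by
  have eq_map_symm (u v : ℤ) (h : (w u, w v) = simpleRoot a) :
      (u, v) = (simpleRoot a).map w.symm w.symm := by
    rw [← h, Prod.map_apply, w.symm_apply_apply, w.symm_apply_apply]
  obtain ⟨hnew, hold⟩ := Finset.mem_sdiff.mp hr
  obtain ⟨hpos, hlt⟩ := mem_inversions.mp hnew
  have hle : w r.1 ≤ w r.2 := not_lt.mp fun h => hold (mem_inversions.mpr ⟨hpos, h⟩)
  obtain ⟨hx, hyx, hxy, -⟩ := mem_positiveRoots.mp hpos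
  have map_ne_zero {x : ℤ} (h : x ≠ 0) : w x ≠ 0 := fun h0 =>
    h (w.injective (h0.trans hw.map_zero.symm))
  refine (eq_simpleRoot_of_sB_lt (map_ne_zero hx) (map_ne_zero (by lia))
    (hle.lt_of_ne (w.injective.ne hxy.ne)) hlt).imp (eq_map_symm _ _) fun h => ?_
  rw [← hw.eq, ← hw.eq] at h
  exact eq_map_symm _ _ h

theorem card_inversions_sB_mul_le (n a : ℕ) {w : Equiv.Perm ℤ} (hw : Function.Odd w) :
    (inversions n (sB a * w)).card ≤ (inversions n w).card + 1 := by
  have at_most_one_new : (inversions n (sB a * w) \ inversions n w).card ≤ 1 := by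
    rw [Finset.card_le_one]
    intro r hr r' hr'
    have pos := mem_positiveRoots.mp (mem_inversions.mp (Finset.mem_sdiff.mp hr).1).1
    have pos' := mem_positiveRoots.mp (mem_inversions.mp (Finset.mem_sdiff.mp hr').1).1
    have eq_root := eq_map_symm_simpleRoot_of_new_inversion hw hr
    have eq_root' := eq_map_symm_simpleRoot_of_new_inversion hw hr'
    simp only [Prod.ext_iff] at eq_root eq_root' ⊢
    lia
  have := Finset.card_le_card_sdiff_add_card
    (s := inversions n (sB a * w)) (t := inversions n w)
  lia

theorem card_inversions_wordProd_le (n : ℕ) (l : List ℕ) :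
    (inversions n (wordProd l)).card ≤ l.length := by
  induction l with
  | nil =>
    rw [List.length_nil, Nat.le_zero, Finset.card_eq_zero, inversions, Finset.filter_eq_empty_iff]
    exact fun r hr => (mem_positiveRoots.mp hr).2.2.1.not_gt
  | cons a l ih =>
    rw [wordProd_cons, List.length_cons]
    exact (card_inversions_sB_mul_le n a (odd_wordProd l)).trans (Nat.succ_le_succ ih)

theorem inversions_w0B (n : ℕ) : inversions n (w0B n) = positiveRoots n := by
  rw [inversions, Finset.filter_eq_self]
  intro r hr
  rw [mem_positiveRoots] at hr
  rw [w0B_apply, w0B_apply, if_pos (by lia), if_pos (by lia)]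
  lia

theorem sq_le_length_of_wordProd_eq_w0B {n : ℕ} {l : List ℕ} (h : wordProd l = w0B n) :
    n ^ 2 ≤ l.length := by
  rw [← card_positiveRoots, ← inversions_w0B, ← h]
  exact card_inversions_wordProd_le n l

theorem yb_position_equidistributed_general {n p m : ℕ} (h : p + m ≤ n ^ 2) (S : Set (List ℕ)) :
    Nat.card {l : List ℕ // IsReducedWord n (w0B n) l ∧ (l.drop p).take m ∈ S}
      = Nat.card {l : List ℕ // IsReducedWord n (w0B n) l ∧ l.take m ∈ S} :=
  card_isReducedWord_factor_eq (fun _ => commute_sB_w0B)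
    (fun _ hl => h.trans (sq_le_length_of_wordProd_eq_w0B hl.2.1)) S

/-- For `n ≥ 3`, `1 ≤ k ≤ n - 2` and `1 ≤ j ≤ n² - 2`, the number of reduced
decompositions of `w₀ᴮ ∈ Bₙ` whose letters in positions `j, j+1, j+2` form
`(k, k+1, k)` or `(k+1, k, k+1)` equals the number of reduced decompositions of `w₀ᴮ`
whose first three letters form `(k, k+1, k)` or `(k+1, k, k+1)`. -/
theorem yb_position_equidistributed (n k j : ℕ) (hn : 3 ≤ n) (hk1 : 1 ≤ k)
    (hk2 : k ≤ n - 2) (hj1 : 1 ≤ j) (hj2 : j ≤ n ^ 2 - 2) :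
    Nat.card {l : List ℕ // IsReducedWord n (w0B n) l ∧
        ((l.drop (j - 1)).take 3 = [k, k + 1, k] ∨
          (l.drop (j - 1)).take 3 = [k + 1, k, k + 1])}
      = Nat.card {l : List ℕ // IsReducedWord n (w0B n) l ∧
          (l.take 3 = [k, k + 1, k] ∨ l.take 3 = [k + 1, k, k + 1])} := by
  have factor_fits : j - 1 + 3 ≤ n ^ 2 := by have := Nat.pow_le_pow_left hn 2; lia
  exact yb_position_equidistributed_general factor_fits {[k, k + 1, k], [k + 1, k, k + 1]}
end
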